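/- For each integer n ≥ 1 the limit Y₀(πn) := lim_{ν → 0, ν ∉ ℤ} (J_ν(πn)cos(πν) − J_{−ν}(πn))/sin(πν) exists, the series ∑_{n=1}^∞ d(n) ( (−1)^n Y₀(πn) + 1/(π n^{1/2}) + 1/(8π² n^{3/2}) ) converges, and its sum equals (1/(2π)) ( γ − log(8π) + ζ(1/2)² − ζ(−1/2) ζ(3/2) ). -/

import Mathlib

/-!
Write `κ(u) = -Im (2iu - u²)^{-1/2}` and `δ(u) = 1/(2√u) - κ(u)`. Differentiating `J_ν` in the order
shows that the limit defining `Y₀(x)` is `(2/π) Yser x`, the classical series with the logarithm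
(`tendsto_besselY`). Both `Yser` and the imaginary part of the Hankel integral
`e^{ix} ∫ e^{-xu} (2iu - u²)^{-1/2} du` solve the Bessel equation of order `0` and have the same
behaviour `log (x/2) + γ + o(1)` at `0`, so an energy argument makes them equal (`Yser_eq`). At
`x = πn` the factor `e^{ix}` is `(-1)^n`, whence
`(-1)^n Y₀(πn) + 1/(π√n) = (2/π) ∫ e^{-πnu} δ(u) du` (`aCoef_eq`). As `|δ(u)| ≤ √u`, this is
`O(n^{-3/2})`, the divisor sum converges absolutely, and the terms may be grouped as
`∑_m ∑_k` over `n = mk`; the inner geometric series gives `(2/π) ∫ δ(u)/(e^{πmu} - 1) du`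
(`hasSum_aCoef`).

To evaluate this integral, expand `1/(e^{πv} - 1) - 1/(πv)` in partial fractions, as the limit of
`∑_{j ≤ J} f(j) - ∫_0^J f` with `f(x) = (2/π) v/(v² + 4x²)`. The moments
`∫ u/(u²+c²) δ(u) du = (π/2) (1/√(2c) - 1/√(c²+2c))` are elementary (`integral_kernel_del`), and
`∫ δ(u)/u du = 0`. Hence the integral equals `(1/2) (ζ(1/2)/√m - C_m)`, where `C_m` is the
Euler–Maclaurin constant of `x ↦ 1/√(x(x+m))` (`integral_pfGap_del`, `tendsto_pfGap_integral`).

The constants `C_m` are summed over `m ≤ n` by using the trapezoidal approximation of `C_m` at the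
cutoff `n + 1 - m`: the double sum becomes `∑_{a<b≤n+1} 1/√(ab)`, which is half of a square minus a
harmonic number, and the antiderivatives sum to logarithms handled by Stirling's formula. This
yields `γ - log (8π) + ζ(1/2)²` (`tendsto_sum_const`, `tendsto_sum_lamb`).

The last term of the summand contributes `ζ(3/2)²/(8π²)`, which is `-ζ(-1/2) ζ(3/2)/(2π)` by the
functional equation (`zeta_neg_half`).
-/

noncomputable section

/-- The Bessel function of the first kind
`J_ν(x) = ∑_{m=0}^∞ (−1)^m (x/2)^{2m+ν}/(m! Γ(m+1+ν))`, with
`(x/2)^{2m+ν} := exp((2m+ν) log(x/2))`. -/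
def besselJ (ν : ℂ) (x : ℝ) : ℂ :=
  ∑' m : ℕ, (-1) ^ m * ((x / 2 : ℝ) : ℂ) ^ (2 * (m : ℂ) + ν) /
    ((Nat.factorial m : ℂ) * Complex.Gamma ((m : ℂ) + 1 + ν))

namespace DivisorBessel

/-! ### The value `ζ(1/2)` as a regularised sum -/

section

open Filter Topology

/-- Terms of the series continuing `(s - 1) ζ(s) - 1` to `0 < Re s`. -/
noncomputable def zetaTerm (n : ℕ) (s : ℂ) : ℂ :=
  (s - 1) * ((n + 1 : ℝ) : ℂ) ^ (-s) + (((n + 1 : ℝ) + 1 : ℝ) : ℂ) ^ (1 - s)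
    - ((n + 1 : ℝ) : ℂ) ^ (1 - s)

lemma cpow_sub_bound (s : ℂ) (hs : 0 < s.re) (a : ℝ) (ha : 0 < a) (x : ℝ)
    (hx : x ∈ Set.Icc a (a + 1)) :
    ‖((x : ℂ)) ^ (-s) - (a : ℂ) ^ (-s)‖ ≤ ‖s‖ * a ^ (-s.re - 1) := by
  have hs0 : -s ≠ 0 := by
    intro h; have : s = 0 := by simpa using h
    simp [this] at hs
  have key := Convex.norm_image_sub_le_of_norm_hasDerivWithin_le (𝕜 := ℝ)
    (f := fun y : ℝ => (y : ℂ) ^ (-s)) (f' := fun y : ℝ => (-s) * (y : ℂ) ^ (-s - 1))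
    (s := Set.Icc a (a + 1)) (x := a) (y := x) (C := ‖s‖ * a ^ (-s.re - 1))
    (fun y hy => (hasDerivAt_ofReal_cpow_const (by linarith [hy.1]) hs0).hasDerivWithinAt)
    (fun y hy => by
      have hy0 : 0 < y := by linarith [hy.1]
      rw [norm_mul, norm_neg, Complex.norm_cpow_eq_rpow_re_of_pos hy0]
      gcongr
      simp only [Complex.sub_re, Complex.neg_re, Complex.one_re]
      exact Real.rpow_le_rpow_of_nonpos ha hy.1 (by linarith))
    (convex_Icc _ _) ⟨le_rfl, by linarith⟩ hx
  refine key.trans ?_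
  have : ‖x - a‖ ≤ 1 := by
    rw [Real.norm_eq_abs, abs_le]; constructor <;> linarith [hx.1, hx.2]
  calc _ ≤ ‖s‖ * a ^ (-s.re - 1) * 1 := by gcongr
    _ = _ := by ring

lemma zetaTerm_bound (s : ℂ) (hs : 0 < s.re) (hs1 : s ≠ 1) (n : ℕ) :
    ‖zetaTerm n s‖ ≤ ‖s - 1‖ * (‖s‖ * (n + 1 : ℝ) ^ (-s.re - 1)) := by
  have hn : (0 : ℝ) < n + 1 := by positivity
  set a : ℝ := n + 1 with ha
  have h1s : 1 - s ≠ 0 := sub_ne_zero.2 (Ne.symm hs1)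
  have key := Convex.norm_image_sub_le_of_norm_hasDerivWithin_le (𝕜 := ℝ)
    (f := fun y : ℝ => (s - 1) * (a : ℂ) ^ (-s) * (y : ℂ) + (y : ℂ) ^ (1 - s))
    (f' := fun y : ℝ => (s - 1) * (a : ℂ) ^ (-s) * 1 + (1 - s) * (y : ℂ) ^ (1 - s - 1))
    (s := Set.Icc a (a + 1)) (x := a) (y := a + 1)
    (C := ‖s - 1‖ * (‖s‖ * a ^ (-s.re - 1)))
    (fun y hy => by
      have h1 : HasDerivAt (fun y : ℝ => (y : ℂ)) 1 y := Complex.ofRealCLM.hasDerivAt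
      exact ((h1.const_mul _).add
        (hasDerivAt_ofReal_cpow_const (by linarith [hy.1]) h1s)).hasDerivWithinAt)
    (fun y hy => by
      have e : (s - 1) * (a : ℂ) ^ (-s) * 1 + (1 - s) * (y : ℂ) ^ (1 - s - 1)
        = -((s - 1) * ((y : ℂ) ^ (-s) - (a : ℂ) ^ (-s))) := by
        rw [show 1 - s - 1 = -s by ring]; ring
      rw [e, norm_neg, norm_mul]
      gcongr
      exact cpow_sub_bound s hs a hn y hy)
    (convex_Icc _ _) ⟨le_rfl, by linarith⟩ ⟨by linarith, le_rfl⟩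
  have e : zetaTerm n s = ((s - 1) * (a : ℂ) ^ (-s) * ((a + 1 : ℝ) : ℂ) + ((a + 1 : ℝ) : ℂ) ^ (1 - s))
      - ((s - 1) * (a : ℂ) ^ (-s) * (a : ℂ) + (a : ℂ) ^ (1 - s)) := by
    rw [zetaTerm, ← ha]; push_cast; ring
  rw [e]
  refine key.trans (le_of_eq ?_)
  simp

lemma zetaTerm_hasSum (s : ℂ) (hs : 1 < s.re) :
    HasSum (fun n => zetaTerm n s) ((s - 1) * riemannZeta s - 1) := by
  have hs1 : s ≠ 1 := by rintro rfl; simp at hs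
  have hsum : Summable (fun n => zetaTerm n s) := by
    refine Summable.of_norm_bounded
      (g := fun n : ℕ => ‖s - 1‖ * (‖s‖ * (n + 1 : ℝ) ^ (-s.re - 1))) ?_
      (zetaTerm_bound s (by linarith) hs1)
    refine Summable.mul_left _ (Summable.mul_left _ ?_)
    have := (summable_nat_add_iff 1).2 (Real.summable_nat_rpow (p := -s.re - 1) |>.2 (by linarith))
    simpa using this
  rw [hsum.hasSum_iff_tendsto_nat]
  have hz : HasSum (fun n : ℕ => 1 / ((n : ℂ) + 1) ^ s) (riemannZeta s) := by
    rw [zeta_eq_tsum_one_div_nat_add_one_cpow hs]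
    refine Summable.hasSum ?_
    have := (summable_nat_add_iff 1).2 (Complex.summable_one_div_nat_cpow.2 hs)
    simpa using this
  have e : ∀ N : ℕ, ∑ n ∈ Finset.range N, zetaTerm n s
      = (s - 1) * (∑ n ∈ Finset.range N, 1 / ((n : ℂ) + 1) ^ s)
        + (((N : ℝ) + 1 : ℝ) : ℂ) ^ (1 - s) - 1 := by
    intro N
    induction N with
    | zero => simp
    | succ N ih =>
      rw [Finset.sum_range_succ, ih, Finset.sum_range_succ, zetaTerm]
      push_cast
      rw [Complex.cpow_neg]
      ring
  simp_rw [e]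
  have h0 : Tendsto (fun N : ℕ => (((N : ℝ) + 1 : ℝ) : ℂ) ^ (1 - s)) atTop (𝓝 0) := by
    rw [tendsto_zero_iff_norm_tendsto_zero]
    have : ∀ N : ℕ, ‖(((N : ℝ) + 1 : ℝ) : ℂ) ^ (1 - s)‖ = ((N : ℝ) + 1) ^ (-(s.re - 1)) := by
      intro N
      rw [Complex.norm_cpow_eq_rpow_re_of_pos (by positivity)]
      simp
    simp_rw [this]
    exact (tendsto_rpow_neg_atTop (by linarith)).comp
      (tendsto_atTop_add_const_right _ _ tendsto_natCast_atTop_atTop)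
  have := ((hz.tendsto_sum_nat.const_mul (s - 1)).add h0).sub_const 1
  simpa using this

lemma zetaTerm_hasSum_half :
    HasSum (fun n => zetaTerm n (1 / 2)) ((1 / 2 - 1) * riemannZeta (1 / 2) - 1) := by
  let U : Set ℂ := {s | 1 / 4 < s.re} ∩ Metric.ball 0 3
  have hUo : IsOpen U := (isOpen_lt continuous_const Complex.continuous_re).inter Metric.isOpen_ball
  have hUc : IsPreconnected U :=
    ((convex_halfSpace_re_gt _).inter (convex_ball _ _)).isPreconnected
  let u : ℕ → ℝ := fun n => 4 * (3 * (n + 1 : ℝ) ^ (-(5 / 4) : ℝ))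
  have hu : Summable u := by
    refine Summable.mul_left _ (Summable.mul_left _ ?_)
    have := (summable_nat_add_iff 1).2 (Real.summable_nat_rpow (p := (-(5 / 4) : ℝ)) |>.2 (by norm_num))
    simpa using this
  have hb : ∀ n, ∀ s ∈ U, ‖zetaTerm n s‖ ≤ u n := by
    intro n s hs
    have h1 : 1 / 4 < s.re := hs.1
    have h2 : ‖s‖ < 3 := by simpa using hs.2
    have hu0 : 0 ≤ u n := by positivity
    by_cases h : s = 1
    · subst h; simpa [zetaTerm] using hu0
    refine (zetaTerm_bound s (by linarith) h n).trans ?_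
    have h3 : ‖s - 1‖ ≤ 4 := (norm_sub_le _ _).trans (by rw [norm_one]; linarith)
    have : (n + 1 : ℝ) ^ (-s.re - 1) ≤ (n + 1 : ℝ) ^ (-(5 / 4) : ℝ) :=
      Real.rpow_le_rpow_of_exponent_le (by linarith [Nat.cast_nonneg (α := ℝ) n]) (by linarith)
    show _ ≤ 4 * (3 * (n + 1 : ℝ) ^ (-(5 / 4) : ℝ))
    gcongr
  have hd : ∀ n, DifferentiableOn ℂ (zetaTerm n) U := by
    intro n s _
    apply DifferentiableAt.differentiableWithinAt
    have h1 : ((n + 1 : ℝ) : ℂ) ≠ 0 := by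
      exact_mod_cast (by positivity : (n + 1 : ℝ) ≠ 0)
    have h2 : (((n + 1 : ℝ) + 1 : ℝ) : ℂ) ≠ 0 := by
      exact_mod_cast (by positivity : (n + 1 : ℝ) + 1 ≠ 0)
    unfold zetaTerm
    refine ((((differentiableAt_id).sub_const 1).mul ?_).add ?_).sub ?_
    · exact (differentiableAt_id.neg).const_cpow (Or.inl h1)
    · exact (differentiableAt_id.const_sub 1).const_cpow (Or.inl h2)
    · exact (differentiableAt_id.const_sub 1).const_cpow (Or.inl h1)
  have hF := Complex.differentiableOn_tsum_of_summable_norm hu hd hUo hb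
  have h2U : (2 : ℂ) ∈ U := by
    constructor
    · show (1 / 4 : ℝ) < (2 : ℂ).re
      norm_num
    · simp; norm_num
  have hhU : (1 / 2 : ℂ) ∈ U := by
    constructor
    · show (1 / 4 : ℝ) < (1 / 2 : ℂ).re
      norm_num
    · simp; norm_num
  have heq := AnalyticOnNhd.eqOn_of_preconnected_of_eventuallyEq
    (f := fun s => ∑' n, zetaTerm n s) (g := fun s => riemannZeta₁ s - 1)
    (hF.analyticOnNhd hUo)
    ((differentiable_riemannZeta₁.sub_const 1).differentiableOn.analyticOnNhd hUo)
    hUc h2U (by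
      have : {s : ℂ | 1 < s.re} ∈ 𝓝 (2 : ℂ) :=
        (isOpen_lt continuous_const Complex.continuous_re).mem_nhds (by simp)
      filter_upwards [this] with s hs
      have hs : 1 < s.re := hs
      have hs1 : s ≠ 1 := by rintro rfl; simp at hs
      rw [(zetaTerm_hasSum s hs).tsum_eq, riemannZeta_eq_inv_sub_mul hs1,
        mul_inv_cancel_left₀ (sub_ne_zero.2 hs1)])
  have h : ∑' n, zetaTerm n (1 / 2) = riemannZeta₁ (1 / 2) - 1 := heq hhU
  have hh1 : (1 / 2 : ℂ) ≠ 1 := by norm_num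
  rw [riemannZeta_eq_inv_sub_mul hh1, mul_inv_cancel_left₀ (sub_ne_zero.2 hh1), ← h]
  exact (Summable.of_norm_bounded hu (fun n => hb n _ hhU)).hasSum

/-- `∑_{n ≤ N} n^{-1/2}`. -/
noncomputable def sumInvSqrt (N : ℕ) : ℝ := ∑ n ∈ Finset.range N, 1 / √((n : ℝ) + 1)

lemma tendsto_sumInvSqrt :
    Tendsto (fun N : ℕ => sumInvSqrt N - 2 * √(N : ℝ)) atTop (𝓝 (riemannZeta (1 / 2)).re) ∧
      riemannZeta (1 / 2) = ((riemannZeta (1 / 2)).re : ℂ) := by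
  have h := zetaTerm_hasSum_half.tendsto_sum_nat
  have hterm : ∀ n, zetaTerm n (1 / 2)
      = ((-(1 / 2) * (1 / √((n : ℝ) + 1)) + √((n : ℝ) + 1 + 1) - √((n : ℝ) + 1) : ℝ) : ℂ) := by
    intro n
    have hn : (0 : ℝ) ≤ n + 1 := by positivity
    have hn' : (0 : ℝ) ≤ n + 1 + 1 := by positivity
    have c1 : (-(1 / 2) : ℂ) = ((-(1 / 2) : ℝ) : ℂ) := by push_cast; ring
    have c2 : (1 - (1 / 2) : ℂ) = ((1 / 2 : ℝ) : ℂ) := by push_cast; ring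
    unfold zetaTerm
    rw [c1, c2, ← Complex.ofReal_cpow hn, ← Complex.ofReal_cpow hn, ← Complex.ofReal_cpow hn',
      Real.rpow_neg hn, ← Real.sqrt_eq_rpow, ← Real.sqrt_eq_rpow]
    push_cast; ring
  have hsum : ∀ N : ℕ, ∑ n ∈ Finset.range N, zetaTerm n (1 / 2)
      = ((-(1 / 2) * sumInvSqrt N + √((N : ℝ) + 1) - 1 : ℝ) : ℂ) := by
    intro N
    induction N with
    | zero => simp [sumInvSqrt]
    | succ N ih =>
      rw [Finset.sum_range_succ, ih, hterm, sumInvSqrt, sumInvSqrt, Finset.sum_range_succ]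
      push_cast; ring
  simp_rw [hsum] at h
  have hre := (Complex.continuous_re.tendsto _).comp h
  have him := (Complex.continuous_im.tendsto _).comp h
  simp only [Function.comp_def, Complex.ofReal_re, Complex.ofReal_im] at hre him
  have him0 := tendsto_nhds_unique him tendsto_const_nhds
  have e1 : ((1 / 2 - 1) * riemannZeta (1 / 2) - 1).re = -(1/2) * (riemannZeta (1 / 2)).re - 1 := by
    rw [show (1 / 2 - 1 : ℂ) = ((-(1/2) : ℝ) : ℂ) by push_cast; ring, Complex.sub_re,
      Complex.re_ofReal_mul, Complex.one_re]
  have e2 : ((1 / 2 - 1) * riemannZeta (1 / 2) - 1).im = -(1/2) * (riemannZeta (1 / 2)).im := by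
    rw [show (1 / 2 - 1 : ℂ) = ((-(1/2) : ℝ) : ℂ) by push_cast; ring, Complex.sub_im,
      Complex.im_ofReal_mul, Complex.one_im, sub_zero]
  rw [e1] at hre
  rw [e2] at him0
  constructor
  · have hd : Tendsto (fun N : ℕ => √((N : ℝ) + 1) - √(N : ℝ)) atTop (𝓝 0) := by
      have hb : Tendsto (fun N : ℕ => (√((N : ℝ) + 1))⁻¹) atTop (𝓝 0) :=
        tendsto_inv_atTop_zero.comp (Real.tendsto_sqrt_atTop.comp
          (tendsto_atTop_add_const_right _ _ tendsto_natCast_atTop_atTop))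
      refine squeeze_zero (fun N => ?_) (fun N => ?_) hb
      · exact sub_nonneg.2 (Real.sqrt_le_sqrt (by linarith))
      · have hp : 0 < √((N : ℝ) + 1) := Real.sqrt_pos.2 (by positivity)
        rw [← one_div, le_div_iff₀ hp]
        have q1 := Real.sq_sqrt (by positivity : (0 : ℝ) ≤ (N : ℝ) + 1)
        have q2 := Real.sq_sqrt (by positivity : (0 : ℝ) ≤ (N : ℝ))
        have q3 : √(N : ℝ) ≤ √((N : ℝ) + 1) := Real.sqrt_le_sqrt (by linarith)
        nlinarith [Real.sqrt_nonneg (N : ℝ)]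
    have := ((hre.add_const 1).const_mul (-2)).add (hd.const_mul 2)
    convert this using 2
    · ring
    · ring
  · apply Complex.ext
    · simp
    · simp; linarith

end

/-! ### Second-order Euler–Maclaurin for convex functions -/

section

open Filter Topology

/-- For a convex `f` with antiderivative `F`, the trapezoidal rule on `[a, a + 1]` overestimates the
integral, by at most half a second difference of `f`. -/
lemma trapezoid_bounds {f F : ℝ → ℝ} (hf : ConvexOn ℝ (Set.Ioi 0) f)
    (hF : ∀ x, 0 < x → HasDerivAt F (f x) x) (a : ℝ) (ha : 0 < a) :
    F (a + 1) - F a ≤ (f a + f (a + 1)) / 2 ∧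
      f (a + 1) + (f (a + 1) - f (a + 2)) / 2 ≤ F (a + 1) - F a := by
  have gen : ∀ p q : ℝ, ∀ x, 0 < x → HasDerivAt
      (fun x => F x - (p * (x - a) + q * (x - a) ^ 2 / 2)) (f x - (p + q * (x - a))) x := by
    intro p q x hx
    have h1 : HasDerivAt (fun x : ℝ => x - a) 1 x := (hasDerivAt_id x).sub_const a
    refine ((hF x hx).sub ((h1.const_mul p).add (((h1.pow 2).const_mul q).div_const 2))).congr_deriv ?_
    simp; ring
  constructor
  · have hg := gen (f a) (f (a + 1) - f a)
    have : AntitoneOn (fun x => F x - (f a * (x - a) + (f (a + 1) - f a) * (x - a) ^ 2 / 2))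
        (Set.Icc a (a + 1)) := by
      apply antitoneOn_of_deriv_nonpos (convex_Icc _ _)
      · intro x hx; exact (hg x (by linarith [hx.1])).continuousAt.continuousWithinAt
      · intro x hx; rw [interior_Icc] at hx
        exact (hg x (by linarith [hx.1])).differentiableAt.differentiableWithinAt
      · intro x hx; rw [interior_Icc] at hx
        rw [(hg x (by linarith [hx.1])).deriv]
        have := hf.2 (Set.mem_Ioi.2 ha) (Set.mem_Ioi.2 (by linarith : 0 < a + 1))
          (by linarith [hx.2] : 0 ≤ 1 - (x - a)) (by linarith [hx.1] : 0 ≤ x - a) (by ring)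
        simp only [smul_eq_mul] at this
        rw [show (1 - (x - a)) * a + (x - a) * (a + 1) = x by ring] at this
        linarith
    have := this (Set.left_mem_Icc.2 (by linarith)) (Set.right_mem_Icc.2 (by linarith)) (by linarith)
    simp at this
    linarith
  · have hg := gen (f (a + 1) + (f (a + 1) - f (a + 2))) (-(f (a + 1) - f (a + 2)))
    have : MonotoneOn (fun x => F x - ((f (a + 1) + (f (a + 1) - f (a + 2))) * (x - a)
        + (-(f (a + 1) - f (a + 2))) * (x - a) ^ 2 / 2))
        (Set.Icc a (a + 1)) := by
      apply monotoneOn_of_deriv_nonneg (convex_Icc _ _)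
      · intro x hx; exact (hg x (by linarith [hx.1])).continuousAt.continuousWithinAt
      · intro x hx; rw [interior_Icc] at hx
        exact (hg x (by linarith [hx.1])).differentiableAt.differentiableWithinAt
      · intro x hx; rw [interior_Icc] at hx
        rw [(hg x (by linarith [hx.1])).deriv]
        have hd : 0 < a + 2 - x := by linarith [hx.2]
        have := hf.2 (Set.mem_Ioi.2 (by linarith [hx.1] : 0 < x))
          (Set.mem_Ioi.2 (by linarith : 0 < a + 2)) (by positivity : 0 ≤ 1 / (a + 2 - x))
          (div_nonneg (by linarith [hx.2]) hd.le : 0 ≤ (a + 1 - x) / (a + 2 - x))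
          (by field_simp; ring)
        simp only [smul_eq_mul] at this
        rw [show 1 / (a + 2 - x) * x + (a + 1 - x) / (a + 2 - x) * (a + 2) = a + 1 by
          field_simp; ring] at this
        have h2 : f (a + 1) * (a + 2 - x) ≤ f x + (a + 1 - x) * f (a + 2) := by
          have := mul_le_mul_of_nonneg_right this hd.le
          refine this.trans (le_of_eq ?_)
          field_simp
        linarith
    have := this (Set.left_mem_Icc.2 (by linarith)) (Set.right_mem_Icc.2 (by linarith)) (by linarith)
    simp at this
    linarith

lemma trapezoid_step {f F : ℝ → ℝ} (hf : ConvexOn ℝ (Set.Ioi 0) f)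
    (hF : ∀ x, 0 < x → HasDerivAt F (f x) x) {N : ℕ} (hN : 1 ≤ N) (k : ℕ) :
    (∑ l ∈ Finset.range N, f (l + 1) - F N - f N / 2
      ≤ ∑ l ∈ Finset.range (N + k), f (l + 1) - F (N + k : ℕ) - f (N + k : ℕ) / 2) ∧
    (∑ l ∈ Finset.range (N + k), f (l + 1) - F (N + k : ℕ) - f (N + k : ℕ) / 2
      + (f (N + k : ℕ) - f ((N + k : ℕ) + 1)) / 2 ≤
      ∑ l ∈ Finset.range N, f (l + 1) - F N - f N / 2 + (f N - f (N + 1)) / 2) := by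
  induction k with
  | zero => simp
  | succ k ih =>
    obtain ⟨h1, h2⟩ := trapezoid_bounds hf hF ((N + k : ℕ) : ℝ) (by
      have : 0 < N + k := by omega
      exact_mod_cast this)
    rw [← add_assoc, Finset.sum_range_succ]
    have e : (((N + k + 1 : ℕ)) : ℝ) = ((N + k : ℕ) : ℝ) + 1 := by push_cast; ring
    rw [e]
    have e2 : ((N + k : ℕ) : ℝ) + 1 + 1 = ((N + k : ℕ) : ℝ) + 2 := by ring
    rw [e2]
    constructor <;> linarith [ih.1, ih.2]

/-- Euler–Maclaurin to second order for a convex function vanishing at infinity. -/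
lemma trapezoid_limit {f F : ℝ → ℝ} (hf : ConvexOn ℝ (Set.Ioi 0) f)
    (hF : ∀ x, 0 < x → HasDerivAt F (f x) x)
    (hf0 : Tendsto (fun N : ℕ => f N) atTop (𝓝 0)) {L : ℝ}
    (hL : Tendsto (fun N : ℕ => ∑ l ∈ Finset.range N, f (l + 1) - F N) atTop (𝓝 L))
    {N : ℕ} (hN : 1 ≤ N) :
    0 ≤ L - (∑ l ∈ Finset.range N, f (l + 1) - F N - f N / 2) ∧
      L - (∑ l ∈ Finset.range N, f (l + 1) - F N - f N / 2) ≤ (f N - f (N + 1)) / 2 := by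
  have hadd : Tendsto (fun k => N + k) atTop atTop := tendsto_atTop_mono (fun k => Nat.le_add_left k N) tendsto_id
  have hL' := hL.comp hadd
  have h0 := hf0.comp hadd
  have h1 : Tendsto (fun k : ℕ => f ((N + k : ℕ) + 1)) atTop (𝓝 0) := by
    have := (hf0.comp (tendsto_add_atTop_nat 1)).comp hadd
    simpa [Function.comp_def] using this
  have hlow := hL'.sub (h0.div_const 2)
  have hup := hlow.add ((h0.sub h1).div_const 2)
  simp only [zero_div, sub_zero, add_zero, Function.comp_def] at hlow hup
  have a1 := ge_of_tendsto' hlow (fun k => (trapezoid_step hf hF hN k).1)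
  have a2 := le_of_tendsto' hup (fun k => (trapezoid_step hf hF hN k).2)
  constructor <;> linarith

lemma convexOn_inv_sqrt : ConvexOn ℝ (Set.Ioi 0) (fun x : ℝ => 1 / √x) := by
  refine ⟨convex_Ioi 0, ?_⟩
  intro x hx y hy a b ha hb hab
  have hx' : 0 < √x := Real.sqrt_pos.2 hx
  have hy' : 0 < √y := Real.sqrt_pos.2 hy
  have h1 := Real.strictConcaveOn_sqrt.concaveOn.2 (Set.mem_Ici.2 (le_of_lt hx))
    (Set.mem_Ici.2 (le_of_lt hy)) ha hb hab
  have h2 := (convexOn_zpow (𝕜 := ℝ) (-1)).2 (Set.mem_Ioi.2 hx') (Set.mem_Ioi.2 hy') ha hb hab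
  simp only [smul_eq_mul, zpow_neg_one] at h1 h2
  have hp : 0 < a * √x + b * √y := by
    rcases ha.lt_or_eq with h | h
    · have := mul_pos h hx'; have := mul_nonneg hb hy'.le; linarith
    · have : b = 1 := by linarith
      subst this; subst h; simpa using hy'
  simp only [smul_eq_mul, one_div]
  exact (inv_anti₀ hp h1).trans h2

lemma convexOn_inv_sqrt_mul (m : ℝ) (hm : 0 ≤ m) :
    ConvexOn ℝ (Set.Ioi 0) (fun x : ℝ => 1 / (√x * √(x + m))) := by
  have h2 : ConvexOn ℝ (Set.Ioi 0) (fun x : ℝ => 1 / √(x + m)) := by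
    have := convexOn_inv_sqrt.translate_left m
    refine this.subset ?_ (convex_Ioi 0)
    intro x hx
    have hx : 0 < x := hx
    simp; linarith
  have := convexOn_inv_sqrt.mul h2 (fun x _ => by positivity) (fun x _ => by positivity) (by
    have a1 : AntitoneOn (fun x : ℝ => 1 / √x) (Set.Ioi 0) := fun x hx y hy hxy =>
      one_div_le_one_div_of_le (Real.sqrt_pos.2 hx) (Real.sqrt_le_sqrt hxy)
    have a2 : AntitoneOn (fun x : ℝ => 1 / √(x + m)) (Set.Ioi 0) := fun x hx y hy hxy => by
      have hx : 0 < x := hx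
      exact one_div_le_one_div_of_le (Real.sqrt_pos.2 (by linarith)) (Real.sqrt_le_sqrt (by linarith))
    exact a1.monovaryOn a2)
  refine this.congr ?_
  intro x _
  simp [mul_comm]

lemma concaveOn_log_add_sqrt (c : ℝ) (hc : 0 < c) :
    ConvexOn ℝ (Set.Ioi 0) (fun x : ℝ => -Real.log (c + √x)) := by
  refine ⟨convex_Ioi 0, ?_⟩
  intro x hx y hy a b ha hb hab
  have hx' : 0 < √x := Real.sqrt_pos.2 hx
  have hy' : 0 < √y := Real.sqrt_pos.2 hy
  have h1 := Real.strictConcaveOn_sqrt.concaveOn.2 (Set.mem_Ici.2 (le_of_lt hx))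
    (Set.mem_Ici.2 (le_of_lt hy)) ha hb hab
  have h2 := strictConcaveOn_log_Ioi.concaveOn.2 (Set.mem_Ioi.2 (by positivity : 0 < c + √x))
    (Set.mem_Ioi.2 (by positivity : 0 < c + √y)) ha hb hab
  simp only [smul_eq_mul] at h1 h2 ⊢
  have e : a * (c + √x) + b * (c + √y) = c + (a * √x + b * √y) := by
    linear_combination c * hab
  rw [e] at h2
  have : Real.log (c + (a * √x + b * √y)) ≤ Real.log (c + √(a * x + b * y)) :=
    Real.log_le_log (by positivity) (by linarith)
  linarith

/-- Antiderivative of `x ↦ 1 / √(x (x + m))` vanishing at `0`. -/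
noncomputable def primInvSqrt (m x : ℝ) : ℝ := 2 * Real.log (√x + √(x + m)) - Real.log m

lemma hasDerivAt_primInvSqrt (m : ℝ) (hm : 0 ≤ m) (x : ℝ) (hx : 0 < x) :
    HasDerivAt (primInvSqrt m) (1 / (√x * √(x + m))) x := by
  have hx' : 0 < √x := Real.sqrt_pos.2 hx
  have hxm : 0 < √(x + m) := Real.sqrt_pos.2 (by linarith)
  have h1 := (hasDerivAt_id x).sqrt hx.ne'
  have h2 := ((hasDerivAt_id x).add_const m).sqrt (by simp; linarith)
  have := (((h1.add h2).log (by simp; positivity)).const_mul 2).sub_const (Real.log m)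
  refine this.congr_deriv ?_
  simp
  field_simp
  ring

lemma tendsto_inv_sqrt_nat : Tendsto (fun N : ℕ => 1 / √(N : ℝ)) atTop (𝓝 0) := by
  simp_rw [one_div]
  exact tendsto_inv_atTop_zero.comp (Real.tendsto_sqrt_atTop.comp tendsto_natCast_atTop_atTop)

end

/-! ### Sums of inverse square roots and logarithms -/

section

open Filter Topology

lemma sumInvSqrt_succ (N : ℕ) : sumInvSqrt (N + 1) = sumInvSqrt N + 1 / √((N : ℝ) + 1) := by
  rw [sumInvSqrt, sumInvSqrt, Finset.sum_range_succ]

lemma tendsto_sqrt_nat : Tendsto (fun N : ℕ => √(N : ℝ)) atTop atTop :=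
  Real.tendsto_sqrt_atTop.comp tendsto_natCast_atTop_atTop

lemma hasDerivAt_two_sqrt (x : ℝ) (hx : 0 < x) : HasDerivAt (fun x => 2 * √x) (1 / √x) x := by
  have := ((hasDerivAt_id x).sqrt hx.ne').const_mul 2
  refine this.congr_deriv ?_
  have := Real.sqrt_pos.2 hx
  simp; field_simp

lemma sqrt_ratio : Tendsto (fun N : ℕ => √(N : ℝ) / √((N : ℝ) + 1)) atTop (𝓝 1) := by
  have h := tendsto_natCast_div_add_atTop (𝕜 := ℝ) 1
  have := (Real.continuous_sqrt.tendsto _).comp h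
  rw [Real.sqrt_one] at this
  refine this.congr fun N => ?_
  simp [Real.sqrt_div (Nat.cast_nonneg N)]

/-- `∑_{n ≤ N} n^{-1/2} = 2 √N + z + (1/2 + o(1)) / √N`. -/
lemma sumInvSqrt_second_order {z : ℝ}
    (hz : Tendsto (fun N : ℕ => sumInvSqrt N - 2 * √(N : ℝ)) atTop (𝓝 z)) :
    Tendsto (fun N : ℕ => √(N : ℝ) * (sumInvSqrt N - 2 * √(N : ℝ) - z)) atTop (𝓝 (1 / 2)) := by
  have hb : ∀ N : ℕ, 1 ≤ N → 0 ≤ z - (sumInvSqrt N - 2 * √(N : ℝ) - (1 / √(N : ℝ)) / 2) ∧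
      z - (sumInvSqrt N - 2 * √(N : ℝ) - (1 / √(N : ℝ)) / 2)
        ≤ (1 / √(N : ℝ) - 1 / √((N : ℝ) + 1)) / 2 := fun N hN =>
    trapezoid_limit convexOn_inv_sqrt hasDerivAt_two_sqrt tendsto_inv_sqrt_nat hz hN
  have hlow : Tendsto (fun N : ℕ => 1 / 2 - (1 - √(N : ℝ) / √((N : ℝ) + 1)) / 2) atTop (𝓝 (1 / 2)) := by
    have := ((sqrt_ratio.const_sub 1).div_const 2).const_sub (1 / 2)
    simpa using this
  refine tendsto_of_tendsto_of_tendsto_of_le_of_le' hlow tendsto_const_nhds ?_ ?_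
  · filter_upwards [eventually_ge_atTop 1] with N hN
    have hN' : 0 < √(N : ℝ) := Real.sqrt_pos.2 (by exact_mod_cast hN)
    have := mul_le_mul_of_nonneg_left (hb N hN).2 hN'.le
    have e1 : √(N : ℝ) * (1 / √(N : ℝ)) = 1 := by field_simp
    have e2 : √(N : ℝ) * (1 / √((N : ℝ) + 1)) = √(N : ℝ) / √((N : ℝ) + 1) := by ring
    nlinarith
  · filter_upwards [eventually_ge_atTop 1] with N hN
    have hN' : 0 < √(N : ℝ) := Real.sqrt_pos.2 (by exact_mod_cast hN)
    have := mul_le_mul_of_nonneg_left (hb N hN).1 hN'.le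
    have e1 : √(N : ℝ) * (1 / √(N : ℝ)) = 1 := by field_simp
    nlinarith

/-- Twice the sum of `1/√(ab)` over `1 ≤ a < b ≤ n + 1`, plus the diagonal, is the full square. -/
lemma triangle_sum (n : ℕ) :
    ∑ i ∈ Finset.range n, ∑ l ∈ Finset.range (n - i),
        1 / (√((l : ℝ) + 1) * √((l : ℝ) + 1 + ((i : ℝ) + 1)))
      = (sumInvSqrt (n + 1) ^ 2 - (harmonic (n + 1) : ℝ)) / 2 := by
  induction n with
  | zero => simp [sumInvSqrt, harmonic]
  | succ n ih =>
    have e1 : ∑ i ∈ Finset.range (n + 1), ∑ l ∈ Finset.range (n + 1 - i),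
        1 / (√((l : ℝ) + 1) * √((l : ℝ) + 1 + ((i : ℝ) + 1)))
      = ∑ i ∈ Finset.range (n + 1), (∑ l ∈ Finset.range (n - i),
        1 / (√((l : ℝ) + 1) * √((l : ℝ) + 1 + ((i : ℝ) + 1)))
        + 1 / (√(((n - i : ℕ) : ℝ) + 1) * √((n : ℝ) + 1 + 1))) := by
      refine Finset.sum_congr rfl fun i hi => ?_
      have hi' : i ≤ n := by simpa [Nat.lt_succ_iff] using hi
      rw [show n + 1 - i = (n - i) + 1 by omega, Finset.sum_range_succ]
      congr 4
      push_cast [hi']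
      ring
    have e2 : ∑ i ∈ Finset.range (n + 1), 1 / (√(((n - i : ℕ) : ℝ) + 1) * √((n : ℝ) + 1 + 1))
        = sumInvSqrt (n + 1) * (1 / √((n : ℝ) + 1 + 1)) := by
      have := Finset.sum_range_reflect (fun j : ℕ => 1 / (√((j : ℝ) + 1) * √((n : ℝ) + 1 + 1))) (n + 1)
      simp only [Nat.add_sub_cancel] at this
      rw [this, sumInvSqrt, Finset.sum_mul]
      refine Finset.sum_congr rfl fun i _ => ?_
      rw [one_div_mul_one_div]
    rw [e1, Finset.sum_add_distrib, e2, Finset.sum_range_succ, ih, harmonic_succ (n + 1),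
      sumInvSqrt_succ (n + 1)]
    simp only [Nat.sub_self, Finset.range_zero, Finset.sum_empty]
    push_cast
    have : (1 / √((n : ℝ) + 1 + 1)) ^ 2 = ((n : ℝ) + 1 + 1)⁻¹ := by
      rw [div_pow, Real.sq_sqrt (by positivity)]; simp
    linear_combination -(1/2 : ℝ) * this

/-- An antiderivative of `log (c + √x)`. -/
lemma hasDerivAt_prim_log (c : ℝ) (hc : 0 < c) (x : ℝ) (hx : 0 < x) :
    HasDerivAt (fun x => (x - c ^ 2) * Real.log (c + √x) - x / 2 + c * √x)
      (Real.log (c + √x)) x := by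
  have hx' : 0 < √x := Real.sqrt_pos.2 hx
  have h1 := (hasDerivAt_id x).sqrt hx.ne'
  have h2 := (h1.const_add c).log (by simp; positivity)
  have := ((((hasDerivAt_id x).sub_const (c ^ 2)).mul h2).sub ((hasDerivAt_id x).div_const 2)).add
    (h1.const_mul c)
  refine this.congr_deriv ?_
  have hs : x = √x ^ 2 := (Real.sq_sqrt hx.le).symm
  have hne : c + √x ≠ 0 := by positivity
  simp only [id]
  have : (x - c ^ 2) * (1 / (2 * √x) / (c + √x)) = (√x - c) / (2 * √x) := by
    rw [show x - c ^ 2 = (√x - c) * (c + √x) by nlinarith]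
    field_simp
  rw [this]
  field_simp
  ring

lemma log_one_add_tendsto (t : ℝ) :
    Tendsto (fun N : ℕ => Real.log (1 + t * (1 / √(N : ℝ)))) atTop (𝓝 0) := by
  have h := (tendsto_inv_sqrt_nat.const_mul t).const_add 1
  have := (Real.continuousAt_log (x := 1 + t * 0) (by simp)).tendsto.comp h
  simpa [Function.comp_def] using this

lemma sum_log_sqrt :
    Tendsto (fun N : ℕ => ∑ l ∈ Finset.range N, Real.log (√(N : ℝ) + √((l : ℝ) + 1))
      - (N / 2 + N * Real.log N / 2 + Real.log 2 / 2)) atTop (𝓝 0) := by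
  have h1 := log_one_add_tendsto 1
  have h2 := log_one_add_tendsto (√2)
  have hbound : ∀ N : ℕ, 1 ≤ N → |∑ l ∈ Finset.range N, Real.log (√(N : ℝ) + √((l : ℝ) + 1))
      - (N / 2 + N * Real.log N / 2 + Real.log 2 / 2)|
      ≤ 2 * |Real.log (1 + 1 * (1 / √(N : ℝ)))| + |Real.log (1 + √2 * (1 / √(N : ℝ)))| := by
    intro N hN
    have hN0 : (0 : ℝ) < N := by exact_mod_cast hN
    set c := √(N : ℝ) with hcdef
    have hc : 0 < c := Real.sqrt_pos.2 hN0
    have hc2 : c ^ 2 = N := Real.sq_sqrt hN0.le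
    set F : ℝ → ℝ := fun x => (x - c ^ 2) * Real.log (c + √x) - x / 2 + c * √x with hF
    obtain ⟨k, rfl⟩ := Nat.exists_eq_add_of_le hN
    have hst := trapezoid_step (f := fun x => -Real.log (c + √x)) (F := fun x => -F x)
      (concaveOn_log_add_sqrt c hc) (fun x hx => (hasDerivAt_prim_log c hc x hx).neg)
      (le_refl 1) k
    simp only [Finset.sum_range_one, Nat.cast_zero, zero_add, Nat.cast_one, Real.sqrt_one,
      Finset.sum_neg_distrib] at hst
    -- mean value on `[0, 1]`, where the antiderivative is only continuous at the left end
    obtain ⟨ξ, hξ, hslope⟩ := exists_hasDerivAt_eq_slope F (fun x => Real.log (c + √x))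
      (zero_lt_one' ℝ) (by
        refine ContinuousOn.add (ContinuousOn.sub (ContinuousOn.mul (by fun_prop)
          (ContinuousOn.log (by fun_prop) (fun x _ => by positivity))) (by fun_prop)) (by fun_prop))
      (fun x hx => hasDerivAt_prim_log c hc x hx.1)
    have hF1 : F 1 = F 0 + Real.log (c + √ξ) := by
      simp at hslope; linarith
    have hF0 : F 0 = -(c ^ 2 * Real.log c) := by simp [hF]
    have hlogc : Real.log c = Real.log ((1 + k : ℕ) : ℝ) / 2 := by
      rw [hcdef, Real.log_sqrt hN0.le]
    have hFN : F ((1 + k : ℕ) : ℝ) = ((1 + k : ℕ) : ℝ) / 2 := by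
      simp only [hF]
      rw [← hcdef, ← hc2]; ring
    have hGN : Real.log (c + √((1 + k : ℕ) : ℝ)) = Real.log 2 + Real.log c := by
      rw [← hcdef, ← two_mul, Real.log_mul two_ne_zero hc.ne']
    have ha : ∀ t : ℝ, 0 ≤ t → Real.log (c + t) = Real.log c + Real.log (1 + t * (1 / c)) := by
      intro t ht
      rw [← Real.log_mul hc.ne' (by positivity)]
      congr 1; field_simp
    have hξ1 : Real.log (c + √ξ) ≤ Real.log (c + 1) := by
      apply Real.log_le_log (by positivity)
      have : √ξ ≤ 1 := by rw [Real.sqrt_le_one]; exact hξ.2.le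
      linarith
    have hξ0 : Real.log c ≤ Real.log (c + √ξ) :=
      Real.log_le_log hc (by linarith [Real.sqrt_nonneg ξ])
    have hmono : Real.log (c + √((1 + k : ℕ) : ℝ)) ≤ Real.log (c + √(((1 + k : ℕ) : ℝ) + 1)) := by
      apply Real.log_le_log (by positivity)
      have : √((1 + k : ℕ) : ℝ) ≤ √(((1 + k : ℕ) : ℝ) + 1) := Real.sqrt_le_sqrt (by linarith)
      linarith
    have e1 := ha 1 zero_le_one
    have e2 := ha (√2) (by positivity)
    rw [show (1 : ℝ) + 1 = 2 by norm_num] at hst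
    rw [e1] at hst hξ1
    rw [e2] at hst
    rw [hF1, hF0, hFN, hGN, hlogc, hc2] at hst
    rw [hGN, hlogc] at hmono
    rw [hlogc] at hξ0 hξ1
    obtain ⟨p1, p2⟩ := hst
    have q1 : 0 ≤ Real.log (1 + 1 * (1 / c)) := Real.log_nonneg (by have := hc; simp; positivity)
    have q2 : 0 ≤ Real.log (1 + √2 * (1 / c)) := Real.log_nonneg (by have := hc; simp; positivity)
    rw [abs_of_nonneg q1, abs_of_nonneg q2, abs_le]
    constructor <;> linarith
  rw [tendsto_zero_iff_abs_tendsto_zero]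
  have hz : Tendsto (fun N : ℕ => 2 * |Real.log (1 + 1 * (1 / √(N : ℝ)))|
      + |Real.log (1 + √2 * (1 / √(N : ℝ)))|) atTop (𝓝 0) := by
    have := (h1.abs.const_mul 2).add h2.abs
    simpa using this
  refine tendsto_of_tendsto_of_tendsto_of_le_of_le' tendsto_const_nhds hz ?_ ?_
  · exact Eventually.of_forall fun N => abs_nonneg _
  · filter_upwards [eventually_ge_atTop 1] with N hN using hbound N hN

lemma log_factorial_asymp :
    Tendsto (fun N : ℕ => Real.log (N.factorial) - (N * Real.log N - N + Real.log N / 2))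
      atTop (𝓝 (Real.log (2 * Real.pi) / 2)) := by
  have h := (Real.continuousAt_log (Real.sqrt_pos.2 Real.pi_pos).ne').tendsto.comp
    Stirling.tendsto_stirlingSeq_sqrt_pi
  have h' := h.add_const (Real.log 2 / 2)
  rw [Real.log_sqrt Real.pi_pos.le, show Real.log Real.pi / 2 + Real.log 2 / 2
    = Real.log (2 * Real.pi) / 2 by rw [Real.log_mul two_ne_zero Real.pi_ne_zero]; ring] at h'
  refine h'.congr' ?_
  filter_upwards [eventually_ge_atTop 1] with N hN
  have hN0 : (0 : ℝ) < N := by exact_mod_cast hN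
  have hfac : (0 : ℝ) < N.factorial := by exact_mod_cast Nat.factorial_pos N
  simp only [Function.comp, Stirling.stirlingSeq]
  rw [Real.log_div hfac.ne' (by positivity), Real.log_mul (by positivity) (by positivity),
    Real.log_sqrt (by positivity), Real.log_pow, Real.log_div hN0.ne' (by positivity),
    Real.log_exp, Real.log_mul two_ne_zero hN0.ne']
  ring

end

/-! ### The summed Euler–Maclaurin constants -/

section

open Filter Topology

lemma tendsto_inv_sqrt_mul_nat (m : ℝ) (hm : 0 ≤ m) :
    Tendsto (fun N : ℕ => 1 / (√(N : ℝ) * √((N : ℝ) + m))) atTop (𝓝 0) := by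
  have h := tendsto_inv_sqrt_nat
  refine tendsto_of_tendsto_of_tendsto_of_le_of_le' tendsto_const_nhds h
    (Eventually.of_forall fun N => by positivity) ?_
  filter_upwards [eventually_ge_atTop 1] with N hN
  have h1 : (1 : ℝ) ≤ N := by exact_mod_cast hN
  have h2 : 1 ≤ √((N : ℝ) + m) := Real.one_le_sqrt.2 (by linarith)
  have h3 : 0 < √(N : ℝ) := Real.sqrt_pos.2 (by linarith)
  exact one_div_le_one_div_of_le h3 (by nlinarith)

/-- Summation of the second-order Euler–Maclaurin formula along the antidiagonals `i + J = n`. -/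
lemma sum_const_bounds {C : ℕ → ℝ}
    (hC : ∀ i : ℕ, Tendsto (fun J : ℕ => ∑ l ∈ Finset.range J,
      1 / (√((l : ℝ) + 1) * √((l : ℝ) + 1 + ((i : ℝ) + 1))) - primInvSqrt ((i : ℝ) + 1) J)
      atTop (𝓝 (C i))) (n : ℕ) :
    let X := ∑ i ∈ Finset.range n, C i - ((sumInvSqrt (n + 1) ^ 2 - (harmonic (n + 1) : ℝ)) / 2
      - (2 * ∑ l ∈ Finset.range n, Real.log (√((n : ℝ) + 1) + √((l : ℝ) + 1))
          - Real.log (n.factorial)) - sumInvSqrt n / √((n : ℝ) + 1) / 2)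
    0 ≤ X ∧ X ≤ (sumInvSqrt n / √((n : ℝ) + 1) - (sumInvSqrt (n + 1) - 1) / √((n : ℝ) + 2)) / 2 := by
  intro X
  have hb : ∀ i ∈ Finset.range n, _ := fun i hi =>
    trapezoid_limit (convexOn_inv_sqrt_mul ((i : ℝ) + 1) (by positivity))
      (hasDerivAt_primInvSqrt ((i : ℝ) + 1) (by positivity))
      (tendsto_inv_sqrt_mul_nat ((i : ℝ) + 1) (by positivity)) (hC i)
      (N := n - i) (by have := Finset.mem_range.1 hi; omega)
  have s1 := Finset.sum_nonneg fun i hi => (hb i hi).1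
  have s2 := Finset.sum_le_sum fun i hi => (hb i hi).2
  have c : ∀ i ∈ Finset.range n, ((n - i : ℕ) : ℝ) = n - i := fun i hi => by
    rw [Nat.cast_sub (Finset.mem_range.1 hi).le]
  have c1 : ∀ i ∈ Finset.range n, ((n - i : ℕ) : ℝ) = ((n - 1 - i : ℕ) : ℝ) + 1 := fun i hi => by
    have := Finset.mem_range.1 hi
    rw [← Nat.cast_add_one]; congr 1; omega
  have e1 : ∑ i ∈ Finset.range n, 1 / (√((n - i : ℕ) : ℝ) * √(((n - i : ℕ) : ℝ) + ((i : ℝ) + 1)))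
      = sumInvSqrt n / √((n : ℝ) + 1) := by
    rw [sumInvSqrt, ← Finset.sum_range_reflect (fun l : ℕ => 1 / √((l : ℝ) + 1)), Finset.sum_div]
    refine Finset.sum_congr rfl fun i hi => ?_
    rw [show ((n - i : ℕ) : ℝ) + ((i : ℝ) + 1) = n + 1 by rw [c i hi]; ring, c1 i hi]
    rw [div_div]
  have e2 : ∑ i ∈ Finset.range n, 1 / (√(((n - i : ℕ) : ℝ) + 1)
        * √(((n - i : ℕ) : ℝ) + 1 + ((i : ℝ) + 1)))
      = (sumInvSqrt (n + 1) - 1) / √((n : ℝ) + 2) := by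
    have : sumInvSqrt (n + 1) - 1 = ∑ l ∈ Finset.range n, 1 / √((l : ℝ) + 1 + 1) := by
      rw [sumInvSqrt, Finset.sum_range_succ']; simp
    rw [this, ← Finset.sum_range_reflect (fun l : ℕ => 1 / √((l : ℝ) + 1 + 1)), Finset.sum_div]
    refine Finset.sum_congr rfl fun i hi => ?_
    rw [show ((n - i : ℕ) : ℝ) + 1 + ((i : ℝ) + 1) = n + 2 by rw [c i hi]; ring, c1 i hi]
    rw [div_div]
  have e3 : ∑ i ∈ Finset.range n, primInvSqrt ((i : ℝ) + 1) ((n - i : ℕ) : ℝ)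
      = 2 * ∑ l ∈ Finset.range n, Real.log (√((n : ℝ) + 1) + √((l : ℝ) + 1))
          - Real.log (n.factorial) := by
    have : Real.log (n.factorial) = ∑ i ∈ Finset.range n, Real.log ((i : ℝ) + 1) := by
      rw [← Finset.prod_range_add_one_eq_factorial, Nat.cast_prod, Real.log_prod]
      · push_cast; rfl
      · intro i _; positivity
    rw [this, ← Finset.sum_range_reflect (fun l : ℕ => Real.log (√((n : ℝ) + 1) + √((l : ℝ) + 1))),
      Finset.mul_sum, ← Finset.sum_sub_distrib]
    refine Finset.sum_congr rfl fun i hi => ?_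
    rw [primInvSqrt, show ((n - i : ℕ) : ℝ) + ((i : ℝ) + 1) = n + 1 by rw [c i hi]; ring, c1 i hi,
      add_comm (√((n : ℝ) + 1))]
  have e4 := triangle_sum n
  simp only [Finset.sum_sub_distrib, ← Finset.sum_div] at s1 s2
  rw [e1, e3, e4] at s1 s2
  rw [e2] at s2
  exact ⟨s1, s2⟩

/-- Asymptotics of the summed Euler–Maclaurin constants. -/
theorem tendsto_sum_const {C : ℕ → ℝ} {z : ℝ}
    (hz : Tendsto (fun N : ℕ => sumInvSqrt N - 2 * √(N : ℝ)) atTop (𝓝 z))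
    (hC : ∀ i : ℕ, Tendsto (fun J : ℕ => ∑ l ∈ Finset.range J,
      1 / (√((l : ℝ) + 1) * √((l : ℝ) + 1 + ((i : ℝ) + 1))) - primInvSqrt ((i : ℝ) + 1) J)
      atTop (𝓝 (C i))) :
    Tendsto (fun n : ℕ => ∑ i ∈ Finset.range n, C i - z * sumInvSqrt n) atTop
      (𝓝 (-(1 / 2) * (Real.eulerMascheroniConstant - Real.log (8 * Real.pi) + z ^ 2))) := by
  have sh := tendsto_add_atTop_nat 1
  have inv1 := tendsto_inv_sqrt_nat.comp sh
  -- `r N = √N (H N - 2 √N - z) → 1/2`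
  have hr := (sumInvSqrt_second_order hz).comp sh
  have hz1 := hz.comp sh
  have hh := Real.tendsto_harmonic_sub_log.comp sh
  have hA := sum_log_sqrt.comp sh
  have hB := log_factorial_asymp.comp sh
  -- `H(n)/√(n+1) → 2`
  have q : Tendsto (fun n : ℕ => sumInvSqrt n / √((n : ℝ) + 1)) atTop (𝓝 2) := by
    have h1 := ((hz1.mul inv1).const_add 2).sub (inv1.mul inv1)
    simp only [mul_zero, add_zero, sub_zero] at h1
    refine h1.congr fun n => ?_
    have : 0 < √((n : ℝ) + 1) := Real.sqrt_pos.2 (by positivity)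
    simp only [Function.comp_apply, sumInvSqrt_succ]
    push_cast
    field_simp
    ring
  have q2 : Tendsto (fun n : ℕ => (sumInvSqrt (n + 1) - 1) / √((n : ℝ) + 2)) atTop (𝓝 2) := by
    have h1 := (q.comp sh).sub (inv1.comp sh)
    simp only [sub_zero] at h1
    refine h1.congr fun n => ?_
    simp only [Function.comp_apply]
    push_cast
    rw [show (n : ℝ) + 1 + 1 = n + 2 by ring]
    ring
  have qe : Tendsto (fun n : ℕ => (sumInvSqrt n / √((n : ℝ) + 1)
      - (sumInvSqrt (n + 1) - 1) / √((n : ℝ) + 2)) / 2) atTop (𝓝 0) := by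
    simpa using (q.sub q2).div_const 2
  have hE := squeeze_zero (fun n => (sum_const_bounds hC n).1) (fun n => (sum_const_bounds hC n).2) qe
  have main := (((((hE.sub (hA.const_mul 2)).add hB).sub (hh.div_const 2)).add_const
    (Real.log 2 - z ^ 2 / 2)).add ((hr.const_mul 2).add
      ((((hr.mul inv1).mul (hr.mul inv1)).div_const 2).add (inv1.const_mul z)))).sub
      (q.div_const 2)
  have hl : Real.log (8 * Real.pi) = 2 * Real.log 2 + Real.log (2 * Real.pi) := by
    rw [show 8 * Real.pi = 2 ^ 2 * (2 * Real.pi) by ring, Real.log_mul (by norm_num)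
      (by positivity), Real.log_pow]
    norm_num
  convert main.congr fun n => ?_ using 2
  · rw [hl]; ring
  · have hs : 0 < √((n : ℝ) + 1) := Real.sqrt_pos.2 (by positivity)
    have hs2 : √((n : ℝ) + 1) ^ 2 = n + 1 := Real.sq_sqrt (by positivity)
    have lf : Real.log ((n + 1).factorial) = Real.log ((n : ℝ) + 1) + Real.log (n.factorial) := by
      rw [Nat.factorial_succ, Nat.cast_mul, Real.log_mul (by positivity) (by positivity)]
      push_cast; rfl
    have ll : Real.log (√((n : ℝ) + 1) + √((n : ℝ) + 1)) = Real.log 2 + Real.log ((n : ℝ) + 1) / 2 := by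
      rw [← two_mul, Real.log_mul two_ne_zero hs.ne', Real.log_sqrt (by positivity)]
    have hH := sumInvSqrt_succ n
    have hn : sumInvSqrt n = sumInvSqrt (n + 1) - 1 / √((n : ℝ) + 1) := by rw [hH]; ring
    simp only [Function.comp_apply, Finset.sum_range_succ]
    push_cast
    rw [lf, ll]
    simp only [hn]
    generalize sumInvSqrt (n + 1) = H at *
    generalize √((n : ℝ) + 1) = s at *
    have : (n : ℝ) = s ^ 2 - 1 := by linarith
    generalize ∑ l ∈ Finset.range n, Real.log (s + √((l : ℝ) + 1)) = S
    generalize Real.log ((n : ℝ) + 1) = L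
    rw [this]
    field_simp
    ring

end

/-! ### The classical series for `Y₀` and the Bessel equation -/

section

open Filter Topology

/-- The power series `∑ a m q^m`, used for coefficients that are `O(1/m!)`. -/
noncomputable def pser (a : ℕ → ℝ) (q : ℝ) : ℝ := ∑' m : ℕ, a m * q ^ m

/-- Coefficients that are `O(1/m!)`. -/
def FactBound (a : ℕ → ℝ) : Prop := ∃ K : ℝ, ∀ m, |a m| ≤ K / m.factorial

/-- Coefficients of the derived power series. -/
def dcoef (a : ℕ → ℝ) (m : ℕ) : ℝ := ((m : ℝ) + 1) * a (m + 1)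

lemma FactBound.dcoef {a : ℕ → ℝ} (ha : FactBound a) : FactBound (dcoef a) := by
  obtain ⟨K, hK⟩ := ha
  refine ⟨K, fun m => ?_⟩
  have := hK (m + 1)
  rw [DivisorBessel.dcoef, abs_mul, abs_of_pos (by positivity : (0 : ℝ) < m + 1)]
  calc ((m : ℝ) + 1) * |a (m + 1)| ≤ (m + 1) * (K / (m + 1).factorial) := by gcongr
    _ = K / m.factorial := by
      rw [Nat.factorial_succ]; push_cast
      field_simp

lemma FactBound.summable {a : ℕ → ℝ} (ha : FactBound a) (q : ℝ) : Summable fun m => a m * q ^ m := by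
  obtain ⟨K, hK⟩ := ha
  refine Summable.of_norm_bounded (g := fun m : ℕ => K * (|q| ^ m / m.factorial))
    ((Real.summable_pow_div_factorial |q|).mul_left K) fun m => ?_
  rw [norm_mul, norm_pow, Real.norm_eq_abs, Real.norm_eq_abs]
  calc |a m| * |q| ^ m ≤ K / m.factorial * |q| ^ m := by gcongr; exact hK m
    _ = _ := by ring

lemma pser_hasDerivAt {a : ℕ → ℝ} (ha : FactBound a) (q : ℝ) :
    HasDerivAt (pser a) (pser (dcoef a) q) q := by
  obtain ⟨K, hK⟩ := id ha
  set r := |q| + 1 with hr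
  have hu : Summable fun m : ℕ => K * (m * r ^ (m - 1) / m.factorial) := by
    refine Summable.mul_left K ((summable_nat_add_iff 1).1 ?_)
    refine (Real.summable_pow_div_factorial r).congr fun m => ?_
    rw [Nat.factorial_succ]; push_cast
    field_simp
  have h := hasDerivAt_tsum_of_isPreconnected (g := fun m q => a m * q ^ m)
    (g' := fun m q => a m * (m * q ^ (m - 1))) hu (Metric.isOpen_ball (x := (0 : ℝ)) (ε := r))
    (convex_ball (0 : ℝ) r).isPreconnected
    (fun m y _ => (hasDerivAt_pow m y).const_mul (a m))
    (fun m y hy => by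
      rw [norm_mul, norm_mul, norm_pow, Real.norm_eq_abs, Real.norm_eq_abs, Real.norm_eq_abs,
        Nat.abs_cast]
      have hy : |y| < r := by simpa using hy
      calc |a m| * (m * |y| ^ (m - 1)) ≤ K / m.factorial * (m * r ^ (m - 1)) := by
            have := (abs_nonneg _).trans (hK m)
            gcongr
            exact hK m
        _ = _ := by ring)
    (Metric.mem_ball_self (by positivity)) (ha.summable 0)
    (y := q) (by simp [hr])
  refine h.congr_deriv ?_
  rw [(tsum_eq_zero_add' (f := fun m : ℕ => a m * (m * q ^ (m - 1))) (by
    refine (ha.dcoef.summable q).congr fun m => ?_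
    simp [dcoef]; ring))]
  simp only [Nat.cast_zero, zero_mul, mul_zero, zero_add, pser]
  refine tsum_congr fun m => ?_
  simp [dcoef]; ring

lemma pser_zero (a : ℕ → ℝ) : pser a 0 = a 0 := by
  rw [pser, tsum_eq_single 0]
  · simp
  · intro m hm; simp [hm]

/-- Coefficients of `J₀` in the variable `q = (x/2)^2`. -/
noncomputable def coefJ (m : ℕ) : ℝ := (-1) ^ m / (m.factorial : ℝ) ^ 2

/-- Coefficients of the entire part of `Y₀` in the variable `q = (x/2)^2`. -/
noncomputable def coefR (m : ℕ) : ℝ := coefJ m * (harmonic m : ℝ)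

lemma factBound_coefJ : FactBound coefJ := by
  refine ⟨1, fun m => ?_⟩
  have : (1 : ℝ) ≤ m.factorial := by exact_mod_cast m.factorial_pos
  rw [coefJ, abs_div, abs_pow, abs_neg, abs_one, one_pow, abs_of_nonneg (by positivity)]
  apply one_div_le_one_div_of_le (by positivity)
  nlinarith

lemma harmonic_le (m : ℕ) : (harmonic m : ℝ) ≤ m := by
  rw [harmonic]
  push_cast
  calc ∑ i ∈ Finset.range m, ((i : ℝ) + 1)⁻¹ ≤ ∑ i ∈ Finset.range m, (1 : ℝ) := by
        refine Finset.sum_le_sum fun i _ => inv_le_one_of_one_le₀ (by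
          have : (0 : ℝ) ≤ i := Nat.cast_nonneg i
          linarith)
    _ = m := by simp

lemma harmonic_nonneg (m : ℕ) : (0 : ℝ) ≤ (harmonic m : ℝ) := by
  rw [harmonic]; push_cast; positivity

lemma factBound_coefR : FactBound coefR := by
  refine ⟨1, fun m => ?_⟩
  have h1 : (m : ℝ) ≤ m.factorial := by exact_mod_cast m.self_le_factorial
  have h0 : (0 : ℝ) < m.factorial := by positivity
  rw [coefR, coefJ, abs_mul, abs_div, abs_pow, abs_neg, abs_one, one_pow,
    abs_of_nonneg (sq_nonneg _), abs_of_nonneg (harmonic_nonneg m)]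
  rw [div_mul_eq_mul_div, one_mul, div_le_div_iff₀ (by positivity) h0]
  nlinarith [harmonic_le m]

lemma coefJ_succ (m : ℕ) : ((m : ℝ) + 1) ^ 2 * coefJ (m + 1) = -coefJ m := by
  rw [coefJ, coefJ, Nat.factorial_succ]; push_cast
  field_simp
  ring

/-- If `f(q) = ∑ a m q^m` then `(q f')' = ∑ (m+1)^2 a (m+1) q^m`. -/
lemma pser_euler {a : ℕ → ℝ} (ha : FactBound a) (q : ℝ) :
    pser (dcoef a) q + q * pser (dcoef (dcoef a)) q
      = pser (fun m => ((m : ℝ) + 1) ^ 2 * a (m + 1)) q := by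
  have h1 := ha.dcoef.summable q
  have h2 := (ha.dcoef.dcoef.summable q).mul_left q
  have e : q * pser (dcoef (dcoef a)) q = ∑' m : ℕ, (m : ℝ) * dcoef a m * q ^ m := by
    rw [pser, ← tsum_mul_left, tsum_eq_zero_add' (f := fun m : ℕ => (m : ℝ) * dcoef a m * q ^ m)]
    · simp only [Nat.cast_zero, zero_mul, zero_add]
      refine tsum_congr fun m => ?_
      simp [dcoef]; ring
    · refine h2.congr fun m => ?_
      simp [dcoef]; ring
  have h3 : Summable fun m : ℕ => (m : ℝ) * dcoef a m * q ^ m := by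
    refine (summable_nat_add_iff 1).1 (h2.congr fun m => ?_)
    simp [dcoef]; ring
  rw [e, pser, ← Summable.tsum_add h1 h3, pser]
  refine tsum_congr fun m => ?_
  simp [dcoef]; ring

lemma pser_coefJ_eq (q : ℝ) :
    pser (dcoef coefJ) q + q * pser (dcoef (dcoef coefJ)) q = -pser coefJ q := by
  rw [pser_euler factBound_coefJ, pser, pser, ← tsum_neg]
  refine tsum_congr fun m => ?_
  rw [coefJ_succ]; ring

lemma pser_coefR_eq (q : ℝ) :
    pser (dcoef coefR) q + q * pser (dcoef (dcoef coefR)) q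
      = pser (dcoef coefJ) q - pser coefR q := by
  rw [pser_euler factBound_coefR, pser, pser, pser, ← Summable.tsum_sub
    (factBound_coefJ.dcoef.summable q) (factBound_coefR.summable q)]
  refine tsum_congr fun m => ?_
  have h := coefJ_succ m
  have hm : (m : ℝ) + 1 ≠ 0 := by positivity
  rw [coefR, coefR, dcoef, harmonic_succ]
  push_cast
  have h' : coefJ m = - (((m : ℝ) + 1) ^ 2 * coefJ (m + 1)) := by linarith
  rw [h']
  field_simp
  ring

/-- `(π/2) Y₀`, as the classical series. -/
noncomputable def Yser (x : ℝ) : ℝ :=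
  (Real.log (x / 2) + Real.eulerMascheroniConstant) * pser coefJ ((x / 2) ^ 2)
    - pser coefR ((x / 2) ^ 2)

/-- `x` times the derivative of `Yser`. -/
noncomputable def Pser (x : ℝ) : ℝ :=
  pser coefJ ((x / 2) ^ 2) + 2 * (x / 2) ^ 2 *
    ((Real.log (x / 2) + Real.eulerMascheroniConstant) * pser (dcoef coefJ) ((x / 2) ^ 2)
      - pser (dcoef coefR) ((x / 2) ^ 2))

lemma hasDerivAt_pser_sq {a : ℕ → ℝ} (ha : FactBound a) (x : ℝ) :
    HasDerivAt (fun x => pser a ((x / 2) ^ 2)) (pser (dcoef a) ((x / 2) ^ 2) * (x / 2)) x := by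
  have h1 : HasDerivAt (fun x : ℝ => (x / 2) ^ 2) (x / 2) x := by
    refine (((hasDerivAt_id x).div_const 2).pow 2).congr_deriv ?_
    simp; ring
  exact (pser_hasDerivAt ha ((x / 2) ^ 2)).comp x h1

lemma hasDerivAt_log_half {x : ℝ} (hx : 0 < x) :
    HasDerivAt (fun x => Real.log (x / 2) + Real.eulerMascheroniConstant) (1 / x) x := by
  refine ((((hasDerivAt_id x).div_const 2).log (by simp; positivity)).add_const _).congr_deriv ?_
  simp; field_simp

lemma hasDerivAt_Yser {x : ℝ} (hx : 0 < x) : HasDerivAt Yser (Pser x / x) x := by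
  refine (((hasDerivAt_log_half hx).mul (hasDerivAt_pser_sq factBound_coefJ x)).sub
    (hasDerivAt_pser_sq factBound_coefR x)).congr_deriv ?_
  rw [Pser]
  field_simp
  ring

lemma hasDerivAt_Pser {x : ℝ} (hx : 0 < x) : HasDerivAt Pser (-x * Yser x) x := by
  have hq : HasDerivAt (fun x : ℝ => 2 * (x / 2) ^ 2) x x := by
    refine ((((hasDerivAt_id x).div_const 2).pow 2).const_mul 2).congr_deriv ?_
    simp; ring
  refine ((hasDerivAt_pser_sq factBound_coefJ x).add (hq.mul
    (((hasDerivAt_log_half hx).mul (hasDerivAt_pser_sq factBound_coefJ.dcoef x)).sub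
    (hasDerivAt_pser_sq factBound_coefR.dcoef x)))).congr_deriv ?_
  have e1 := pser_coefJ_eq ((x / 2) ^ 2)
  have e2 := pser_coefR_eq ((x / 2) ^ 2)
  rw [Yser]
  simp only [Pi.sub_apply, Pi.mul_apply]
  have hx' : x ≠ 0 := hx.ne'
  have k1 : x * (1 / x) = 1 := by field_simp
  generalize Real.log (x / 2) + Real.eulerMascheroniConstant = l at *
  generalize pser (dcoef (dcoef coefJ)) ((x / 2) ^ 2) = j2 at *
  generalize pser (dcoef (dcoef coefR)) ((x / 2) ^ 2) = r2 at *
  generalize pser (dcoef coefJ) ((x / 2) ^ 2) = j1 at *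
  generalize pser (dcoef coefR) ((x / 2) ^ 2) = r1 at *
  generalize pser coefJ ((x / 2) ^ 2) = j at *
  generalize pser coefR ((x / 2) ^ 2) = r at *
  linear_combination (x * l) * e1 - x * e2 + (x / 2 * j1) * k1

lemma continuous_pser {a : ℕ → ℝ} (ha : FactBound a) : Continuous (pser a) :=
  continuous_iff_continuousAt.2 fun q => (pser_hasDerivAt ha q).continuousAt

lemma tendsto_pser_half {a : ℕ → ℝ} (ha : FactBound a) :
    Tendsto (fun x => pser a ((x / 2) ^ 2)) (𝓝[>] 0) (𝓝 (a 0)) := by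
  have : Continuous fun x : ℝ => pser a ((x / 2) ^ 2) := (continuous_pser ha).comp (by fun_prop)
  have h := this.tendsto 0
  simp only [zero_div, ne_eq, OfNat.ofNat_ne_zero, not_false_eq_true, zero_pow, pser_zero] at h
  exact h.mono_left nhdsWithin_le_nhds

lemma tendsto_half_sq : Tendsto (fun x : ℝ => (x / 2) ^ 2) (𝓝[>] 0) (𝓝 0) := by
  have : Continuous fun x : ℝ => (x / 2) ^ 2 := by fun_prop
  have h := this.tendsto 0
  simp only [zero_div, ne_eq, OfNat.ofNat_ne_zero, not_false_eq_true, zero_pow] at h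
  exact h.mono_left nhdsWithin_le_nhds

lemma tendsto_log_half_sq : Tendsto (fun x : ℝ =>
    (Real.log (x / 2) + Real.eulerMascheroniConstant) * (x / 2) ^ 2) (𝓝[>] 0) (𝓝 0) := by
  have h0 : Tendsto (fun x : ℝ => x / 2) (𝓝[>] 0) (𝓝[>] 0) := by
    refine tendsto_nhdsWithin_iff.2 ⟨?_, ?_⟩
    · have := (continuous_id.div_const (2 : ℝ)).tendsto 0
      simp only [id, zero_div] at this
      exact this.mono_left nhdsWithin_le_nhds
    · filter_upwards [self_mem_nhdsWithin] with x hx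
      have hx : 0 < x := hx
      exact half_pos hx
  have h := ((tendsto_log_mul_rpow_nhdsGT_zero (r := 2) two_pos).comp h0).add
    (tendsto_half_sq.const_mul Real.eulerMascheroniConstant)
  simp only [mul_zero, add_zero] at h
  refine h.congr fun x => ?_
  simp only [Function.comp_apply, Real.rpow_two]
  ring

/-- Behaviour at the origin: `Yser x = log (x/2) + γ + o(1)`. -/
lemma tendsto_Yser_zero :
    Tendsto (fun x => Yser x - (Real.log (x / 2) + Real.eulerMascheroniConstant)) (𝓝[>] 0) (𝓝 0) := by
  have hb := (pser_hasDerivAt factBound_coefJ 0).isBigO_sub.comp_tendsto tendsto_half_sq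
  have h1 := ((Asymptotics.isBigO_refl (fun x : ℝ =>
    Real.log (x / 2) + Real.eulerMascheroniConstant) (𝓝[>] 0)).mul hb).trans_tendsto (by
      simpa using tendsto_log_half_sq)
  have h2 := h1.sub (tendsto_pser_half factBound_coefR)
  simp only [coefR, harmonic_zero, Rat.cast_zero, mul_zero, sub_zero] at h2
  refine h2.congr fun x => ?_
  have : pser coefJ 0 = 1 := by rw [pser_zero]; simp [coefJ]
  simp only [Function.comp_apply, this, Yser]
  ring

lemma tendsto_Pser_zero : Tendsto Pser (𝓝[>] 0) (𝓝 1) := by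
  have h := (tendsto_pser_half factBound_coefJ).add (((tendsto_log_half_sq.mul
    (tendsto_pser_half factBound_coefJ.dcoef)).sub
    (tendsto_half_sq.mul (tendsto_pser_half factBound_coefR.dcoef))).const_mul 2)
  have : coefJ 0 = 1 := by simp [coefJ]
  rw [this] at h
  simp only [zero_mul, sub_zero, mul_zero, add_zero] at h
  refine h.congr fun x => ?_
  rw [Pser]; ring

end

/-! ### The limit of `(J_ν cos πν - J_{-ν}) / sin πν` as `ν → 0` -/

section

open Filter Topology

/-- The `ν`-dependent factor `y^ν / Γ(m+1+ν)` of the `m`-th term of `J_ν(2y)`. -/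
noncomputable def gamTerm (y : ℝ) (m : ℕ) (ν : ℂ) : ℂ :=
  (y : ℂ) ^ ν * (Complex.Gamma ((m : ℂ) + 1 + ν))⁻¹

lemma differentiable_gamTerm {y : ℝ} (hy : 0 < y) (m : ℕ) : Differentiable ℂ (gamTerm y m) := by
  have hy' : (y : ℂ) ≠ 0 := by exact_mod_cast hy.ne'
  refine Differentiable.mul ?_ ?_
  · intro ν
    exact (differentiableAt_id).const_cpow (Or.inl hy')
  · exact Complex.differentiable_one_div_Gamma.comp (by fun_prop)

lemma gamTerm_bound {y : ℝ} (hy : 0 < y) :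
    ∃ B : ℝ, ∀ m : ℕ, ∀ ν ∈ Metric.ball (0 : ℂ) (1 / 2), ‖gamTerm y m ν‖ ≤ B * 2 ^ m := by
  obtain ⟨B, hB⟩ := (isCompact_closedBall (0 : ℂ) (1 / 2)).exists_bound_of_continuousOn
    (differentiable_gamTerm hy 0).continuous.continuousOn
  refine ⟨B, fun m => ?_⟩
  induction m with
  | zero => intro ν hν; simpa using hB ν (Metric.ball_subset_closedBall hν)
  | succ m ih =>
    intro ν hν
    have hν' : ‖ν‖ < 1 / 2 := by simpa using hν
    have hlow : (1 : ℝ) / 2 ≤ ‖(m : ℂ) + 1 + ν‖ := by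
      have h1 : ‖((m + 1 : ℕ) : ℂ)‖ = m + 1 := by rw [Complex.norm_natCast]; push_cast; rfl
      have h2 := norm_sub_le_norm_add ((m + 1 : ℕ) : ℂ) ν
      rw [h1] at h2
      push_cast at h2
      have : (0 : ℝ) ≤ m := Nat.cast_nonneg m
      linarith
    have hne : (m : ℂ) + 1 + ν ≠ 0 := by
      intro h; rw [h, norm_zero] at hlow; linarith
    have e : gamTerm y (m + 1) ν = gamTerm y m ν * ((m : ℂ) + 1 + ν)⁻¹ := by
      rw [gamTerm, gamTerm]
      push_cast
      rw [show (m : ℂ) + 1 + 1 + ν = ((m : ℂ) + 1 + ν) + 1 by ring, Complex.Gamma_add_one _ hne,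
        mul_inv]
      ring
    rw [e, norm_mul, norm_inv]
    calc _ ≤ (B * 2 ^ m) * 2 := by
          refine mul_le_mul (ih ν hν) ?_ (by positivity) ((norm_nonneg _).trans (ih ν hν))
          rw [inv_le_comm₀ (by linarith) two_pos]; linarith
      _ = _ := by ring

lemma besselJ_eq {x : ℝ} (hx : 0 < x) (ν : ℂ) :
    besselJ ν x = ∑' m : ℕ, ((((-1) ^ m * (x / 2) ^ (2 * m) / m.factorial : ℝ)) : ℂ)
      * gamTerm (x / 2) m ν := by
  rw [besselJ]
  refine tsum_congr fun m => ?_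
  have hy : ((x / 2 : ℝ) : ℂ) ≠ 0 := by exact_mod_cast (half_pos hx).ne'
  rw [Complex.cpow_add _ _ hy, gamTerm, show (2 * (m : ℂ)) = ((2 * m : ℕ) : ℂ) by push_cast; ring,
    Complex.cpow_natCast, div_eq_mul_inv, mul_inv]
  push_cast
  ring

lemma hasDerivAt_gamTerm {y : ℝ} (hy : 0 < y) (m : ℕ) :
    HasDerivAt (gamTerm y m) (((Real.log y + Real.eulerMascheroniConstant - (harmonic m : ℝ))
      / m.factorial : ℝ) : ℂ) 0 := by
  have hy' : (y : ℂ) ≠ 0 := by exact_mod_cast hy.ne'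
  have h1 : HasDerivAt (fun ν : ℂ => (y : ℂ) ^ ν) _ 0 := (hasDerivAt_id (0 : ℂ)).const_cpow (Or.inl hy')
  have h2 : HasDerivAt (fun ν : ℂ => Complex.Gamma ((m : ℂ) + 1 + ν))
      (m.factorial * (-Real.eulerMascheroniConstant + harmonic m)) 0 := by
    have := Complex.hasDerivAt_Gamma_nat m
    have h := HasDerivAt.comp_const_add ((m : ℂ) + 1) (0 : ℂ) (by rwa [add_zero])
    exact h
  have hG : Complex.Gamma ((m : ℂ) + 1 + 0) = m.factorial := by
    rw [add_zero, Complex.Gamma_nat_eq_factorial]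
  have hf : (m.factorial : ℂ) ≠ 0 := by exact_mod_cast m.factorial_ne_zero
  refine (h1.mul (h2.inv (by rw [hG]; exact hf))).congr_deriv ?_
  simp only [id, Complex.cpow_zero, hG, Pi.inv_apply]
  push_cast
  rw [← Complex.ofReal_log hy.le]
  field_simp
  ring

/-- `J_ν(x)` is differentiable in the order at `ν = 0`, and its derivative is `(π/2) Y₀(x)`. -/
lemma hasDerivAt_besselJ {x : ℝ} (hx : 0 < x) :
    HasDerivAt (fun ν : ℂ => besselJ ν x) ((Yser x : ℝ) : ℂ) 0 := by
  obtain ⟨B, hB⟩ := gamTerm_bound (half_pos hx)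
  set F : ℕ → ℂ → ℂ := fun m ν => ((((-1) ^ m * (x / 2) ^ (2 * m) / m.factorial : ℝ)) : ℂ)
      * gamTerm (x / 2) m ν with hF
  have hJ : (fun ν : ℂ => besselJ ν x) = fun ν => ∑' m, F m ν := funext fun ν => besselJ_eq hx ν
  have hu : Summable fun m : ℕ => B * ((2 * (x / 2) ^ 2) ^ m / m.factorial) :=
    (Real.summable_pow_div_factorial _).mul_left B
  have hd : ∀ m, DifferentiableOn ℂ (F m) (Metric.ball 0 (1 / 2)) := fun m =>
    ((differentiable_gamTerm (half_pos hx) m).const_mul _).differentiableOn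
  have hb : ∀ m, ∀ w ∈ Metric.ball (0 : ℂ) (1 / 2),
      ‖F m w‖ ≤ B * ((2 * (x / 2) ^ 2) ^ m / m.factorial) := fun m w hw => by
    rw [hF]
    simp only [norm_mul, Complex.norm_real]
    have e : ‖(-1 : ℝ) ^ m * (x / 2) ^ (2 * m) / m.factorial‖ = (x / 2) ^ (2 * m) / m.factorial := by
      rw [norm_div, norm_mul, norm_pow, norm_neg, norm_one, one_pow, one_mul,
        Real.norm_of_nonneg (by positivity), Real.norm_of_nonneg (by positivity)]
    rw [e]
    calc _ ≤ (x / 2) ^ (2 * m) / m.factorial * (B * 2 ^ m) := by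
          gcongr; exact hB m w hw
      _ = _ := by rw [mul_pow, ← pow_mul]; ring
  have h0 : (0 : ℂ) ∈ Metric.ball (0 : ℂ) (1 / 2) := Metric.mem_ball_self (by norm_num)
  have hs := Complex.hasSum_deriv_of_summable_norm hu hd Metric.isOpen_ball hb h0
  have hdiff := (Complex.differentiableOn_tsum_of_summable_norm hu hd Metric.isOpen_ball hb).differentiableAt
    (Metric.isOpen_ball.mem_nhds h0)
  rw [hJ]
  refine hdiff.hasDerivAt.congr_deriv ?_
  refine hs.unique ?_
  have hY : HasSum (fun m : ℕ => (Real.log (x / 2) + Real.eulerMascheroniConstant) *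
      (coefJ m * ((x / 2) ^ 2) ^ m) - coefR m * ((x / 2) ^ 2) ^ m) (Yser x) :=
    (((factBound_coefJ.summable _).hasSum).mul_left _).sub (factBound_coefR.summable _).hasSum
  have hY' := Complex.hasSum_ofReal.2 hY
  refine hY'.congr_fun fun m => ?_
  rw [((hasDerivAt_gamTerm (half_pos hx) m).const_mul _).deriv, ← Complex.ofReal_mul]
  congr 1
  rw [coefR, coefJ, ← pow_mul]
  field_simp

/-- The limit defining `Y₀(x)`. -/
lemma tendsto_besselY {x : ℝ} (hx : 0 < x) :
    Tendsto (fun ν : ℂ => (besselJ ν x * Complex.cos ((Real.pi : ℂ) * ν) - besselJ (-ν) x)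
        / Complex.sin ((Real.pi : ℂ) * ν))
      (𝓝[{ν : ℂ | ∀ m : ℤ, ν ≠ (m : ℂ)}] 0) (𝓝 ((2 / Real.pi * Yser x : ℝ) : ℂ)) := by
  have hpi : (Real.pi : ℂ) ≠ 0 := by exact_mod_cast Real.pi_ne_zero
  have hJ := hasDerivAt_besselJ hx
  have hJm : HasDerivAt (fun ν : ℂ => besselJ (-ν) x) (-(Yser x : ℂ)) 0 := by
    have := HasDerivAt.comp (0 : ℂ) (h₂ := fun ν : ℂ => besselJ ν x) (h := fun ν : ℂ => -ν)
      (by simpa using hJ) (hasDerivAt_neg (0 : ℂ))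
    simpa [Function.comp_def] using this
  have hlin : HasDerivAt (fun ν : ℂ => (Real.pi : ℂ) * ν) (Real.pi : ℂ) 0 := by
    simpa using (hasDerivAt_id (0 : ℂ)).const_mul (Real.pi : ℂ)
  have hnum := ((hJ.mul hlin.ccos).sub hJm).tendsto_slope
  have hden := hlin.csin.tendsto_slope
  have hle : 𝓝[{ν : ℂ | ∀ m : ℤ, ν ≠ (m : ℂ)}] (0 : ℂ) ≤ 𝓝[≠] 0 :=
    nhdsWithin_mono _ fun ν hν => by simpa using hν 0
  have hdne : Complex.cos ((Real.pi : ℂ) * 0) * (Real.pi : ℂ) ≠ 0 := by simp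
  have h := ((hnum.div hden hdne).mono_left hle)
  convert h.congr' ?_ using 2
  · simp
    field_simp
    ring
  · filter_upwards [hle self_mem_nhdsWithin] with ν hν
    have hν : ν ≠ 0 := hν
    simp [slope_def_field]
    field_simp

end

/-! ### Laplace transforms of functions with an inverse square root singularity -/

section

open Filter Topology MeasureTheory Set

/-- Continuous functions on `(0, ∞)` with at most a `u^{-1/2}` singularity at `0` and polynomial
growth: a class on which the Laplace transform may be differentiated. -/
def LapOK (f : ℝ → ℂ) : Prop :=
  ContinuousOn f (Ioi 0) ∧ ∃ (K : ℝ) (N : ℕ), ∀ u, 0 < u → ‖f u‖ ≤ K * (1 + u) ^ N / √u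

/-- The Laplace transform. -/
noncomputable def lap (f : ℝ → ℂ) (x : ℝ) : ℂ := ∫ u in Ioi (0 : ℝ), ((Real.exp (-(x * u)) : ℝ) : ℂ) * f u

lemma poly_le_exp {y : ℝ} (hy : 0 < y) (N : ℕ) :
    ∃ C : ℝ, 0 ≤ C ∧ ∀ u : ℝ, 0 < u → (1 + u) ^ N ≤ C * Real.exp (y * u) := by
  refine ⟨N.factorial / y ^ N * Real.exp y, by positivity, fun u hu => ?_⟩
  have h := Real.pow_div_factorial_le_exp (y * (1 + u)) (by positivity) N
  rw [div_le_iff₀ (by positivity), mul_pow] at h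
  rw [mul_assoc, ← Real.exp_add, show y + y * u = y * (1 + u) by ring, div_mul_eq_mul_div,
    le_div_iff₀ (by positivity)]
  linarith

lemma integrableOn_exp_inv_sqrt {x : ℝ} (hx : 0 < x) :
    IntegrableOn (fun u : ℝ => Real.exp (-(x * u)) * (1 / √u)) (Ioi 0) := by
  have h := integrableOn_rpow_mul_exp_neg_mul_rpow (p := 1) (s := -(1 / 2)) (b := x)
    (by norm_num) one_pos hx
  refine h.congr_fun (fun u hu => ?_) measurableSet_Ioi
  have hu : 0 < u := hu
  simp only [Real.rpow_one, Real.sqrt_eq_rpow, Real.rpow_neg hu.le, one_div, neg_mul]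
  ring

lemma integral_exp_inv_sqrt {x : ℝ} (hx : 0 < x) :
    ∫ u in Ioi (0 : ℝ), Real.exp (-(x * u)) * (1 / √u) = √Real.pi / √x := by
  have h := Real.integral_rpow_mul_exp_neg_mul_Ioi (a := 1 / 2) (r := x) (by norm_num) hx
  rw [Real.Gamma_one_half_eq, ← Real.sqrt_eq_rpow] at h
  rw [show √Real.pi / √x = √(1 / x) * √Real.pi by
    rw [Real.sqrt_div zero_le_one, Real.sqrt_one]; ring, ← h]
  refine setIntegral_congr_fun measurableSet_Ioi fun u hu => ?_
  have hu : 0 < u := hu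
  rw [show (1 : ℝ) / 2 - 1 = -(1 / 2) by norm_num, Real.rpow_neg hu.le, ← Real.sqrt_eq_rpow]
  ring

namespace LapOK

variable {f : ℝ → ℂ}

lemma exp_bound (hf : LapOK f) {x y : ℝ} (hyx : y < x) :
    ∃ C : ℝ, ∀ u : ℝ, 0 < u → ‖((Real.exp (-(x * u)) : ℝ) : ℂ) * f u‖
      ≤ C * (Real.exp (-(y * u)) * (1 / √u)) := by
  obtain ⟨-, K, N, hK⟩ := hf
  obtain ⟨C, hC0, hC⟩ := poly_le_exp (sub_pos.2 hyx) N
  refine ⟨|K| * C, fun u hu => ?_⟩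
  have hs : 0 < √u := Real.sqrt_pos.2 hu
  rw [norm_mul, Complex.norm_real, Real.norm_of_nonneg (Real.exp_pos _).le]
  calc Real.exp (-(x * u)) * ‖f u‖ ≤ Real.exp (-(x * u)) * (|K| * (C * Real.exp ((x - y) * u)) / √u) := by
        gcongr
        refine (hK u hu).trans ?_
        gcongr
        · exact le_abs_self K
        · exact hC u hu
    _ = |K| * C * ((Real.exp (-(x * u)) * Real.exp ((x - y) * u)) * (1 / √u)) := by ring
    _ = _ := by rw [← Real.exp_add]; congr 4; ring

lemma aesm (hf : LapOK f) (x : ℝ) :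
    AEStronglyMeasurable (fun u : ℝ => ((Real.exp (-(x * u)) : ℝ) : ℂ) * f u)
      (volume.restrict (Ioi 0)) := by
  refine ContinuousOn.aestronglyMeasurable (ContinuousOn.mul ?_ hf.1) measurableSet_Ioi
  fun_prop

lemma integrable (hf : LapOK f) {x : ℝ} (hx : 0 < x) :
    IntegrableOn (fun u : ℝ => ((Real.exp (-(x * u)) : ℝ) : ℂ) * f u) (Ioi 0) := by
  obtain ⟨C, hC⟩ := hf.exp_bound (half_lt_self hx)
  refine Integrable.mono' ((integrableOn_exp_inv_sqrt (half_pos hx)).const_mul C) (hf.aesm x) ?_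
  exact (ae_restrict_iff' measurableSet_Ioi).2 (Eventually.of_forall fun u hu => hC u hu)

lemma mul {g : ℝ → ℂ} (hf : LapOK f) (hg : ContinuousOn g (Ioi 0))
    (hb : ∃ (K : ℝ) (N : ℕ), ∀ u, 0 < u → ‖g u‖ ≤ K * (1 + u) ^ N) : LapOK (fun u => g u * f u) := by
  obtain ⟨hc, K, N, hK⟩ := hf
  obtain ⟨K', N', hK'⟩ := hb
  refine ⟨hg.mul hc, K' * K, N' + N, fun u hu => ?_⟩
  rw [norm_mul]
  calc _ ≤ (K' * (1 + u) ^ N') * (K * (1 + u) ^ N / √u) :=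
        mul_le_mul (hK' u hu) (hK u hu) (norm_nonneg _) ((norm_nonneg _).trans (hK' u hu))
    _ = _ := by rw [pow_add]; ring

lemma id_mul (hf : LapOK f) : LapOK (fun u => (u : ℂ) * f u) :=
  hf.mul (by fun_prop) ⟨1, 1, fun u hu => by
    rw [Complex.norm_real, Real.norm_of_nonneg hu.le]; linarith⟩

lemma lap_hasDerivAt (hf : LapOK f) {x : ℝ} (hx : 0 < x) :
    HasDerivAt (lap f) (-lap (fun u => (u : ℂ) * f u) x) x := by
  have h := hasDerivAt_integral_of_dominated_loc_of_deriv_le (𝕜 := ℝ) (μ := volume.restrict (Ioi 0))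
    (F := fun x u => ((Real.exp (-(x * u)) : ℝ) : ℂ) * f u)
    (F' := fun x u => -(((Real.exp (-(x * u)) : ℝ) : ℂ) * ((u : ℂ) * f u)))
    (bound := fun u => ‖((Real.exp (-(x / 2 * u)) : ℝ) : ℂ) * ((u : ℂ) * f u)‖)
    (s := Ioi (x / 2)) (x₀ := x) (Ioi_mem_nhds (half_lt_self hx))
    (Eventually.of_forall fun y => hf.aesm y) (hf.integrable hx) (hf.id_mul.aesm x).neg
    ((ae_restrict_iff' measurableSet_Ioi).2 (Eventually.of_forall fun u hu y hy => by
      have hu : 0 < u := hu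
      have hy : x / 2 < y := hy
      rw [norm_neg, norm_mul, norm_mul _ ((u : ℂ) * f u), Complex.norm_real, Complex.norm_real,
        Real.norm_of_nonneg (Real.exp_pos _).le, Real.norm_of_nonneg (Real.exp_pos _).le]
      gcongr))
    (hf.id_mul.integrable (half_pos hx)).norm
    (Eventually.of_forall fun u y _ => by
      have h1 : HasDerivAt (fun y : ℝ => -(y * u)) (-u) y := by
        simpa using ((hasDerivAt_id y).mul_const u).fun_neg
      have := (h1.exp.ofReal_comp).mul_const (f u)
      refine this.congr_deriv ?_
      push_cast; ring)
  refine h.2.congr_deriv ?_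
  rw [integral_neg, lap]

lemma tendsto_atTop (hf : LapOK f) {x : ℝ} (hx : 0 < x) :
    Tendsto (fun u : ℝ => ((Real.exp (-(x * u)) : ℝ) : ℂ) * f u) atTop (𝓝 0) := by
  obtain ⟨C, hC⟩ := hf.exp_bound hx
  have h : Tendsto (fun u : ℝ => C * (Real.exp (-(0 * u)) * (1 / √u))) atTop (𝓝 0) := by
    have := (tendsto_inv_atTop_zero.comp Real.tendsto_sqrt_atTop).const_mul C
    simpa [Function.comp_def] using this
  refine squeeze_zero_norm' ?_ h
  filter_upwards [eventually_gt_atTop 0] with u hu using hC u hu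

/-- The Laplace transform of a derivative, for a function vanishing at `0`. -/
lemma lap_deriv (hf : LapOK f) {f' : ℝ → ℂ} (hf' : LapOK f')
    (hd : ∀ u, 0 < u → HasDerivAt f (f' u) u) (h0 : Tendsto f (𝓝[>] 0) (𝓝 0)) {x : ℝ} (hx : 0 < x) :
    lap f' x = x * lap f x := by
  have hE : ∀ u : ℝ, HasDerivAt (fun u : ℝ => ((Real.exp (-(x * u)) : ℝ) : ℂ))
      (-(x : ℂ) * ((Real.exp (-(x * u)) : ℝ) : ℂ)) u := fun u => by
    have h1 : HasDerivAt (fun u : ℝ => -(x * u)) (-x) u := by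
      simpa using ((hasDerivAt_id u).const_mul x).fun_neg
    refine h1.exp.ofReal_comp.congr_deriv ?_
    push_cast; ring
  have hc : Tendsto (fun u : ℝ => ((Real.exp (-(x * u)) : ℝ) : ℂ)) (𝓝[>] 0) (𝓝 1) := by
    have : Continuous fun u : ℝ => ((Real.exp (-(x * u)) : ℝ) : ℂ) := by fun_prop
    have := (this.tendsto 0).mono_left (nhdsWithin_le_nhds (s := Ioi 0))
    simpa using this
  have h := integral_Ioi_mul_deriv_eq_deriv_mul (a := (0 : ℝ)) (a' := (0 : ℂ)) (b' := (0 : ℂ))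
    (u := fun u : ℝ => ((Real.exp (-(x * u)) : ℝ) : ℂ)) (v := f) (v' := f')
    (fun u _ => hE u) (fun u hu => hd u hu) (hf'.integrable hx)
    (by
      refine Integrable.congr ((hf.integrable hx).const_mul (-(x : ℂ)))
        (Eventually.of_forall fun u => ?_)
      simp only [Pi.mul_apply]; ring)
    (by have := hc.mul h0; rwa [mul_zero] at this) (hf.tendsto_atTop hx)
  rw [lap, h, lap, ← integral_const_mul, sub_zero, zero_sub, ← integral_neg]
  refine integral_congr_ae (Eventually.of_forall fun u => ?_)
  simp only; ring

end LapOK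

/-- The Laplace transform is bounded by that of a pointwise bound. -/
lemma norm_lap_le {f : ℝ → ℂ} {b : ℝ → ℝ} {x : ℝ}
    (hb : IntegrableOn (fun u : ℝ => Real.exp (-(x * u)) * b u) (Ioi 0))
    (h : ∀ u, 0 < u → ‖f u‖ ≤ b u) :
    ‖lap f x‖ ≤ ∫ u in Ioi (0 : ℝ), Real.exp (-(x * u)) * b u := by
  refine norm_integral_le_of_norm_le hb ((ae_restrict_iff' measurableSet_Ioi).2
    (Eventually.of_forall fun u hu => ?_))
  rw [norm_mul, Complex.norm_real, Real.norm_of_nonneg (Real.exp_pos _).le]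
  exact mul_le_mul_of_nonneg_left (h u hu) (Real.exp_pos _).le

end

/-! ### The Hankel integral and the Bessel equation -/

section

open Filter Topology MeasureTheory Set
open Complex (I)

/-- The branch of `√((1+iu)^2 - 1) = √(2iu - u^2)` in the open first quadrant, for `u > 0`. -/
noncomputable def rho (u : ℝ) : ℂ := (2 * I * u - (u : ℂ) ^ 2) ^ (((2 : ℕ) : ℂ)⁻¹)

lemma rho_sq (u : ℝ) : rho u ^ 2 = 2 * I * u - (u : ℂ) ^ 2 :=
  Complex.cpow_nat_inv_pow _ two_ne_zero

lemma rho_arg_re (u : ℝ) : (2 * I * u - (u : ℂ) ^ 2).re = -u ^ 2 := by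
  simp [pow_two]

lemma rho_arg_im (u : ℝ) : (2 * I * u - (u : ℂ) ^ 2).im = 2 * u := by
  simp [pow_two]

lemma rho_re_im (u : ℝ) : (rho u).re * (rho u).im = u ∧ (rho u).re ^ 2 - (rho u).im ^ 2 = -u ^ 2 := by
  have h1 := congrArg Complex.re (rho_sq u)
  have h2 := congrArg Complex.im (rho_sq u)
  rw [rho_arg_re, pow_two, Complex.mul_re] at h1
  rw [rho_arg_im, pow_two, Complex.mul_im] at h2
  constructor <;> linarith

lemma rho_re_nonneg {u : ℝ} (hu : 0 < u) : 0 ≤ (rho u).re := by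
  have hne : (2 * I * u - (u : ℂ) ^ 2) ≠ 0 := by
    intro h
    have := congrArg Complex.im h
    rw [rho_arg_im] at this
    simp at this; linarith
  rw [rho, Complex.cpow_def_of_ne_zero hne, Complex.exp_re]
  refine mul_nonneg (Real.exp_pos _).le (Real.cos_nonneg_of_mem_Icc ?_)
  have e : (Complex.log (2 * I * u - (u : ℂ) ^ 2) * (((2 : ℕ) : ℂ)⁻¹)).im
      = Complex.arg (2 * I * u - (u : ℂ) ^ 2) / 2 := by
    rw [show (((2 : ℕ) : ℂ)⁻¹) = ((1 / 2 : ℝ) : ℂ) by push_cast; ring, Complex.im_mul_ofReal,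
      Complex.log_im]; ring
  rw [e]
  have h1 := Complex.neg_pi_lt_arg (2 * I * u - (u : ℂ) ^ 2)
  have h2 := Complex.arg_le_pi (2 * I * u - (u : ℂ) ^ 2)
  constructor <;> linarith

lemma rho_re_pos {u : ℝ} (hu : 0 < u) : 0 < (rho u).re := by
  refine (rho_re_nonneg hu).lt_of_ne fun h => ?_
  have := (rho_re_im u).1
  rw [← h] at this; linarith

lemma rho_im_pos {u : ℝ} (hu : 0 < u) : 0 < (rho u).im :=
  pos_of_mul_pos_right (hu.trans_eq (rho_re_im u).1.symm) (rho_re_nonneg hu)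

lemma rho_im_ge {u : ℝ} (hu : 0 < u) : u ≤ (rho u).im := by
  have := (rho_re_im u).2
  nlinarith [rho_im_pos hu, sq_nonneg (rho u).re]

lemma rho_ne_zero {u : ℝ} (hu : 0 < u) : rho u ≠ 0 := fun h => by
  have := rho_im_pos hu
  rw [h] at this; simp at this

lemma rho_norm_sq (u : ℝ) : ‖rho u‖ ^ 2 = ‖2 * I * u - (u : ℂ) ^ 2‖ := by
  rw [← norm_pow, rho_sq]

lemma rho_norm_ge_sqrt (u : ℝ) : √(2 * u) ≤ ‖rho u‖ := by
  refine Real.sqrt_le_iff.2 ⟨norm_nonneg _, ?_⟩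
  rw [rho_norm_sq]
  have := Complex.abs_im_le_norm (2 * I * u - (u : ℂ) ^ 2)
  rw [rho_arg_im] at this
  exact (le_abs_self _).trans this

lemma rho_norm_ge {u : ℝ} (hu : 0 < u) : u ≤ ‖rho u‖ :=
  (rho_im_ge hu).trans ((le_abs_self _).trans (Complex.abs_im_le_norm _))

lemma rho_norm_le_sq {u : ℝ} (hu : 0 < u) : ‖rho u‖ ^ 2 ≤ 2 * u + u ^ 2 := by
  rw [rho_norm_sq]
  refine (norm_sub_le _ _).trans ?_
  simp [abs_of_pos hu]

lemma rho_norm_le {u : ℝ} (hu : 0 < u) : ‖rho u‖ ≤ 1 + u := by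
  have := rho_norm_le_sq hu
  nlinarith [norm_nonneg (rho u)]

lemma rho_hasDerivAt {u : ℝ} (hu : 0 < u) : HasDerivAt rho ((I - u) * (1 / rho u)) u := by
  have h1 : HasDerivAt (fun w : ℂ => 2 * I * w - w ^ 2) (2 * I - 2 * (u : ℂ)) (u : ℂ) := by
    refine (((hasDerivAt_id (u : ℂ)).const_mul (2 * I)).sub ((hasDerivAt_id (u : ℂ)).pow 2)).congr_deriv ?_
    simp
  have hs : 2 * I * (u : ℂ) - (u : ℂ) ^ 2 ∈ Complex.slitPlane := by
    refine Complex.mem_slitPlane_iff.2 (Or.inr ?_)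
    rw [rho_arg_im]; linarith
  have h := (h1.cpow_const (c := (((2 : ℕ) : ℂ)⁻¹)) hs).comp_ofReal
  refine h.congr_deriv ?_
  rw [Complex.cpow_sub _ _ (Complex.slitPlane_ne_zero hs), Complex.cpow_one]
  change _ * (rho u / _) * _ = _
  rw [← rho_sq]
  have := rho_ne_zero hu
  push_cast
  field_simp

lemma rho_continuousOn : ContinuousOn rho (Ioi 0) := fun _ hu =>
  (rho_hasDerivAt hu).continuousAt.continuousWithinAt

lemma lapOK_inv_rho : LapOK (fun u => 1 / rho u) := by
  refine ⟨continuousOn_const.div rho_continuousOn fun u hu => rho_ne_zero hu, 1, 0, fun u hu => ?_⟩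
  rw [norm_div, norm_one, pow_zero, one_mul]
  exact one_div_le_one_div_of_le (Real.sqrt_pos.2 hu)
    ((Real.sqrt_le_sqrt (by linarith)).trans (rho_norm_ge_sqrt u))

lemma lapOK_of_bounded {f : ℝ → ℂ} (hc : ContinuousOn f (Ioi 0))
    (hb : ∃ (K : ℝ) (N : ℕ), ∀ u, 0 < u → ‖f u‖ ≤ K * (1 + u) ^ N) : LapOK f := by
  obtain ⟨K, N, hb⟩ := hb
  refine ⟨hc, K, N + 1, fun u hu => ?_⟩
  have hs := Real.sqrt_pos.2 hu
  rw [le_div_iff₀ hs, pow_succ, ← mul_assoc]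
  refine mul_le_mul (hb u hu) ?_ hs.le ((norm_nonneg _).trans (hb u hu))
  nlinarith [Real.sq_sqrt hu.le, sq_nonneg (√u - 1)]

lemma lapOK_rho : LapOK rho :=
  lapOK_of_bounded rho_continuousOn ⟨1, 1, fun u hu => by simpa using rho_norm_le hu⟩

lemma lapOK_deriv_rho : LapOK (fun u : ℝ => (I - u) * (1 / rho u)) :=
  lapOK_inv_rho.mul (by fun_prop) ⟨1, 1, fun u hu => by
    refine (norm_sub_le _ _).trans ?_
    simp [abs_of_pos hu]⟩

lemma rho_tendsto_zero : Tendsto rho (𝓝[>] 0) (𝓝 0) := by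
  have hc : Tendsto (fun u : ℝ => √(2 * u + u ^ 2)) (𝓝[>] 0) (𝓝 0) := by
    have : Continuous fun u : ℝ => √(2 * u + u ^ 2) := by fun_prop
    simpa using (this.tendsto 0).mono_left (nhdsWithin_le_nhds (s := Ioi 0))
  refine squeeze_zero_norm' ?_ hc
  filter_upwards [self_mem_nhdsWithin] with u hu
  exact Real.le_sqrt_of_sq_le (rho_norm_le_sq hu)

/-- `Φ(x) = ∫_0^∞ e^{-xu} / ρ(u) du`, so that `e^{ix} Φ(x) = (π/2) H₀^{(1)}(x)`. -/
noncomputable def hankelPhi : ℝ → ℂ := lap (fun u => 1 / rho u)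

/-- `Ψ(x) = ∫_0^∞ e^{-xu} ρ'(u) du`. -/
noncomputable def hankelPsi : ℝ → ℂ := lap (fun u : ℝ => (I - u) * (1 / rho u))

lemma hankelPsi_eq {x : ℝ} (hx : 0 < x) : hankelPsi x = x * lap rho x :=
  lapOK_rho.lap_deriv lapOK_deriv_rho (fun _ hu => rho_hasDerivAt hu) rho_tendsto_zero hx

lemma lap_add {f g : ℝ → ℂ} (hf : LapOK f) (hg : LapOK g) {x : ℝ} (hx : 0 < x) :
    lap (fun u => f u + g u) x = lap f x + lap g x := by
  rw [lap, lap, lap, ← integral_add (hf.integrable hx) (hg.integrable hx)]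
  congr 1; ext u; ring

lemma lap_const_mul (f : ℝ → ℂ) (c : ℂ) (x : ℝ) : lap (fun u => c * f u) x = c * lap f x := by
  rw [lap, lap, ← integral_const_mul]
  congr 1; ext u; ring

lemma LapOK.const_mul {f : ℝ → ℂ} (hf : LapOK f) (c : ℂ) : LapOK (fun u => c * f u) :=
  hf.mul continuousOn_const ⟨‖c‖, 0, fun u _ => by simp⟩

lemma lap_congr {f g : ℝ → ℂ} (h : ∀ u, 0 < u → f u = g u) (x : ℝ) : lap f x = lap g x := by
  rw [lap, lap]
  refine setIntegral_congr_fun measurableSet_Ioi fun u hu => ?_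
  simp only [h u hu]

lemma hasDerivAt_exp_I (x : ℝ) : HasDerivAt (fun x : ℝ => Complex.exp (I * x)) (I * Complex.exp (I * x)) x := by
  have : HasDerivAt (fun x : ℝ => I * (x : ℂ)) I x := by
    simpa using (Complex.ofRealCLM.hasDerivAt (x := x)).const_mul I
  refine this.cexp.congr_deriv ?_
  ring

lemma hasDerivAt_hankel {x : ℝ} (hx : 0 < x) :
    HasDerivAt (fun x : ℝ => Complex.exp (I * x) * hankelPhi x)
      (Complex.exp (I * x) * hankelPsi x) x := by
  refine ((hasDerivAt_exp_I x).mul (lapOK_inv_rho.lap_hasDerivAt hx)).congr_deriv ?_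
  have e : hankelPsi x = I * hankelPhi x + (-1) * lap (fun u => (u : ℂ) * (1 / rho u)) x := by
    rw [hankelPsi, hankelPhi, ← lap_const_mul, ← lap_const_mul,
      ← lap_add (lapOK_inv_rho.const_mul I) (lapOK_inv_rho.id_mul.const_mul (-1)) hx]
    congr 1; ext u; ring
  rw [e]
  simp only [hankelPhi]
  ring

lemma hasDerivAt_hankelP {x : ℝ} (hx : 0 < x) :
    HasDerivAt (fun x : ℝ => Complex.exp (I * x) * (x * hankelPsi x))
      (-x * (Complex.exp (I * x) * hankelPhi x)) x := by
  have hid : HasDerivAt (fun x : ℝ => (x : ℂ)) 1 x := Complex.ofRealCLM.hasDerivAt (x := x)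
  refine ((hasDerivAt_exp_I x).mul (hid.mul (lapOK_deriv_rho.lap_hasDerivAt hx))).congr_deriv ?_
  -- `(i - u)^2 = -1 - ρ(u)^2`
  have e : I * hankelPsi x + (-1) * lap (fun u => (u : ℂ) * ((I - u) * (1 / rho u))) x
      = (-1) * hankelPhi x + (-1) * lap rho x := by
    rw [hankelPsi, hankelPhi, ← lap_const_mul, ← lap_const_mul, ← lap_const_mul, ← lap_const_mul,
      ← lap_add (lapOK_deriv_rho.const_mul I) (lapOK_deriv_rho.id_mul.const_mul (-1)) hx,
      ← lap_add (lapOK_inv_rho.const_mul (-1)) (lapOK_rho.const_mul (-1)) hx]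
    refine lap_congr (fun u hu => ?_) x
    have h := rho_sq u
    have h0 := rho_ne_zero hu
    field_simp
    rw [h]
    linear_combination Complex.I_sq
  have e2 := hankelPsi_eq hx
  simp only [Pi.mul_apply]
  change I * Complex.exp (I * x) * (x * hankelPsi x)
    + Complex.exp (I * x) * (1 * hankelPsi x + x * -lap (fun u => (u : ℂ) * ((I - u) * (1 / rho u))) x)
    = -x * (Complex.exp (I * x) * hankelPhi x)
  linear_combination Complex.exp (I * x) * x * e + Complex.exp (I * x) * e2

end

/-! ### Identification of the Hankel integral with the classical series -/

section

open Filter Topology MeasureTheory Set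
open Complex (I)

lemma integral_exp_neg_mul {x : ℝ} (hx : 0 < x) :
    IntegrableOn (fun u : ℝ => Real.exp (-(x * u))) (Ioi 0) ∧
      ∫ u in Ioi (0 : ℝ), Real.exp (-(x * u)) = 1 / x := by
  constructor
  · simpa [neg_mul] using integrableOn_exp_mul_Ioi (a := -x) (by linarith) 0
  · have h := Real.integral_rpow_mul_exp_neg_mul_Ioi (a := 1) (r := x) one_pos hx
    simpa using h

lemma lap_id {x : ℝ} (hx : 0 < x) : lap (fun u => (u : ℂ)) x = 1 / (x : ℂ) ^ 2 := by
  have h := Real.integral_rpow_mul_exp_neg_mul_Ioi (a := 2) (r := x) two_pos hx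
  rw [Real.Gamma_two, mul_one, Real.rpow_two] at h
  rw [lap]
  have e : ∫ u in Ioi (0 : ℝ), ((Real.exp (-(x * u)) : ℝ) : ℂ) * (u : ℂ)
      = ((∫ u in Ioi (0 : ℝ), u ^ ((2 : ℝ) - 1) * Real.exp (-(x * u)) : ℝ) : ℂ) := by
    rw [← integral_complex_ofReal]
    refine integral_congr_ae (Eventually.of_forall fun u => ?_)
    norm_num
    ring
  rw [e, h]
  push_cast
  rw [one_div, one_div, inv_pow]

lemma lapOK_id : LapOK (fun u => (u : ℂ)) :=
  lapOK_of_bounded (by fun_prop) ⟨1, 1, fun u hu => by simp [abs_of_pos hu]⟩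

/-- `ρ(u) = iu + O(1)`. -/
lemma rho_sub_bound {u : ℝ} (hu : 0 < u) : ‖rho u + (-I) * u‖ ≤ 2 := by
  have h : (rho u + (-I) * u) * (rho u + I * u) = 2 * I * u := by
    linear_combination rho_sq u - (u : ℂ) ^ 2 * Complex.I_sq
  have h1 : u ≤ ‖rho u + I * u‖ := by
    refine le_trans ?_ ((le_abs_self _).trans (Complex.abs_im_le_norm _))
    have := rho_im_pos hu
    simp; linarith
  have h2 := congrArg norm h
  rw [norm_mul] at h2
  have h3 : ‖2 * I * (u : ℂ)‖ = 2 * u := by simp [abs_of_pos hu]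
  rw [h3] at h2
  by_contra hcon
  push Not at hcon
  nlinarith [norm_nonneg (rho u + (-I) * u)]

lemma tendsto_x_hankelPsi : Tendsto (fun x : ℝ => (x : ℂ) * hankelPsi x) (𝓝[>] 0) (𝓝 I) := by
  have hb : ∀ x : ℝ, 0 < x → ‖(x : ℂ) * hankelPsi x - I‖ ≤ 2 * x := fun x hx => by
    have hx' : (x : ℂ) ≠ 0 := by exact_mod_cast hx.ne'
    have e : (x : ℂ) * hankelPsi x - I = (x : ℂ) ^ 2 * lap (fun u => rho u + (-I) * u) x := by
      rw [lap_add lapOK_rho (lapOK_id.const_mul (-I)) hx, lap_const_mul, lap_id hx, hankelPsi_eq hx]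
      field_simp
      ring
    have h := norm_lap_le (f := fun u => rho u + (-I) * u) (b := fun _ => 2) (x := x)
      ((integral_exp_neg_mul hx).1.mul_const 2) (fun u hu => rho_sub_bound hu)
    rw [integral_mul_const, (integral_exp_neg_mul hx).2] at h
    rw [e, norm_mul, norm_pow, Complex.norm_real, Real.norm_of_nonneg hx.le]
    calc x ^ 2 * _ ≤ x ^ 2 * (1 / x * 2) := by gcongr
      _ = 2 * x := by field_simp
  rw [tendsto_iff_norm_sub_tendsto_zero]
  have hc : Tendsto (fun x : ℝ => 2 * x) (𝓝[>] 0) (𝓝 0) := by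
    have : Continuous fun x : ℝ => 2 * x := by fun_prop
    simpa using (this.tendsto 0).mono_left (nhdsWithin_le_nhds (s := Ioi 0))
  refine squeeze_zero' (Eventually.of_forall fun _ => norm_nonneg _) ?_ hc
  filter_upwards [self_mem_nhdsWithin] with x hx using hb x hx

lemma abs_log_le {u : ℝ} (hu : 0 < u) : |Real.log u| ≤ 2 * (1 + u) ^ 2 / √u := by
  have hs := Real.sqrt_pos.2 hu
  have hsq := Real.sq_sqrt hu.le
  rw [le_div_iff₀ hs]
  rcases abs_cases (Real.log u) with ⟨h, -⟩ | ⟨h, -⟩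
  · rw [h]
    have h1 := Real.log_le_self hu.le
    nlinarith [sq_nonneg (√u - 1)]
  · rw [h]
    have h1 := Real.log_le_self (inv_pos.2 hs).le
    rw [Real.log_inv, Real.log_sqrt hu.le] at h1
    have h2 : (√u)⁻¹ * √u = 1 := inv_mul_cancel₀ hs.ne'
    nlinarith

lemma lapOK_log : LapOK (fun u => ((Real.log u : ℝ) : ℂ)) := by
  refine ⟨?_, 2, 2, fun u hu => ?_⟩
  · exact Complex.continuous_ofReal.comp_continuousOn
      (Real.continuousOn_log.mono fun u hu => (ne_of_gt hu : u ≠ 0))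
  · rw [Complex.norm_real]; exact abs_log_le hu

/-- `∫_0^∞ e^{-t} log t dt = -γ`. -/
lemma lap_log_one : lap (fun u => ((Real.log u : ℝ) : ℂ)) 1 = -Real.eulerMascheroniConstant := by
  have h1 := Complex.hasDerivAt_GammaIntegral (s := 1) (by simp)
  have h2 : HasDerivAt Complex.GammaIntegral (-(Real.eulerMascheroniConstant : ℂ)) 1 := by
    refine Complex.hasDerivAt_Gamma_one.congr_of_eventuallyEq ?_
    have : ∀ᶠ s : ℂ in 𝓝 1, 0 < s.re :=
      (isOpen_lt continuous_const Complex.continuous_re).mem_nhds (by simp)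
    filter_upwards [this] with s hs
    rw [Complex.Gamma_eq_integral hs]
  rw [← h1.unique h2, lap]
  refine integral_congr_ae (Eventually.of_forall fun u => ?_)
  simp
  ring

lemma lap_log {x : ℝ} (hx : 0 < x) :
    x * lap (fun u => ((Real.log u : ℝ) : ℂ)) x = -Real.eulerMascheroniConstant - Real.log x := by
  have hx' : (x : ℂ) ≠ 0 := by exact_mod_cast hx.ne'
  have h := integral_comp_mul_left_Ioi
    (fun t : ℝ => ((Real.exp (-(1 * t)) : ℝ) : ℂ) * ((Real.log t : ℝ) : ℂ)) 0 hx
  rw [mul_zero] at h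
  change _ = x⁻¹ • lap (fun u => ((Real.log u : ℝ) : ℂ)) 1 at h
  have e : ∫ u in Ioi (0 : ℝ), ((Real.exp (-(1 * (x * u))) : ℝ) : ℂ) * ((Real.log (x * u) : ℝ) : ℂ)
      = lap (fun u => ((Real.log u : ℝ) : ℂ) + (Real.log x : ℂ) * 1) x := by
    rw [lap]
    refine setIntegral_congr_fun measurableSet_Ioi fun u hu => ?_
    have hu : 0 < u := hu
    simp only [one_mul, Real.log_mul hx.ne' hu.ne']
    push_cast; ring
  have h1 : LapOK (fun _ => (1 : ℂ)) := lapOK_of_bounded continuousOn_const ⟨1, 0, fun u _ => by simp⟩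
  have h2 : lap (fun _ => (1 : ℂ)) x = 1 / x := by
    rw [lap]
    simp only [mul_one]
    rw [integral_complex_ofReal, (integral_exp_neg_mul hx).2]; push_cast; rfl
  rw [e, lap_add lapOK_log (h1.const_mul _) hx, lap_const_mul, h2, lap_log_one,
    Complex.real_smul] at h
  push_cast at h
  field_simp at h
  linear_combination h

lemma im_lap {f : ℝ → ℂ} (hf : LapOK f) {x : ℝ} (hx : 0 < x) :
    (lap f x).im = ∫ u in Ioi (0 : ℝ), Real.exp (-(x * u)) * (f u).im := by
  have := Complex.imCLM.integral_comp_comm (hf.integrable hx)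
  rw [lap]
  simp only [Complex.imCLM_apply, Complex.im_ofReal_mul] at this
  exact this.symm

/-- `1 + iu + ρ(u) = exp(arccosh(1+iu))`. -/
noncomputable def wrho (u : ℝ) : ℂ := 1 + I * u + rho u

lemma wrho_re {u : ℝ} (hu : 0 < u) : 1 ≤ (wrho u).re := by
  have := rho_re_pos hu
  simp [wrho]; linarith

lemma wrho_norm_ge_one {u : ℝ} (hu : 0 < u) : 1 ≤ ‖wrho u‖ :=
  (wrho_re hu).trans (Complex.re_le_norm _)

lemma wrho_norm_ge {u : ℝ} (hu : 0 < u) : 2 * u ≤ ‖wrho u‖ := by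
  refine le_trans ?_ ((le_abs_self _).trans (Complex.abs_im_le_norm _))
  have := rho_im_ge hu
  simp [wrho]; linarith

lemma wrho_norm_le {u : ℝ} (hu : 0 < u) : ‖wrho u‖ ≤ 2 * (1 + u) := by
  have h := rho_norm_le hu
  have h2 := norm_add_le (1 + I * (u : ℂ)) (rho u)
  have h3 := norm_add_le (1 : ℂ) (I * (u : ℂ))
  have h4 : ‖I * (u : ℂ)‖ = u := by simp [abs_of_pos hu]
  rw [norm_one, h4] at h3
  rw [wrho]; linarith

lemma wrho_slit {u : ℝ} (hu : 0 < u) : wrho u ∈ Complex.slitPlane :=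
  Complex.mem_slitPlane_iff.2 (Or.inl (by linarith [wrho_re hu]))

/-- The antiderivative of `1/ρ` that vanishes at `0`. -/
noncomputable def primRho (u : ℝ) : ℂ := -I * Complex.log (wrho u)

lemma primRho_hasDerivAt {u : ℝ} (hu : 0 < u) : HasDerivAt primRho (1 / rho u) u := by
  have h1 : HasDerivAt wrho (I + (I - u) * (1 / rho u)) u := by
    have hid : HasDerivAt (fun x : ℝ => (x : ℂ)) 1 u := Complex.ofRealCLM.hasDerivAt (x := u)
    refine (((hid.const_mul I).const_add 1).add (rho_hasDerivAt hu)).congr_deriv ?_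
    ring
  refine ((h1.clog_real (wrho_slit hu)).const_mul (-I)).congr_deriv ?_
  have h0 := rho_ne_zero hu
  have h2 := Complex.slitPlane_ne_zero (wrho_slit hu)
  field_simp
  rw [wrho]
  linear_combination (-rho u - 1) * Complex.I_sq

lemma lapOK_primRho : LapOK primRho := by
  refine lapOK_of_bounded (fun u hu => (primRho_hasDerivAt hu).continuousAt.continuousWithinAt)
    ⟨6, 1, fun u hu => ?_⟩
  have h1 := Complex.norm_le_abs_re_add_abs_im (Complex.log (wrho u))
  rw [Complex.log_re, Complex.log_im] at h1
  have h2 := Complex.abs_arg_le_pi (wrho u)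
  have h3 : 0 ≤ Real.log ‖wrho u‖ := Real.log_nonneg (wrho_norm_ge_one hu)
  have h4 := Real.log_le_sub_one_of_pos (by linarith [wrho_norm_ge_one hu] : 0 < ‖wrho u‖)
  rw [abs_of_nonneg h3] at h1
  have h5 := wrho_norm_le hu
  have h6 := Real.pi_lt_four
  rw [primRho, norm_mul, norm_neg, Complex.norm_I, one_mul]
  linarith

lemma primRho_tendsto_zero : Tendsto primRho (𝓝[>] 0) (𝓝 0) := by
  have h1 : Tendsto wrho (𝓝[>] 0) (𝓝 1) := by
    have : Continuous fun u : ℝ => 1 + I * (u : ℂ) := by fun_prop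
    have := ((this.tendsto 0).mono_left (nhdsWithin_le_nhds (s := Ioi 0))).add rho_tendsto_zero
    simp only [Complex.ofReal_zero, mul_zero, add_zero] at this
    exact this
  have := (h1.clog Complex.one_mem_slitPlane).const_mul (-I)
  rw [Complex.log_one, mul_zero] at this
  exact this

lemma primRho_im (u : ℝ) : (primRho u).im = -Real.log ‖wrho u‖ := by
  rw [primRho, ← Complex.log_re]; simp

lemma hankelPhi_eq {x : ℝ} (hx : 0 < x) : hankelPhi x = x * lap primRho x :=
  lapOK_primRho.lap_deriv lapOK_inv_rho (fun _ hu => primRho_hasDerivAt hu) primRho_tendsto_zero hx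

lemma log_ratio_bound {u : ℝ} (hu : 0 < u) :
    |Real.log ‖wrho u‖ - Real.log (2 * u)| ≤ 2 * (1 / √u) := by
  have hs := Real.sqrt_pos.2 hu
  have h1 := Real.log_le_log (by positivity) (wrho_norm_ge hu)
  have h2 := Real.log_le_log (by linarith [wrho_norm_ge_one hu]) (wrho_norm_le hu)
  rw [abs_of_nonneg (by linarith)]
  have h3 : Real.log (2 * (1 + u)) - Real.log (2 * u) ≤ 2 * (1 / √u) := by
    rw [← Real.log_div (by positivity) (by positivity)]
    have e : 2 * (1 + u) / (2 * u) ≤ (1 + 1 / √u) ^ 2 := by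
      have hu2 : u = √u ^ 2 := (Real.sq_sqrt hu.le).symm
      generalize √u = s at *
      rw [hu2]
      have : (1 + 1 / s) ^ 2 - 2 * (1 + s ^ 2) / (2 * s ^ 2) = 2 / s := by field_simp; ring
      have h2s : 0 < 2 / s := by positivity
      linarith
    refine (Real.log_le_log (by positivity) e).trans ?_
    rw [Real.log_pow]
    have := Real.log_le_sub_one_of_pos (by positivity : 0 < 1 + 1 / √u)
    push_cast
    linarith
  linarith

/-- `Im Φ(x) = log (x/2) + γ + O(√x)`. -/
lemma hankelPhi_im_bound {x : ℝ} (hx : 0 < x) :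
    |(hankelPhi x).im - (Real.log (x / 2) + Real.eulerMascheroniConstant)|
      ≤ 2 * √Real.pi * √x := by
  have hI1 : IntegrableOn (fun u => Real.exp (-(x * u)) * (primRho u).im) (Ioi 0) := by
    have := (lapOK_primRho.integrable hx).im
    simp only [RCLike.im_to_complex, Complex.im_ofReal_mul] at this
    exact this
  have hI2 : IntegrableOn (fun u => Real.exp (-(x * u)) * Real.log u) (Ioi 0) := by
    have := (lapOK_log.integrable hx).re
    simp only [RCLike.re_to_complex, Complex.re_ofReal_mul, Complex.ofReal_re] at this
    exact this
  have hI3 := (integral_exp_neg_mul hx).1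
  have hlog : x * ∫ u in Ioi (0 : ℝ), Real.exp (-(x * u)) * Real.log u
      = -Real.eulerMascheroniConstant - Real.log x := by
    have h := lap_log hx
    rw [lap] at h
    have e : ∫ u in Ioi (0 : ℝ), ((Real.exp (-(x * u)) : ℝ) : ℂ) * ((Real.log u : ℝ) : ℂ)
        = ((∫ u in Ioi (0 : ℝ), Real.exp (-(x * u)) * Real.log u : ℝ) : ℂ) := by
      rw [← integral_complex_ofReal]
      simp only [Complex.ofReal_mul]
    rw [e] at h
    exact_mod_cast h
  have hsum : (hankelPhi x).im - (Real.log (x / 2) + Real.eulerMascheroniConstant)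
      = x * ∫ u in Ioi (0 : ℝ), Real.exp (-(x * u)) * ((primRho u).im + Real.log (2 * u)) := by
    have e : ∫ u in Ioi (0 : ℝ), Real.exp (-(x * u)) * ((primRho u).im + Real.log (2 * u))
        = ∫ u in Ioi (0 : ℝ), ((Real.exp (-(x * u)) * (primRho u).im
          + Real.exp (-(x * u)) * Real.log u) + Real.exp (-(x * u)) * Real.log 2) := by
      refine setIntegral_congr_fun measurableSet_Ioi fun u hu => ?_
      have hu : 0 < u := hu
      simp only [Real.log_mul two_ne_zero hu.ne']
      ring
    rw [e, integral_add (f := fun u => Real.exp (-(x * u)) * (primRho u).im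
        + Real.exp (-(x * u)) * Real.log u) (hI1.add hI2) (hI3.mul_const _), integral_add hI1 hI2, integral_mul_const,
      (integral_exp_neg_mul hx).2, ← im_lap lapOK_primRho hx, hankelPhi_eq hx, Complex.im_ofReal_mul,
      Real.log_div hx.ne' two_ne_zero, mul_add, mul_add, hlog]
    field_simp
    ring
  have hbd : ‖∫ u in Ioi (0 : ℝ), Real.exp (-(x * u)) * ((primRho u).im + Real.log (2 * u))‖
      ≤ ∫ u in Ioi (0 : ℝ), 2 * (Real.exp (-(x * u)) * (1 / √u)) := by
    refine norm_integral_le_of_norm_le ((integrableOn_exp_inv_sqrt hx).const_mul 2) ?_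
    filter_upwards [ae_restrict_mem measurableSet_Ioi] with u hu
    rw [norm_mul, Real.norm_of_nonneg (Real.exp_pos _).le, primRho_im, Real.norm_eq_abs,
      neg_add_eq_sub, abs_sub_comm, mul_left_comm]
    gcongr
    exact log_ratio_bound hu
  rw [integral_const_mul, integral_exp_inv_sqrt hx] at hbd
  rw [hsum, abs_mul, abs_of_pos hx]
  calc x * _ ≤ x * (2 * (√Real.pi / √x)) := by gcongr; exact hbd
    _ = 2 * √Real.pi * √x := by
      have hs := Real.sqrt_pos.2 hx
      field_simp
      rw [Real.sq_sqrt hx.le]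

lemma norm_hankelPhi_le {x : ℝ} (hx : 0 < x) : ‖hankelPhi x‖ ≤ √Real.pi / √x := by
  have h := norm_lap_le (f := fun u => 1 / rho u) (b := fun u => 1 / √u) (x := x)
    (integrableOn_exp_inv_sqrt hx) (fun u hu => by
      have hs := Real.sqrt_pos.2 hu
      rw [norm_div, norm_one]
      refine one_div_le_one_div_of_le hs ((Real.sqrt_le_sqrt ?_).trans (rho_norm_ge_sqrt u))
      linarith)
  rwa [integral_exp_inv_sqrt hx] at h

/-- The difference between the Hankel-integral and the power-series form of `(π/2) Y₀`. -/
noncomputable def gapD (x : ℝ) : ℝ := (Complex.exp (I * x) * hankelPhi x).im - Yser x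

/-- `x` times the derivative of `gapD`. -/
noncomputable def gapP (x : ℝ) : ℝ := (Complex.exp (I * x) * (x * hankelPsi x)).im - Pser x

lemma tendsto_gapD : Tendsto gapD (𝓝[>] 0) (𝓝 0) := by
  have hb : ∀ x : ℝ, 0 < x → |(Complex.exp (I * x) * hankelPhi x).im
      - (Real.log (x / 2) + Real.eulerMascheroniConstant)| ≤ 3 * √Real.pi * √x := fun x hx => by
    have h1 := hankelPhi_im_bound hx
    have h2 : |((Complex.exp (I * x) - 1) * hankelPhi x).im| ≤ √Real.pi * √x := by
      refine (Complex.abs_im_le_norm _).trans ?_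
      rw [norm_mul]
      have h3 := Real.norm_exp_I_mul_ofReal_sub_one_le (x := x)
      rw [Real.norm_of_nonneg hx.le] at h3
      have hs := Real.sqrt_pos.2 hx
      calc _ ≤ x * (√Real.pi / √x) := by gcongr; exact norm_hankelPhi_le hx
        _ = √Real.pi * √x := by
          field_simp
          rw [Real.sq_sqrt hx.le]
    rw [sub_mul, one_mul, Complex.sub_im] at h2
    have := abs_add_le ((Complex.exp (I * x) * hankelPhi x).im - (hankelPhi x).im)
      ((hankelPhi x).im - (Real.log (x / 2) + Real.eulerMascheroniConstant))
    rw [sub_add_sub_cancel] at this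
    linarith
  have hc : Tendsto (fun x : ℝ => 3 * √Real.pi * √x) (𝓝[>] 0) (𝓝 0) := by
    have : Continuous fun x : ℝ => 3 * √Real.pi * √x := by fun_prop
    simpa using (this.tendsto 0).mono_left (nhdsWithin_le_nhds (s := Ioi 0))
  have h1 : Tendsto (fun x : ℝ => (Complex.exp (I * x) * hankelPhi x).im
      - (Real.log (x / 2) + Real.eulerMascheroniConstant)) (𝓝[>] 0) (𝓝 0) := by
    refine squeeze_zero_norm' ?_ hc
    filter_upwards [self_mem_nhdsWithin] with x hx using hb x hx
  have := h1.sub tendsto_Yser_zero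
  rw [sub_zero] at this
  refine this.congr fun x => ?_
  rw [gapD]; ring

lemma tendsto_gapP : Tendsto gapP (𝓝[>] 0) (𝓝 0) := by
  have : Continuous fun x : ℝ => Complex.exp (I * x) := by fun_prop
  have h1 := ((this.tendsto 0).mono_left (nhdsWithin_le_nhds (s := Ioi 0))).mul tendsto_x_hankelPsi
  have h2 := ((Complex.continuous_im.tendsto _).comp h1).sub tendsto_Pser_zero
  simp only [Complex.ofReal_zero, mul_zero, Complex.exp_zero, one_mul, Complex.I_im, sub_self] at h2
  exact h2

lemma hasDerivAt_gapD {x : ℝ} (hx : 0 < x) : HasDerivAt gapD (gapP x / x) x := by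
  have h := (Complex.imCLM.hasFDerivAt.comp_hasDerivAt x (hasDerivAt_hankel hx)).sub
    (hasDerivAt_Yser hx)
  refine h.congr_deriv ?_
  have e : Complex.exp (I * x) * (x * hankelPsi x) = x * (Complex.exp (I * x) * hankelPsi x) := by
    ring
  rw [gapP, e, Complex.im_ofReal_mul, Complex.imCLM_apply]
  field_simp

lemma hasDerivAt_gapP {x : ℝ} (hx : 0 < x) : HasDerivAt gapP (-x * gapD x) x := by
  have h := (Complex.imCLM.hasFDerivAt.comp_hasDerivAt x (hasDerivAt_hankelP hx)).sub
    (hasDerivAt_Pser hx)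
  refine h.congr_deriv ?_
  rw [gapD, Complex.imCLM_apply, ← Complex.ofReal_neg, Complex.im_ofReal_mul]
  ring

lemma tendsto_gapP_div : Tendsto (fun x => gapP x / x) (𝓝[>] 0) (𝓝 0) := by
  refine HasDerivAt.lhopital_zero_nhdsGT (f' := fun x => -x * gapD x) (g' := fun _ => 1)
    ?_ ?_ ?_ tendsto_gapP ?_ ?_
  · filter_upwards [self_mem_nhdsWithin] with x hx using hasDerivAt_gapP hx
  · exact Eventually.of_forall fun x => hasDerivAt_id x
  · simp
  · exact tendsto_id.mono_left nhdsWithin_le_nhds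
  · have h : Tendsto (fun x : ℝ => -x) (𝓝[>] 0) (𝓝 0) := by
      simpa using ((continuous_neg (G := ℝ)).tendsto 0).mono_left (nhdsWithin_le_nhds (s := Ioi 0))
    simpa using h.mul tendsto_gapD

/-- The energy `D² + D'²` of the Bessel equation is nonincreasing and vanishes at `0`, so the
two solutions with the same behaviour at `0` coincide. -/
lemma gapD_eq_zero {x : ℝ} (hx : 0 < x) : gapD x = 0 := by
  let E : ℝ → ℝ := fun x => gapD x ^ 2 + (gapP x / x) ^ 2
  have hE : ∀ y, 0 < y → HasDerivAt E (-2 * gapP y ^ 2 / y ^ 3) y := fun y hy => by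
    have h1 := (hasDerivAt_gapD hy).pow 2
    have h2 := ((hasDerivAt_gapP hy).div (hasDerivAt_id y) hy.ne').pow 2
    refine (h1.add h2).congr_deriv ?_
    simp only [Pi.div_apply, id, Nat.cast_ofNat, Nat.add_one_sub_one, pow_one]
    field_simp
    ring
  have hanti : AntitoneOn E (Ioi 0) := by
    refine antitoneOn_of_deriv_nonpos (convex_Ioi 0)
      (fun y hy => (hE y hy).continuousAt.continuousWithinAt) (fun y hy => ?_) (fun y hy => ?_)
    · rw [interior_Ioi] at hy
      exact (hE y hy).differentiableAt.differentiableWithinAt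
    · rw [interior_Ioi] at hy
      have hy' : 0 < y := hy
      rw [(hE y hy).deriv]
      apply div_nonpos_of_nonpos_of_nonneg
      · nlinarith [sq_nonneg (gapP y)]
      · positivity
  have hlim : Tendsto E (𝓝[>] 0) (𝓝 0) := by
    simpa using (tendsto_gapD.pow 2).add (tendsto_gapP_div.pow 2)
  have hle : E x ≤ 0 := by
    refine ge_of_tendsto hlim ?_
    filter_upwards [Ioo_mem_nhdsGT hx] with y hy
    exact hanti hy.1 hx hy.2.le
  have h0 : gapD x ^ 2 + (gapP x / x) ^ 2 ≤ 0 := hle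
  have h1 := sq_nonneg (gapP x / x)
  have h2 : gapD x ^ 2 = 0 := le_antisymm (by linarith) (sq_nonneg _)
  exact pow_eq_zero_iff two_ne_zero |>.1 h2

lemma Yser_eq {x : ℝ} (hx : 0 < x) : Yser x = (Complex.exp (I * x) * hankelPhi x).im := by
  have := gapD_eq_zero hx
  rw [gapD] at this
  linarith

/-- `κ(u) = -Im(1/ρ(u))`, the density in the Laplace representation of `(-1)^n Y₀(πn)`. -/
noncomputable def kap (u : ℝ) : ℝ := -(1 / rho u).im

lemma Yser_pi_nat {n : ℕ} (hn : 0 < n) :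
    (-1) ^ n * Yser (Real.pi * n) = -∫ u in Ioi (0 : ℝ), Real.exp (-(Real.pi * n * u)) * kap u := by
  have hx : 0 < Real.pi * n := by positivity
  have e : Complex.exp (I * ((Real.pi * n : ℝ) : ℂ)) = (((-1) ^ n : ℝ) : ℂ) := by
    have : I * ((Real.pi * n : ℝ) : ℂ) = n * (Real.pi * I) := by push_cast; ring
    rw [this, Complex.exp_nat_mul, Complex.exp_pi_mul_I]
    push_cast; rfl
  rw [Yser_eq hx, e, Complex.im_ofReal_mul, ← mul_assoc, ← mul_pow]
  simp only [mul_neg, mul_one, neg_neg, one_pow, one_mul]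
  rw [hankelPhi, im_lap lapOK_inv_rho hx, ← integral_neg]
  simp only [kap, mul_neg, neg_neg]

end

/-! ### An integral representation of `κ` -/

section

open Filter Topology MeasureTheory Set
open Complex (I)

/-- `∫_0^∞ dt/(1+ζ²t²) = π/(2ζ)` for complex `ζ` in the right half-plane. -/
lemma integral_one_div_one_add {ζ : ℂ} (hζ : 0 < ζ.re)
    (hint : IntegrableOn (fun t : ℝ => 1 / (1 + ζ ^ 2 * (t : ℂ) ^ 2)) (Ioi 0)) :
    ∫ t in Ioi (0 : ℝ), 1 / (1 + ζ ^ 2 * (t : ℂ) ^ 2) = Real.pi / (2 * ζ) := by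
  have hζ0 : ζ ≠ 0 := fun h => by simp [h] at hζ
  let F : ℝ → ℂ := fun t => (1 / (2 * I * ζ)) *
    (Complex.log (1 + I * ζ * t) - Complex.log (1 - I * ζ * t))
  have hs1 : ∀ t : ℝ, 0 ≤ t → 1 + I * ζ * t ∈ Complex.slitPlane := fun t ht => by
    rw [Complex.mem_slitPlane_iff]
    rcases ht.eq_or_lt with rfl | ht
    · left; simp
    · right; simp; exact ⟨hζ.ne', ht.ne'⟩
  have hs2 : ∀ t : ℝ, 0 ≤ t → 1 - I * ζ * t ∈ Complex.slitPlane := fun t ht => by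
    rw [Complex.mem_slitPlane_iff]
    rcases ht.eq_or_lt with rfl | ht
    · left; simp
    · right; simp; exact ⟨hζ.ne', ht.ne'⟩
  have hder : ∀ t ∈ Ici (0 : ℝ), HasDerivAt F (1 / (1 + ζ ^ 2 * (t : ℂ) ^ 2)) t := fun t ht => by
    have hid : HasDerivAt (fun x : ℝ => (x : ℂ)) 1 t := Complex.ofRealCLM.hasDerivAt (x := t)
    have h1 := (((hid.const_mul (I * ζ)).const_add 1).clog_real (hs1 t ht)).sub
      (((hid.const_mul (I * ζ)).const_sub 1).clog_real (hs2 t ht))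
    refine (h1.const_mul (1 / (2 * I * ζ))).congr_deriv ?_
    have n1 := Complex.slitPlane_ne_zero (hs1 t ht)
    have n2 := Complex.slitPlane_ne_zero (hs2 t ht)
    have e : 1 + ζ ^ 2 * (t : ℂ) ^ 2 = (1 + I * ζ * t) * (1 - I * ζ * t) := by
      linear_combination (ζ ^ 2 * (t : ℂ) ^ 2) * Complex.I_sq
    rw [e]
    field_simp
    ring
  have hlim : Tendsto F atTop (𝓝 (Real.pi / (2 * ζ))) := by
    have hinv : Tendsto (fun t : ℝ => ((t⁻¹ : ℝ) : ℂ)) atTop (𝓝 0) := by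
      have := (Complex.continuous_ofReal.tendsto 0).comp tendsto_inv_atTop_zero
      rw [Complex.ofReal_zero] at this
      exact this
    have him : (I * ζ).im ≠ 0 := by simpa using hζ.ne'
    have hA : Tendsto (fun t : ℝ => Complex.log (((t⁻¹ : ℝ) : ℂ) + I * ζ)) atTop
        (𝓝 (Complex.log (I * ζ))) := by
      have := hinv.add_const (I * ζ)
      rw [zero_add] at this
      exact this.clog (Complex.mem_slitPlane_iff.2 (Or.inr him))
    have hB : Tendsto (fun t : ℝ => Complex.log (((t⁻¹ : ℝ) : ℂ) - I * ζ)) atTop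
        (𝓝 (Complex.log (-(I * ζ)))) := by
      have := hinv.sub_const (I * ζ)
      rw [zero_sub] at this
      refine this.clog (Complex.mem_slitPlane_iff.2 (Or.inr ?_))
      rw [Complex.neg_im]; exact neg_ne_zero.2 him
    have hval : (1 / (2 * I * ζ)) * (Complex.log (I * ζ) - Complex.log (-(I * ζ)))
        = Real.pi / (2 * ζ) := by
      have : Complex.log (I * ζ) - Complex.log (-(I * ζ)) = Real.pi * I := by
        rw [Complex.log, Complex.log, norm_neg,
          Complex.arg_neg_eq_arg_sub_pi_of_im_pos (by simpa using hζ)]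
        push_cast; ring
      rw [this]
      field_simp
    rw [← hval]
    refine ((hA.sub hB).const_mul (1 / (2 * I * ζ))).congr' ?_
    filter_upwards [eventually_gt_atTop 0] with t ht
    have e1 : 1 + I * ζ * t = (t : ℂ) * (((t⁻¹ : ℝ) : ℂ) + I * ζ) := by
      have : (t : ℂ) ≠ 0 := by exact_mod_cast ht.ne'
      push_cast; field_simp
    have e2 : 1 - I * ζ * t = (t : ℂ) * (((t⁻¹ : ℝ) : ℂ) - I * ζ) := by
      have : (t : ℂ) ≠ 0 := by exact_mod_cast ht.ne'
      push_cast; field_simp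
    have n1 := Complex.slitPlane_ne_zero (hs1 t ht.le)
    have n2 := Complex.slitPlane_ne_zero (hs2 t ht.le)
    rw [e1] at n1
    rw [e2] at n2
    simp only [F]
    rw [e1, e2, Complex.log_ofReal_mul ht (right_ne_zero_of_mul n1),
      Complex.log_ofReal_mul ht (right_ne_zero_of_mul n2)]
    ring
  rw [integral_Ioi_of_hasDerivAt_of_tendsto' hder hint hlim]
  simp [F]

lemma integrableOn_inv_one_add_sq : IntegrableOn (fun t : ℝ => (1 + t ^ 2)⁻¹) (Ioi 0) :=
  integrable_inv_one_add_sq.integrableOn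

/-- The kernel whose integral over `t` is `(π/2) κ(u)`. -/
noncomputable def kerK (u t : ℝ) : ℝ := u * (1 + t ^ 2) / (u ^ 2 * (1 + t ^ 2) ^ 2 + 4 * t ^ 4)

lemma kap_eq {u : ℝ} (hu : 0 < u) : kap u = 2 / Real.pi * ∫ t in Ioi (0 : ℝ), kerK u t := by
  have hu' : (u : ℂ) ≠ 0 := by exact_mod_cast hu.ne'
  have hr := rho_ne_zero hu
  set ζ : ℂ := -I * rho u / u with hζ
  have hre : 0 < ζ.re := by
    rw [hζ, Complex.div_ofReal_re]
    have := rho_im_pos hu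
    simp
    positivity
  have hsq : ζ ^ 2 = 1 - 2 * I / u := by
    rw [hζ]
    field_simp
    linear_combination (-1 : ℂ) * rho_sq u + (rho u) ^ 2 * Complex.I_sq
  have hden : ∀ t : ℝ, (1 + ζ ^ 2 * (t : ℂ) ^ 2) = ((1 + t ^ 2 : ℝ) : ℂ) + ((-(2 * t ^ 2 / u) : ℝ) : ℂ) * I := by
    intro t
    rw [hsq]; push_cast; ring
  have hre1 : ∀ t : ℝ, (1 + ζ ^ 2 * (t : ℂ) ^ 2).re = 1 + t ^ 2 := by
    intro t; rw [hden]; simp only [Complex.add_re, Complex.re_ofReal_mul, Complex.ofReal_re, Complex.I_re]; ring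
  have him1 : ∀ t : ℝ, (1 + ζ ^ 2 * (t : ℂ) ^ 2).im = -(2 * t ^ 2 / u) := by
    intro t; rw [hden]; simp only [Complex.add_im, Complex.im_ofReal_mul, Complex.ofReal_im, Complex.I_im]; ring
  have hge : ∀ t : ℝ, 1 + t ^ 2 ≤ ‖1 + ζ ^ 2 * (t : ℂ) ^ 2‖ := fun t => by
    rw [← hre1 t]; exact Complex.re_le_norm _
  have hint : IntegrableOn (fun t : ℝ => 1 / (1 + ζ ^ 2 * (t : ℂ) ^ 2)) (Ioi 0) := by
    refine integrableOn_inv_one_add_sq.mono' ?_ (Eventually.of_forall fun t => ?_)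
    · refine Measurable.aestronglyMeasurable ?_
      fun_prop
    · rw [norm_div, norm_one, one_div]
      exact inv_anti₀ (by positivity) (hge t)
  have h := integral_one_div_one_add hre hint
  have hI := Complex.reCLM.integral_comp_comm hint
  simp only [Complex.reCLM_apply] at hI
  rw [h] at hI
  have e1 : ∀ t : ℝ, (1 / (1 + ζ ^ 2 * (t : ℂ) ^ 2)).re = u * kerK u t := fun t => by
    rw [one_div, Complex.inv_re, Complex.normSq_apply, hre1, him1, kerK]
    have : 0 < 1 + t ^ 2 := by positivity
    have : 0 < u ^ 2 * (1 + t ^ 2) ^ 2 + 4 * t ^ 4 := by positivity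
    have : 0 < (1 + t ^ 2) * (1 + t ^ 2) + -(2 * t ^ 2 / u) * -(2 * t ^ 2 / u) := by
      rw [neg_mul_neg]; positivity
    rw [div_eq_iff this.ne']
    field_simp
    ring
  have e2 : ((Real.pi : ℂ) / (2 * ζ)).re = Real.pi / 2 * u * kap u := by
    have : (Real.pi : ℂ) / (2 * ζ) = ((Real.pi / 2 * u : ℝ) : ℂ) * (I * (1 / rho u)) := by
      rw [hζ]; push_cast; field_simp
      linear_combination (-1 : ℂ) * Complex.I_sq
    rw [this, Complex.re_ofReal_mul, kap]
    simp
  rw [e2] at hI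
  simp only [e1] at hI
  rw [integral_const_mul] at hI
  have hpi := Real.pi_pos
  have h2 : ∫ t in Ioi (0 : ℝ), kerK u t = Real.pi / 2 * kap u := by
    apply mul_left_cancel₀ hu.ne'
    rw [hI]; ring
  rw [h2]; field_simp

lemma arctan_div_tendsto {c : ℝ} (hc : 0 < c) :
    Tendsto (fun u : ℝ => Real.arctan (u / c)) atTop (𝓝 (Real.pi / 2)) :=
  (Real.tendsto_arctan_atTop.mono_right nhdsWithin_le_nhds).comp (tendsto_id.atTop_div_const hc)

lemma hasDerivAt_arctan_div {c : ℝ} (hc : 0 < c) (u : ℝ) :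
    HasDerivAt (fun u : ℝ => Real.arctan (u / c)) (c / (u ^ 2 + c ^ 2)) u := by
  refine ((hasDerivAt_id u).div_const c).arctan.congr_deriv ?_
  have : 0 < u ^ 2 + c ^ 2 := by positivity
  have : 0 < 1 + (u / c) ^ 2 := by positivity
  simp only [id]
  field_simp
  ring

lemma integrableOn_inv_sq_add {c : ℝ} (hc : 0 < c) :
    IntegrableOn (fun u : ℝ => 1 / (u ^ 2 + c ^ 2)) (Ioi 0) := by
  have h : IntegrableOn (fun u : ℝ => c / (u ^ 2 + c ^ 2)) (Ioi 0) :=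
    integrableOn_Ioi_deriv_of_nonneg' (fun u _ => hasDerivAt_arctan_div hc u)
      (fun u _ => by positivity) (arctan_div_tendsto hc)
  refine (h.const_mul (1 / c)).congr (Eventually.of_forall fun u => ?_)
  have : 0 < u ^ 2 + c ^ 2 := by positivity
  field_simp

lemma integrableOn_two_kernels {c s : ℝ} (hc : 0 < c) (hs : 0 < s) :
    IntegrableOn (fun u : ℝ => u ^ 2 / ((u ^ 2 + c ^ 2) * (u ^ 2 + s ^ 2))) (Ioi 0) := by
  refine (integrableOn_inv_sq_add hc).mono' (by
    refine Measurable.aestronglyMeasurable ?_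
    fun_prop) (Eventually.of_forall fun u => ?_)
  rw [Real.norm_of_nonneg (by positivity), div_le_div_iff₀ (by positivity) (by positivity)]
  nlinarith [sq_nonneg u, sq_nonneg s, mul_nonneg (sq_nonneg s) (add_nonneg (sq_nonneg u) (sq_nonneg c))]

lemma integral_two_kernels {c s : ℝ} (hc : 0 < c) (hs : 0 < s) :
    ∫ u in Ioi (0 : ℝ), u ^ 2 / ((u ^ 2 + c ^ 2) * (u ^ 2 + s ^ 2)) = Real.pi / (2 * (c + s)) := by
  by_cases hcs : c = s
  · subst hcs
    have hder : ∀ u ∈ Ici (0 : ℝ), HasDerivAt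
        (fun u : ℝ => 1 / (2 * c) * Real.arctan (u / c) - 1 / 2 * (u / (u ^ 2 + c ^ 2)))
        (u ^ 2 / ((u ^ 2 + c ^ 2) * (u ^ 2 + c ^ 2))) u := fun u _ => by
      have hp : 0 < u ^ 2 + c ^ 2 := by positivity
      have h2 : HasDerivAt (fun u : ℝ => u ^ 2 + c ^ 2) (2 * u) u := by
        simpa using (hasDerivAt_pow 2 u).add_const (c ^ 2)
      refine (((hasDerivAt_arctan_div hc u).const_mul (1 / (2 * c))).sub
        (((hasDerivAt_id u).div h2 hp.ne').const_mul (1 / 2))).congr_deriv ?_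
      simp only [id]
      field_simp
      ring
    have hlim : Tendsto (fun u : ℝ => 1 / (2 * c) * Real.arctan (u / c) - 1 / 2 * (u / (u ^ 2 + c ^ 2)))
        atTop (𝓝 (1 / (2 * c) * (Real.pi / 2) - 1 / 2 * 0)) := by
      refine ((arctan_div_tendsto hc).const_mul _).sub (Tendsto.const_mul _ ?_)
      refine squeeze_zero' (g := fun u : ℝ => u⁻¹) ?_ ?_ tendsto_inv_atTop_zero
      · filter_upwards [eventually_gt_atTop 0] with u hu; positivity
      · filter_upwards [eventually_gt_atTop 0] with u hu
        rw [inv_eq_one_div, div_le_div_iff₀ (by positivity) hu]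
        nlinarith [sq_nonneg c]
    rw [integral_Ioi_of_hasDerivAt_of_tendsto' hder (integrableOn_two_kernels hc hc) hlim]
    simp
    field_simp
    ring
  · have hne : c ^ 2 - s ^ 2 ≠ 0 := fun h => hcs (by
      have : (c - s) * (c + s) = 0 := by linear_combination h
      rcases mul_eq_zero.1 this with h | h <;> linarith)
    have hder : ∀ u ∈ Ici (0 : ℝ), HasDerivAt
        (fun u : ℝ => 1 / (c ^ 2 - s ^ 2) * (c * Real.arctan (u / c) - s * Real.arctan (u / s)))
        (u ^ 2 / ((u ^ 2 + c ^ 2) * (u ^ 2 + s ^ 2))) u := fun u _ => by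
      refine ((((hasDerivAt_arctan_div hc u).const_mul c).sub
        ((hasDerivAt_arctan_div hs u).const_mul s)).const_mul _).congr_deriv ?_
      have hp : 0 < u ^ 2 + c ^ 2 := by positivity
      have hp : 0 < u ^ 2 + s ^ 2 := by positivity
      field_simp
      ring
    have hlim := (((arctan_div_tendsto hc).const_mul c).sub
        ((arctan_div_tendsto hs).const_mul s)).const_mul (1 / (c ^ 2 - s ^ 2))
    rw [integral_Ioi_of_hasDerivAt_of_tendsto' hder (integrableOn_two_kernels hc hs) hlim]
    simp
    have : 0 < c + s := by positivity
    field_simp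
    ring

end

/-! ### Moments of `κ` and of `δ` -/

section

open Filter Topology MeasureTheory Set
open Complex (I)

lemma integral_inv_sq_add {c : ℝ} (hc : 0 < c) :
    ∫ u in Ioi (0 : ℝ), 1 / (u ^ 2 + c ^ 2) = Real.pi / (2 * c) := by
  have hder : ∀ u ∈ Ici (0 : ℝ), HasDerivAt (fun u : ℝ => 1 / c * Real.arctan (u / c))
      (1 / (u ^ 2 + c ^ 2)) u := fun u _ => by
    refine ((hasDerivAt_arctan_div hc u).const_mul (1 / c)).congr_deriv ?_
    field_simp
  rw [integral_Ioi_of_hasDerivAt_of_tendsto' hder (integrableOn_inv_sq_add hc)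
    ((arctan_div_tendsto hc).const_mul (1 / c))]
  simp
  field_simp

lemma kerK_mul {c u t : ℝ} (ht : 0 < t) :
    u / (u ^ 2 + c ^ 2) * kerK u t = (1 + t ^ 2)⁻¹ *
      (u ^ 2 / ((u ^ 2 + c ^ 2) * (u ^ 2 + (2 * t ^ 2 / (1 + t ^ 2)) ^ 2))) := by
  have h1 : 0 < 1 + t ^ 2 := by positivity
  have h2 : 0 < u ^ 2 * (1 + t ^ 2) ^ 2 + 4 * t ^ 4 := by positivity
  have e : u ^ 2 + (2 * t ^ 2 / (1 + t ^ 2)) ^ 2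
      = (u ^ 2 * (1 + t ^ 2) ^ 2 + 4 * t ^ 4) / (1 + t ^ 2) ^ 2 := by
    field_simp
    ring
  rw [e, kerK]
  rcases eq_or_ne (u ^ 2 + c ^ 2) 0 with h | h
  · simp [h]
  · field_simp

/-- The value of `∫ u/(u²+c²) κ(u) du`, by exchanging the order of integration in the integral
representation of `κ`. -/
lemma integral_kernel_kap {c : ℝ} (hc : 0 < c) :
    IntegrableOn (fun u => u / (u ^ 2 + c ^ 2) * kap u) (Ioi 0) ∧
    ∫ u in Ioi (0 : ℝ), u / (u ^ 2 + c ^ 2) * kap u = Real.pi / 2 * (1 / √(c ^ 2 + 2 * c)) := by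
  set μ : Measure ℝ := volume.restrict (Ioi 0) with hμ
  set q : ℝ := √(c / (c + 2)) with hq
  have hq0 : 0 < q := Real.sqrt_pos.2 (by positivity)
  have hq2 : q ^ 2 = c / (c + 2) := Real.sq_sqrt (by positivity)
  let f : ℝ × ℝ → ℝ := fun p => p.1 / (p.1 ^ 2 + c ^ 2) * kerK p.1 p.2
  have hmeas : Measurable f := by
    simp only [f, kerK]
    fun_prop
  have hs : ∀ t : ℝ, 0 < t → 0 < 2 * t ^ 2 / (1 + t ^ 2) := fun t ht => by positivity
  have hin : ∀ t : ℝ, 0 < t → ∫ u, f (u, t) ∂μ = Real.pi / 2 * (1 / (c + 2)) * (1 / (t ^ 2 + q ^ 2)) := by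
    intro t ht
    simp only [f, kerK_mul ht]
    rw [integral_const_mul, integral_two_kernels hc (hs t ht), hq2]
    field_simp
    ring
  have hint1 : ∀ᵐ t ∂μ, Integrable (fun u => f (u, t)) μ := by
    filter_upwards [ae_restrict_mem measurableSet_Ioi] with t ht
    simp only [f, kerK_mul (mem_Ioi.1 ht)]
    exact (integrableOn_two_kernels hc (hs t ht)).const_mul _
  have hnn : ∀ t : ℝ, ∀ᵐ u ∂μ, ‖f (u, t)‖ = f (u, t) := fun t => by
    filter_upwards [ae_restrict_mem measurableSet_Ioi] with u hu
    have hu : 0 < u := hu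
    refine Real.norm_of_nonneg ?_
    simp only [f, kerK]
    positivity
  have hint : Integrable f (μ.prod μ) := by
    rw [integrable_prod_iff' hmeas.aestronglyMeasurable]
    refine ⟨hint1, ?_⟩
    refine ((integrableOn_inv_sq_add hq0).const_mul (Real.pi / 2 * (1 / (c + 2)))).congr ?_
    filter_upwards [ae_restrict_mem measurableSet_Ioi] with t ht
    rw [integral_congr_ae (hnn t), hin t ht]
  have hk : ∀ᵐ u ∂μ, ∫ t, f (u, t) ∂μ = Real.pi / 2 * (u / (u ^ 2 + c ^ 2) * kap u) := by
    filter_upwards [ae_restrict_mem measurableSet_Ioi] with u hu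
    simp only [f]
    rw [integral_const_mul, kap_eq hu, hμ]
    have := Real.pi_pos
    field_simp
  have h1 : Integrable (fun u => u / (u ^ 2 + c ^ 2) * kap u) μ := by
    have := (hint.integral_prod_left.congr hk).const_mul (2 / Real.pi)
    refine this.congr (Eventually.of_forall fun u => ?_)
    have := Real.pi_pos
    simp only
    field_simp
  refine ⟨h1, ?_⟩
  have hsw := integral_integral_swap (f := fun u t => f (u, t)) hint
  rw [integral_congr_ae hk, integral_const_mul] at hsw
  have e : ∫ t, ∫ u, f (u, t) ∂μ ∂μ
      = ∫ t in Ioi (0 : ℝ), Real.pi / 2 * (1 / (c + 2)) * (1 / (t ^ 2 + q ^ 2)) :=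
    setIntegral_congr_fun measurableSet_Ioi fun t ht => hin t ht
  rw [e, integral_const_mul, integral_inv_sq_add hq0] at hsw
  have hpi := Real.pi_pos
  have h3 : √(c ^ 2 + 2 * c) = (c + 2) * q := by
    rw [Real.sqrt_eq_iff_mul_self_eq (by positivity) (by positivity)]
    have : (c + 2) * q * ((c + 2) * q) = (c + 2) ^ 2 * q ^ 2 := by ring
    rw [this, hq2]
    field_simp
  rw [h3]
  apply mul_left_cancel₀ (by positivity : Real.pi / 2 ≠ 0)
  rw [hsw]
  field_simp

/-- The small-`u` model `1/(2√u)` of `κ`. -/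
noncomputable def kapZero (u : ℝ) : ℝ := 1 / 2 * (1 / √u)

lemma integral_kernel_kapZero {c : ℝ} (hc : 0 < c) :
    IntegrableOn (fun u => u / (u ^ 2 + c ^ 2) * kapZero u) (Ioi 0) ∧
    ∫ u in Ioi (0 : ℝ), u / (u ^ 2 + c ^ 2) * kapZero u = Real.pi / 2 * (1 / √(2 * c)) := by
  set a : ℝ := 1 / √(2 * c) with ha
  have hsc : 0 < √(2 * c) := Real.sqrt_pos.2 (by positivity)
  have ha0 : 0 < a := by positivity
  have ha2 : a ^ 2 = 1 / (2 * c) := by rw [ha, div_pow, Real.sq_sqrt (by positivity), one_pow]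
  set ζ : ℂ := a * (1 + I) with hζ
  have hsq : ζ ^ 2 = ((1 / c : ℝ) : ℂ) * I := by
    have h2 : ((a ^ 2 : ℝ) : ℂ) = ((1 / (2 * c) : ℝ) : ℂ) := by rw [ha2]
    have hc' : (c : ℂ) ≠ 0 := by exact_mod_cast hc.ne'
    push_cast at h2 ⊢
    rw [hζ, mul_pow, h2]
    field_simp
    linear_combination Complex.I_sq
  have hre1 : ∀ t : ℝ, (1 + ζ ^ 2 * (t : ℂ) ^ 2).re = 1 := fun t => by
    have : 1 + ((1 / c : ℝ) : ℂ) * I * (t : ℂ) ^ 2 = 1 + ((t ^ 2 / c : ℝ) : ℂ) * I := by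
      push_cast; ring
    rw [hsq, this, Complex.add_re, Complex.re_ofReal_mul]; simp
  have him1 : ∀ t : ℝ, (1 + ζ ^ 2 * (t : ℂ) ^ 2).im = t ^ 2 / c := fun t => by
    have : 1 + ((1 / c : ℝ) : ℂ) * I * (t : ℂ) ^ 2 = 1 + ((t ^ 2 / c : ℝ) : ℂ) * I := by
      push_cast; ring
    rw [hsq, this, Complex.add_im, Complex.im_ofReal_mul]; simp
  have hint : IntegrableOn (fun t : ℝ => 1 / (1 + ζ ^ 2 * (t : ℂ) ^ 2)) (Ioi 0) := by
    refine (integrableOn_inv_one_add_sq.const_mul (1 + c)).mono' ?_ (Eventually.of_forall fun t => ?_)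
    · refine Measurable.aestronglyMeasurable ?_
      fun_prop
    · rw [norm_div, norm_one, ← div_eq_mul_inv]
      have h1 : (1 : ℝ) ≤ ‖1 + ζ ^ 2 * (t : ℂ) ^ 2‖ := by
        rw [← hre1 t]; exact Complex.re_le_norm _
      have h2 : t ^ 2 / c ≤ ‖1 + ζ ^ 2 * (t : ℂ) ^ 2‖ := by
        rw [← him1 t]; exact (le_abs_self _).trans (Complex.abs_im_le_norm _)
      rw [div_le_iff₀ hc] at h2
      rw [div_le_div_iff₀ (by linarith) (by positivity)]
      nlinarith
  have h := integral_one_div_one_add (ζ := ζ) (by simp [hζ]; exact ha0) hint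
  have hintI := hint.im
  have hI := Complex.imCLM.integral_comp_comm hint
  simp only [Complex.imCLM_apply] at hI
  rw [h] at hI
  have e1 : ∀ t : ℝ, (1 / (1 + ζ ^ 2 * (t : ℂ) ^ 2)).im = -c * (t ^ 2 / (t ^ 4 + c ^ 2)) := fun t => by
    rw [one_div, Complex.inv_im, Complex.normSq_apply, hre1, him1]
    have : 0 < t ^ 4 + c ^ 2 := by positivity
    have : 0 < 1 * 1 + t ^ 2 / c * (t ^ 2 / c) := by positivity
    rw [div_eq_iff this.ne']
    field_simp
    ring
  have e2 : ((Real.pi : ℂ) / (2 * ζ)).im = -(Real.pi / 4 / a) := by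
    have ha' : (a : ℂ) ≠ 0 := by exact_mod_cast ha0.ne'
    have hz : ζ ≠ 0 := fun h => by
      have := hre1 0
      have h3 := congrArg Complex.re h
      simp [hζ] at h3; exact ha0.ne' h3
    have : (Real.pi : ℂ) / (2 * ζ) = ((Real.pi / 4 / a : ℝ) : ℂ) * (1 - I) := by
      rw [div_eq_iff (by simpa using hz), hζ]; push_cast; field_simp
      linear_combination (2 : ℂ) * Complex.I_sq
    rw [this, Complex.im_ofReal_mul]
    simp
  rw [e2] at hI
  simp only [RCLike.im_to_complex] at hintI
  simp only [e1] at hI hintI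
  rw [integral_const_mul] at hI
  -- substitute `u = t²`
  have hsub : ∀ t : ℝ, 0 < t → (|(2 : ℝ)| * t ^ ((2 : ℝ) - 1)) •
      ((t ^ (2 : ℝ)) / ((t ^ (2 : ℝ)) ^ 2 + c ^ 2) * kapZero (t ^ (2 : ℝ))) = t ^ 2 / (t ^ 4 + c ^ 2) := by
    intro t ht
    norm_num
    rw [kapZero, Real.sqrt_sq ht.le]
    have : 0 < t ^ 4 + c ^ 2 := by positivity
    have : 0 < (t ^ 2) ^ 2 + c ^ 2 := by positivity
    field_simp
  have hint0 : IntegrableOn (fun t : ℝ => t ^ 2 / (t ^ 4 + c ^ 2)) (Ioi 0) := by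
    refine (hintI.const_mul (-1 / c)).congr (Eventually.of_forall fun t => ?_)
    simp only
    field_simp
  constructor
  · refine (integrableOn_Ioi_comp_rpow_iff _ (p := 2) two_ne_zero).1 ?_
    exact hint0.congr_fun (fun t ht => (hsub t ht).symm) measurableSet_Ioi
  · rw [← integral_comp_rpow_Ioi _ (p := 2) two_ne_zero,
      setIntegral_congr_fun measurableSet_Ioi hsub]
    have : ∫ t in Ioi (0 : ℝ), t ^ 2 / (t ^ 4 + c ^ 2) = Real.pi / 4 / a / c := by
      rw [eq_div_iff hc.ne']; linarith
    rw [this, div_div, div_eq_iff (by positivity)]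
    have : Real.pi / 2 * a * (a * c) = Real.pi / 2 * c * a ^ 2 := by ring
    rw [this, ha2]
    field_simp
    norm_num

/-- `δ = 1/(2√u) - κ(u)`. -/
noncomputable def del (u : ℝ) : ℝ := kapZero u - kap u

lemma integral_kernel_del {c : ℝ} (hc : 0 < c) :
    ∫ u in Ioi (0 : ℝ), u / (u ^ 2 + c ^ 2) * del u
      = Real.pi / 2 * (1 / √(2 * c) - 1 / √(c ^ 2 + 2 * c)) := by
  simp only [del, mul_sub]
  rw [integral_sub (integral_kernel_kapZero hc).1 (integral_kernel_kap hc).1,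
    (integral_kernel_kapZero hc).2, (integral_kernel_kap hc).2]

lemma kap_continuousOn : ContinuousOn kap (Ioi 0) :=
  (Complex.continuous_im.comp_continuousOn lapOK_inv_rho.1).neg

lemma kapZero_continuousOn : ContinuousOn kapZero (Ioi 0) := by
  refine ContinuousOn.mul continuousOn_const (ContinuousOn.div continuousOn_const
    Real.continuous_sqrt.continuousOn fun u hu => (Real.sqrt_pos.2 hu).ne')

lemma del_continuousOn : ContinuousOn del (Ioi 0) := kapZero_continuousOn.sub kap_continuousOn

lemma abs_kap_le {u : ℝ} (hu : 0 < u) : |kap u| ≤ 1 / √u := by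
  rw [kap, abs_neg]
  refine (Complex.abs_im_le_norm _).trans ?_
  rw [norm_div, norm_one]
  refine one_div_le_one_div_of_le (Real.sqrt_pos.2 hu)
    ((Real.sqrt_le_sqrt ?_).trans (rho_norm_ge_sqrt u))
  linarith

lemma abs_del_le_inv {u : ℝ} (hu : 0 < u) : |del u| ≤ 2 * (1 / √u) := by
  have h1 := abs_kap_le hu
  have h2 : 0 < 1 / √u := by have := Real.sqrt_pos.2 hu; positivity
  rw [del, kapZero]
  rw [abs_le] at h1 ⊢
  constructor <;> linarith

lemma abs_del_le_sqrt {u : ℝ} (hu : 0 < u) : |del u| ≤ √u := by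
  have hs := Real.sqrt_pos.2 hu
  have hs2 := Real.sq_sqrt hu.le
  have hs2' : ((√u : ℝ) : ℂ) ^ 2 = u := by exact_mod_cast hs2
  set s := √u with hsdef
  have hs0 : (s : ℂ) ≠ 0 := by exact_mod_cast hs.ne'
  set r : ℂ := (s : ℂ) * (1 + I) with hr
  have hr2 : r ^ 2 = 2 * I * u := by
    rw [hr, mul_pow, hs2']; linear_combination (u : ℂ) * Complex.I_sq
  have hrn : s ≤ ‖r‖ := by
    refine le_trans ?_ (Complex.re_le_norm _)
    simp [hr]
  have hr0 : r ≠ 0 := norm_pos_iff.1 (hs.trans_le hrn)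
  have hrho : s ≤ ‖rho u‖ := (Real.sqrt_le_sqrt (by linarith)).trans (rho_norm_ge_sqrt u)
  have hsum : s ≤ ‖rho u + r‖ := by
    refine le_trans ?_ (Complex.re_le_norm _)
    have := rho_re_pos hu
    simp [hr]; linarith
  have h0 := rho_ne_zero hu
  have hs0' : rho u + r ≠ 0 := norm_pos_iff.1 (hs.trans_le hsum)
  have e : 1 / rho u - 1 / r = (u : ℂ) ^ 2 / (rho u * r * (rho u + r)) := by
    field_simp
    linear_combination hr2 - rho_sq u
  have him : del u = (1 / rho u - 1 / r).im := by
    rw [del, kapZero, kap, Complex.sub_im]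
    have : 1 / r = ((1 / 2 * (1 / s) : ℝ) : ℂ) * (1 - I) := by
      rw [div_eq_iff hr0, hr]; push_cast; field_simp
      linear_combination Complex.I_sq
    rw [this, Complex.im_ofReal_mul]
    simp
    ring
  rw [him, e]
  refine (Complex.abs_im_le_norm _).trans ?_
  rw [norm_div, norm_mul, norm_mul, norm_pow, Complex.norm_real, Real.norm_of_nonneg hu.le,
    div_le_iff₀ (by positivity)]
  calc u ^ 2 = s * (s * s * s) := by rw [← hs2]; ring
    _ ≤ _ := by gcongr

/-- `δ(u)/u` is absolutely integrable. -/
lemma integrable_del_div : IntegrableOn (fun u => del u / u) (Ioi 0) := by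
  have hm : ContinuousOn (fun u => del u / u) (Ioi 0) :=
    del_continuousOn.div continuousOn_id fun u hu => ne_of_gt hu
  have h1 : IntegrableOn (fun u => del u / u) (Ioc 0 1) := by
    have hb : IntegrableOn (fun u : ℝ => u ^ (-(1 / 2) : ℝ)) (Ioc 0 1) := by
      have := intervalIntegral.intervalIntegrable_rpow' (a := 0) (b := 1) (r := -(1 / 2)) (by norm_num)
      rwa [intervalIntegrable_iff_integrableOn_Ioc_of_le zero_le_one] at this
    refine hb.mono' ((hm.mono Ioc_subset_Ioi_self).aestronglyMeasurable measurableSet_Ioc) ?_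
    filter_upwards [ae_restrict_mem measurableSet_Ioc] with u hu
    rw [norm_div, Real.norm_of_nonneg hu.1.le, Real.norm_eq_abs, Real.rpow_neg hu.1.le,
      ← Real.sqrt_eq_rpow, div_le_iff₀ hu.1]
    refine (abs_del_le_sqrt hu.1).trans (le_of_eq ?_)
    have hs := Real.sqrt_pos.2 hu.1
    have hs2 := Real.sq_sqrt hu.1.le
    nth_rw 3 [← hs2]
    field_simp
  have h2 : IntegrableOn (fun u => del u / u) (Ioi 1) := by
    have hb := (integrableOn_Ioi_rpow_of_lt (a := -(3 / 2)) (by norm_num) zero_lt_one).const_mul 2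
    refine hb.mono' ((hm.mono (Ioi_subset_Ioi zero_le_one)).aestronglyMeasurable measurableSet_Ioi) ?_
    filter_upwards [ae_restrict_mem measurableSet_Ioi] with u hu
    have hu0 : 0 < u := zero_lt_one.trans hu
    have : u ^ (-(3 / 2) : ℝ) = 1 / √u / u := by
      rw [show (-(3 / 2) : ℝ) = -(1 / 2) - 1 by norm_num, Real.rpow_sub hu0, Real.rpow_one,
        Real.rpow_neg hu0.le, ← Real.sqrt_eq_rpow, one_div]
    rw [norm_div, Real.norm_of_nonneg hu0.le, Real.norm_eq_abs, this, ← mul_div_assoc]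
    gcongr
    exact abs_del_le_inv hu0
  have := h1.union h2
  rwa [Ioc_union_Ioi_eq_Ioi zero_le_one] at this

lemma kernel_le {c u : ℝ} (hu : 0 < u) : |u / (u ^ 2 + c ^ 2) * del u| ≤ |del u / u| := by
  rw [abs_mul, abs_div, abs_div, abs_of_pos hu, abs_of_pos (by positivity : 0 < u ^ 2 + c ^ 2),
    div_mul_eq_mul_div, div_le_div_iff₀ (by positivity) hu]
  nlinarith [abs_nonneg (del u), mul_nonneg (abs_nonneg (del u)) (sq_nonneg c)]

/-- The limit `c → 0` of `integral_kernel_del`: its right side is `O(√c)`. -/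
lemma integral_del_div : ∫ u in Ioi (0 : ℝ), del u / u = 0 := by
  have h1 : Tendsto (fun c : ℝ => ∫ u in Ioi (0 : ℝ), u / (u ^ 2 + c ^ 2) * del u) (𝓝[>] 0)
      (𝓝 (∫ u in Ioi (0 : ℝ), del u / u)) := by
    refine tendsto_integral_filter_of_dominated_convergence (fun u => |del u / u|) ?_ ?_
      integrable_del_div.norm ?_
    · refine Eventually.of_forall fun c => ContinuousOn.aestronglyMeasurable ?_ measurableSet_Ioi
      refine ContinuousOn.mul (ContinuousOn.div continuousOn_id (by fun_prop) fun u hu => ?_)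
        del_continuousOn
      have hu : 0 < u := hu
      positivity
    · refine Eventually.of_forall fun c => ?_
      filter_upwards [ae_restrict_mem measurableSet_Ioi] with u hu using kernel_le hu
    · filter_upwards [ae_restrict_mem measurableSet_Ioi] with u hu
      have hu : 0 < u := hu
      have hc : ContinuousAt (fun c : ℝ => u / (u ^ 2 + c ^ 2) * del u) 0 := by
        refine ContinuousAt.mul (ContinuousAt.div continuousAt_const (by fun_prop) ?_) continuousAt_const
        positivity
      have := hc.tendsto.mono_left (nhdsWithin_le_nhds (s := Ioi 0))
      refine this.congr' EventuallyEq.rfl |>.trans (le_of_eq ?_)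
      congr 1
      field_simp
      ring
  have h2 : Tendsto (fun c : ℝ => ∫ u in Ioi (0 : ℝ), u / (u ^ 2 + c ^ 2) * del u) (𝓝[>] 0) (𝓝 0) := by
    have hb : Tendsto (fun c : ℝ => Real.pi / 2 * √c) (𝓝[>] 0) (𝓝 0) := by
      have : Continuous fun c : ℝ => Real.pi / 2 * √c := by fun_prop
      simpa using (this.tendsto 0).mono_left (nhdsWithin_le_nhds (s := Ioi 0))
    refine squeeze_zero_norm' ?_ hb
    filter_upwards [self_mem_nhdsWithin] with c hc
    have hc : 0 < c := hc
    rw [integral_kernel_del hc, norm_mul, Real.norm_of_nonneg (by positivity)]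
    gcongr
    have ha := Real.sqrt_pos.2 (by positivity : 0 < 2 * c)
    have hb := Real.sqrt_pos.2 (by positivity : 0 < c ^ 2 + 2 * c)
    have hd := Real.sqrt_pos.2 hc
    have hab : √(2 * c) ≤ √(c ^ 2 + 2 * c) := Real.sqrt_le_sqrt (by nlinarith)
    have ha2 := Real.sq_sqrt (by positivity : 0 ≤ 2 * c)
    have hb2 := Real.sq_sqrt (by positivity : 0 ≤ c ^ 2 + 2 * c)
    have hd2 := Real.sq_sqrt hc.le
    have hda : √c ≤ √(2 * c) := Real.sqrt_le_sqrt (by linarith)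
    rw [Real.norm_of_nonneg (by
      rw [sub_nonneg]; exact one_div_le_one_div_of_le ha hab), div_sub_div _ _ ha.ne' hb.ne',
      div_le_iff₀ (by positivity)]
    generalize √(2 * c) = a at *
    generalize √(c ^ 2 + 2 * c) = b at *
    generalize √c = d at *
    have h3 : b - a ≤ d ^ 3 := by
      have : (b - a) * (b + a) = d ^ 3 * d := by
        linear_combination hb2 - ha2 - (c + d ^ 2) * hd2
      nlinarith [pow_pos hd 3]
    have h4 : d * d ≤ a * b := mul_le_mul hda (hda.trans hab) hd.le ha.le
    nlinarith
  exact tendsto_nhds_unique h1 h2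

end

/-! ### Partial fractions and the Lambert-type integrals -/

section

open Filter Topology MeasureTheory Set
open Complex (I)

/-- The summand in the partial fraction expansion of `1/(e^{πv}-1)`. -/
noncomputable def pfTerm (v x : ℝ) : ℝ := 2 / Real.pi * (v / (v ^ 2 + 4 * x ^ 2))

/-- The primitive of `pfTerm v` vanishing at `0`. -/
noncomputable def pfPrim (v x : ℝ) : ℝ := 1 / Real.pi * Real.arctan (2 * x / v)

lemma hasDerivAt_pfPrim {v : ℝ} (hv : 0 < v) (x : ℝ) : HasDerivAt (pfPrim v) (pfTerm v x) x := by
  have h := ((((hasDerivAt_id x).const_mul 2).div_const v).arctan).const_mul (1 / Real.pi)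
  refine h.congr_deriv ?_
  have h1 : 0 < v ^ 2 + 4 * x ^ 2 := by positivity
  have h2 : 0 < 1 + (2 * x / v) ^ 2 := by positivity
  have := Real.pi_pos
  simp only [id, pfTerm]
  field_simp
  ring

lemma pfTerm_nonneg {v : ℝ} (hv : 0 < v) (x : ℝ) : 0 ≤ pfTerm v x := by
  have := Real.pi_pos
  rw [pfTerm]; positivity

lemma pfTerm_anti {v x y : ℝ} (hv : 0 < v) (hx : 0 ≤ x) (hxy : x ≤ y) : pfTerm v y ≤ pfTerm v x := by
  have := Real.pi_pos
  rw [pfTerm, pfTerm]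
  gcongr

lemma pfPrim_step {v : ℝ} (hv : 0 < v) (j : ℕ) :
    pfTerm v (j + 1) ≤ pfPrim v (j + 1) - pfPrim v j ∧ pfPrim v (j + 1) - pfPrim v j ≤ pfTerm v j := by
  obtain ⟨c, hc, h⟩ := exists_hasDerivAt_eq_slope (pfPrim v) (pfTerm v)
    (show (j : ℝ) < j + 1 by linarith)
    (fun x _ => (hasDerivAt_pfPrim hv x).continuousAt.continuousWithinAt)
    (fun x _ => hasDerivAt_pfPrim hv x)
  rw [add_sub_cancel_left, div_one] at h
  rw [← h]
  have hj : (0 : ℝ) ≤ j := j.cast_nonneg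
  exact ⟨pfTerm_anti hv (hj.trans hc.1.le) hc.2.le, pfTerm_anti hv hj hc.1.le⟩

/-- The sum-minus-integral approximations `G_J(v)`, converging to `1/(e^{πv}-1) - 1/(πv)`. -/
noncomputable def pfGap (J : ℕ) (v : ℝ) : ℝ := ∑ j ∈ Finset.range J, pfTerm v (j + 1) - pfPrim v J

lemma pfGap_bounds {v : ℝ} (hv : 0 < v) (J : ℕ) :
    pfTerm v J - pfTerm v 0 ≤ pfGap J v ∧ pfGap J v ≤ 0 := by
  induction J with
  | zero => simp [pfGap, pfPrim]
  | succ J ih =>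
    have h := pfPrim_step hv J
    have e : pfGap (J + 1) v = pfGap J v + pfTerm v (J + 1) - (pfPrim v (J + 1) - pfPrim v J) := by
      rw [pfGap, pfGap, Finset.sum_range_succ]; push_cast; ring
    rw [e]; push_cast
    constructor <;> linarith [h.1, h.2, ih.1, ih.2]

/-- A bound uniform in `J`, which makes `|δ(u)|/u` a dominating function. -/
lemma abs_pfGap_le {v : ℝ} (hv : 0 < v) (J : ℕ) : |pfGap J v| ≤ 2 / Real.pi * (1 / v) := by
  have h := pfGap_bounds hv J
  have h0 := pfTerm_nonneg hv J
  have e : pfTerm v 0 = 2 / Real.pi * (1 / v) := by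
    rw [pfTerm]; field_simp; ring
  rw [← e, abs_of_nonpos h.2]
  linarith [h.1]

/-- The Mittag-Leffler expansion of the cotangent, at an imaginary argument. -/
lemma tendsto_sum_pfTerm {v : ℝ} (hv : 0 < v) :
    Tendsto (fun J : ℕ => ∑ j ∈ Finset.range J, pfTerm v (j + 1)) atTop
      (𝓝 (1 / (Real.exp (Real.pi * v) - 1) - 1 / (Real.pi * v) + 1 / 2)) := by
  have hv' : (v : ℂ) ≠ 0 := by exact_mod_cast hv.ne'
  have hpi := Real.pi_pos
  have hpi' : (Real.pi : ℂ) ≠ 0 := by exact_mod_cast hpi.ne'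
  set x : ℂ := I * v / 2 with hx
  have him : x.im = v / 2 := by
    have : x = ((v / 2 : ℝ) : ℂ) * I := by rw [hx]; push_cast; ring
    rw [this, Complex.im_ofReal_mul]; simp
  have hmem : x ∈ Complex.integerComplement := by
    rw [Complex.mem_integerComplement_iff]
    rintro ⟨n, hn⟩
    have := congrArg Complex.im hn
    rw [him] at this
    simp at this
    linarith
  have h := tendsto_logDeriv_euler_cot_sub hmem
  have h2 := h.const_mul (I / (2 * Real.pi))
  have hE : 0 < Real.exp (Real.pi * v) - 1 := by
    have := Real.add_one_lt_exp (by positivity : Real.pi * v ≠ 0)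
    have h3 : 0 < Real.pi * v := by positivity
    linarith
  have hval : I / (2 * Real.pi) * (Real.pi * Complex.cot (Real.pi * x) - 1 / x)
      = ((1 / (Real.exp (Real.pi * v) - 1) - 1 / (Real.pi * v) + 1 / 2 : ℝ) : ℂ) := by
    have hE' : Complex.exp (Real.pi * v) - 1 ≠ 0 := by
      have : ((Real.exp (Real.pi * v) - 1 : ℝ) : ℂ) ≠ 0 := by exact_mod_cast hE.ne'
      push_cast at this
      exact this
    have e : Complex.exp (2 * Real.pi * I * x) = (Complex.exp (Real.pi * v))⁻¹ := by
      rw [← Complex.exp_neg]; congr 1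
      rw [hx]; linear_combination (Real.pi * v : ℂ) * Complex.I_sq
    rw [Complex.cot_pi_eq_exp_ratio, e, hx]
    push_cast
    have h0 := Complex.exp_ne_zero (Real.pi * v)
    generalize Complex.exp (Real.pi * v) = E at *
    have h1 : 1 - E⁻¹ = (E - 1) / E := by field_simp
    rw [h1]
    field_simp
    ring
  rw [hval] at h2
  have hterm : ∀ J : ℕ, I / (2 * Real.pi) * ∑ j ∈ Finset.range J, cotTerm x j
      = ((∑ j ∈ Finset.range J, pfTerm v (j + 1) : ℝ) : ℂ) := fun J => by
    rw [Finset.mul_sum]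
    push_cast
    refine Finset.sum_congr rfl fun j _ => ?_
    have hd : x ^ 2 - ((j : ℂ) + 1) ^ 2 = -((v ^ 2 + 4 * ((j : ℝ) + 1) ^ 2 : ℝ) : ℂ) / 4 := by
      rw [hx]; push_cast; linear_combination (v ^ 2 / 4 : ℂ) * Complex.I_sq
    have hpos : 0 < v ^ 2 + 4 * ((j : ℝ) + 1) ^ 2 := by positivity
    have hpos' : ((v ^ 2 + 4 * ((j : ℝ) + 1) ^ 2 : ℝ) : ℂ) ≠ 0 := by exact_mod_cast hpos.ne'
    have hd0 : x ^ 2 - ((j : ℂ) + 1) ^ 2 ≠ 0 := by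
      rw [hd, neg_div]; exact neg_ne_zero.2 (div_ne_zero hpos' (by norm_num : (4:ℂ) ≠ 0))
    have hcot : cotTerm x j = 2 * x / (x ^ 2 - ((j : ℂ) + 1) ^ 2) := by
      have hf : x ^ 2 - ((j : ℂ) + 1) ^ 2 = (x - (j + 1)) * (x + (j + 1)) := by ring
      rw [hf] at hd0 ⊢
      have n1 := left_ne_zero_of_mul hd0
      have n2 := right_ne_zero_of_mul hd0
      rw [cotTerm]
      field_simp
      ring
    rw [hcot, hd, pfTerm, hx]
    push_cast at hpos' ⊢
    field_simp
    linear_combination (-4 : ℂ) * Complex.I_sq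
  simp only [hterm] at h2
  exact_mod_cast (Complex.continuous_re.tendsto _).comp h2

lemma tendsto_pfGap {v : ℝ} (hv : 0 < v) : Tendsto (fun J : ℕ => pfGap J v) atTop
    (𝓝 (1 / (Real.exp (Real.pi * v) - 1) - 1 / (Real.pi * v))) := by
  have h1 : Tendsto (fun J : ℕ => pfPrim v J) atTop (𝓝 (1 / Real.pi * (Real.pi / 2))) := by
    refine Tendsto.const_mul _ ?_
    refine (Real.tendsto_arctan_atTop.mono_right nhdsWithin_le_nhds).comp ?_
    exact (tendsto_natCast_atTop_atTop.const_mul_atTop two_pos).atTop_div_const hv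
  have h2 := (tendsto_sum_pfTerm hv).sub h1
  have hpi := Real.pi_pos
  have e : 1 / (Real.exp (Real.pi * v) - 1) - 1 / (Real.pi * v) + 1 / 2 - 1 / Real.pi * (Real.pi / 2)
      = 1 / (Real.exp (Real.pi * v) - 1) - 1 / (Real.pi * v) := by
    have : 1 / Real.pi * (Real.pi / 2) = 1 / 2 := by field_simp
    rw [this]; ring
  rwa [e] at h2

/-- The closed form of `∫ (2/π) mu/((mu)²+4x²) δ(u) du`; see `integral_pfTerm_del`. -/
noncomputable def momH (m x : ℝ) : ℝ := 1 / 2 * (1 / √m * (1 / √x) - 1 / (√x * √(x + m)))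

lemma pfTerm_mul_eq {m : ℝ} (hm : 0 < m) (u x : ℝ) :
    pfTerm (m * u) x = 2 / (Real.pi * m) * (u / (u ^ 2 + (2 * x / m) ^ 2)) := by
  have hpi := Real.pi_pos
  rw [pfTerm]
  have e : u ^ 2 + (2 * x / m) ^ 2 = ((m * u) ^ 2 + 4 * x ^ 2) / m ^ 2 := by field_simp; ring
  rw [e]
  rcases eq_or_ne ((m * u) ^ 2 + 4 * x ^ 2) 0 with h | h
  · simp [h]
  · field_simp

lemma integral_pfTerm_del {m x : ℝ} (hm : 0 < m) (hx : 0 < x) :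
    ∫ u in Ioi (0 : ℝ), pfTerm (m * u) x * del u = momH m x := by
  have hpi := Real.pi_pos
  simp only [pfTerm_mul_eq hm, mul_assoc]
  rw [integral_const_mul, integral_kernel_del (by positivity : 0 < 2 * x / m)]
  have hsm := Real.sqrt_pos.2 hm
  have hsx := Real.sqrt_pos.2 hx
  have hsxm := Real.sqrt_pos.2 (by positivity : 0 < x + m)
  have hm2 := Real.sq_sqrt hm.le
  have e1 : √(2 * (2 * x / m)) = 2 * √x / √m := by
    rw [Real.sqrt_eq_iff_mul_self_eq (by positivity) (by positivity)]
    have : 2 * √x / √m * (2 * √x / √m) = 4 * √x ^ 2 / √m ^ 2 := by ring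
    rw [this, hm2, Real.sq_sqrt hx.le]; ring
  have e2 : √((2 * x / m) ^ 2 + 2 * (2 * x / m)) = 2 * (√x * √(x + m)) / m := by
    rw [Real.sqrt_eq_iff_mul_self_eq (by positivity) (by positivity)]
    have : 2 * (√x * √(x + m)) / m * (2 * (√x * √(x + m)) / m) = 4 * √x ^ 2 * √(x + m) ^ 2 / m ^ 2 := by
      ring
    rw [this, Real.sq_sqrt (by positivity : 0 ≤ x + m), Real.sq_sqrt hx.le]; field_simp; ring
  rw [e1, e2, momH]
  clear e1 e2
  generalize √(x + m) = r at *
  generalize √m = s at *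
  subst hm2
  field_simp

lemma abs_pfTerm_del_le {m u : ℝ} (hm : 0 < m) (hu : 0 < u) (x : ℝ) :
    |pfTerm (m * u) x * del u| ≤ 2 / (Real.pi * m) * |del u / u| := by
  have hpi := Real.pi_pos
  rw [pfTerm_mul_eq hm, mul_assoc, abs_mul, abs_of_pos (by positivity : 0 < 2 / (Real.pi * m))]
  exact mul_le_mul_of_nonneg_left (kernel_le hu) (by positivity)

lemma del_aesm : AEStronglyMeasurable del (volume.restrict (Ioi 0)) :=
  del_continuousOn.aestronglyMeasurable measurableSet_Ioi

/-- Integration of `integral_pfTerm_del` in `x` over `[0, X]`. -/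
lemma integral_pfPrim_del {m X : ℝ} (hm : 0 < m) (hX : 0 ≤ X) :
    IntegrableOn (fun u => pfPrim (m * u) X * del u) (Ioi 0) ∧
    ∫ u in Ioi (0 : ℝ), pfPrim (m * u) X * del u = 1 / 2 * (1 / √m * (2 * √X) - primInvSqrt m X) := by
  set μ : Measure ℝ := volume.restrict (Ioi 0) with hμ
  set ν : Measure ℝ := volume.restrict (Ioc 0 X) with hν
  have : IsFiniteMeasure ν := ⟨by simp [hν]⟩
  let f : ℝ × ℝ → ℝ := fun p => pfTerm (m * p.1) p.2 * del p.1
  have hmeas : AEStronglyMeasurable f (μ.prod ν) := by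
    refine AEStronglyMeasurable.mul (Measurable.aestronglyMeasurable ?_) del_aesm.comp_fst
    simp only [pfTerm]
    fun_prop
  have hint : Integrable f (μ.prod ν) := by
    have hb : Integrable (fun p : ℝ × ℝ => (2 / (Real.pi * m) * |del p.1 / p.1|) * (1 : ℝ)) (μ.prod ν) :=
      Integrable.mul_prod (f := fun u => 2 / (Real.pi * m) * |del u / u|) (g := fun _ => (1 : ℝ))
        (integrable_del_div.norm.const_mul _) (integrable_const 1)
    refine hb.mono' hmeas ?_
    have hae : ∀ᵐ p ∂(μ.prod ν), p.1 ∈ Ioi (0 : ℝ) :=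
      Measure.quasiMeasurePreserving_fst.ae (ae_restrict_mem measurableSet_Ioi)
    filter_upwards [hae] with p hp
    rw [mul_one]
    exact abs_pfTerm_del_le hm hp _
  have hin : ∀ u, 0 < u → ∫ x, f (u, x) ∂ν = pfPrim (m * u) X * del u := fun u hu => by
    have hmu : 0 < m * u := by positivity
    simp only [f]
    rw [integral_mul_const, hν, ← intervalIntegral.integral_of_le hX,
      intervalIntegral.integral_eq_sub_of_hasDerivAt (fun x _ => hasDerivAt_pfPrim hmu x)]
    · simp [pfPrim]
    · refine Continuous.intervalIntegrable ?_ _ _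
      change Continuous fun x => 2 / Real.pi * ((m * u) / ((m * u) ^ 2 + 4 * x ^ 2))
      refine continuous_const.mul (continuous_const.div (by fun_prop) fun x => ?_)
      positivity
  have hout : ∀ x ∈ Ioc 0 X, ∫ u, f (u, x) ∂μ = momH m x := fun x hx => integral_pfTerm_del hm hx.1
  have hsw := integral_integral_swap (f := fun u x => f (u, x)) hint
  have e1 : ∫ u, ∫ x, f (u, x) ∂ν ∂μ = ∫ u in Ioi (0 : ℝ), pfPrim (m * u) X * del u :=
    setIntegral_congr_fun measurableSet_Ioi fun u hu => hin u hu
  have e2 : ∫ x, ∫ u, f (u, x) ∂μ ∂ν = ∫ x in Ioc 0 X, momH m x :=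
    setIntegral_congr_fun measurableSet_Ioc hout
  have hHint : IntegrableOn (momH m) (Ioc 0 X) :=
    hint.integral_prod_right.congr (by
      filter_upwards [ae_restrict_mem measurableSet_Ioc] with x hx using hout x hx)
  refine ⟨hint.integral_prod_left.congr (by
      filter_upwards [ae_restrict_mem measurableSet_Ioi] with u hu using hin u hu), ?_⟩
  rw [← e1, hsw, e2, ← intervalIntegral.integral_of_le hX]
  let F : ℝ → ℝ := fun x => 1 / 2 * (1 / √m * (2 * √x) - primInvSqrt m x)
  have hF : ContinuousOn F (Icc 0 X) := by
    refine continuousOn_const.mul (ContinuousOn.sub (by fun_prop) ?_)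
    refine ContinuousOn.sub (continuousOn_const.mul (ContinuousOn.log (by fun_prop) fun x hx => ?_))
      continuousOn_const
    have h1 := Real.sqrt_nonneg x
    have h2 : 0 < √(x + m) := Real.sqrt_pos.2 (by linarith [hx.1])
    positivity
  have hFd : ∀ x ∈ Ioo 0 X, HasDerivAt F (momH m x) x := fun x hx => by
    have h1 := ((hasDerivAt_id x).sqrt hx.1.ne').const_mul 2
    refine (((h1.const_mul (1 / √m)).sub (hasDerivAt_primInvSqrt m hm.le x hx.1)).const_mul (1 / 2)).congr_deriv ?_
    have hsx := Real.sqrt_pos.2 hx.1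
    simp only [momH, id]
    field_simp
  rw [intervalIntegral.integral_eq_sub_of_hasDerivAt_of_le hX hF hFd
    ((intervalIntegrable_iff_integrableOn_Ioc_of_le hX).2 hHint)]
  have h0 : F 0 = 0 := by
    simp only [F, primInvSqrt]
    rw [Real.sqrt_zero, zero_add, zero_add, Real.log_sqrt hm.le]; ring
  rw [h0, sub_zero]

lemma integrable_pfTerm_del {m : ℝ} (hm : 0 < m) (x : ℝ) :
    IntegrableOn (fun u => pfTerm (m * u) x * del u) (Ioi 0) := by
  refine (integrable_del_div.norm.const_mul (2 / (Real.pi * m))).mono' ?_ ?_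
  · refine AEStronglyMeasurable.mul (Measurable.aestronglyMeasurable ?_) del_aesm
    simp only [pfTerm]
    fun_prop
  · filter_upwards [ae_restrict_mem measurableSet_Ioi] with u hu using abs_pfTerm_del_le hm hu x

lemma integral_pfGap_del {m : ℝ} (hm : 0 < m) (J : ℕ) :
    ∫ u in Ioi (0 : ℝ), pfGap J (m * u) * del u
      = 1 / 2 * (1 / √m * (sumInvSqrt J - 2 * √J)
        - (∑ l ∈ Finset.range J, 1 / (√((l : ℝ) + 1) * √((l : ℝ) + 1 + m)) - primInvSqrt m J)) := by
  have e : ∀ u, pfGap J (m * u) * del u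
      = ∑ j ∈ Finset.range J, pfTerm (m * u) (j + 1) * del u - pfPrim (m * u) J * del u := fun u => by
    rw [pfGap, sub_mul, Finset.sum_mul]
  simp only [e]
  have hP := integral_pfPrim_del hm (Nat.cast_nonneg J : (0 : ℝ) ≤ J)
  rw [integral_sub (integrable_finsetSum _ fun j _ => integrable_pfTerm_del hm _) hP.1, hP.2,
    integral_finsetSum _ fun j _ => integrable_pfTerm_del hm _]
  have : ∀ j ∈ Finset.range J, ∫ u in Ioi (0 : ℝ), pfTerm (m * u) (j + 1) * del u
      = 1 / 2 * (1 / √m * (1 / √((j : ℝ) + 1)) - 1 / (√((j : ℝ) + 1) * √((j : ℝ) + 1 + m))) :=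
    fun j _ => by rw [integral_pfTerm_del hm (by positivity), momH]
  rw [Finset.sum_congr rfl this, ← Finset.mul_sum, Finset.sum_sub_distrib, ← Finset.mul_sum, sumInvSqrt]
  ring

/-- The Lambert-type integral `∫ δ(u)/(e^{πmu}-1) du`. -/
noncomputable def lamb (m : ℝ) : ℝ := ∫ u in Ioi (0 : ℝ), 1 / (Real.exp (Real.pi * (m * u)) - 1) * del u

/-- Dominated convergence; the term `-1/(πmu)` of the limit of `pfGap J (mu)` contributes nothing,
because `∫ δ(u)/u du = 0`. -/
lemma tendsto_pfGap_integral {m : ℝ} (hm : 0 < m) :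
    Tendsto (fun J : ℕ => ∫ u in Ioi (0 : ℝ), pfGap J (m * u) * del u) atTop (𝓝 (lamb m)) := by
  have hpi := Real.pi_pos
  have hlim : Tendsto (fun J : ℕ => ∫ u in Ioi (0 : ℝ), pfGap J (m * u) * del u) atTop
      (𝓝 (∫ u in Ioi (0 : ℝ), (1 / (Real.exp (Real.pi * (m * u)) - 1) - 1 / (Real.pi * (m * u))) * del u)) := by
    refine tendsto_integral_of_dominated_convergence (fun u => 2 / (Real.pi * m) * |del u / u|)
      (fun J => ?_) (integrable_del_div.norm.const_mul _) (fun J => ?_) ?_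
    · refine AEStronglyMeasurable.mul (Measurable.aestronglyMeasurable ?_) del_aesm
      have hat := Real.continuous_arctan.measurable
      simp only [pfGap, pfTerm, pfPrim]
      fun_prop
    · filter_upwards [ae_restrict_mem measurableSet_Ioi] with u hu
      have hu : 0 < u := hu
      rw [norm_mul, Real.norm_eq_abs, Real.norm_eq_abs]
      calc _ ≤ 2 / Real.pi * (1 / (m * u)) * |del u| := by
            gcongr; exact abs_pfGap_le (by positivity) J
        _ = _ := by rw [abs_div, abs_of_pos hu]; field_simp
    · filter_upwards [ae_restrict_mem measurableSet_Ioi] with u hu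
      have hu : 0 < u := hu
      exact (tendsto_pfGap (by positivity : 0 < m * u)).mul_const _
  convert hlim using 2
  have hI : IntegrableOn (fun u => (1 / (Real.exp (Real.pi * (m * u)) - 1) - 1 / (Real.pi * (m * u))) * del u)
      (Ioi 0) := by
    refine (integrable_del_div.norm.const_mul (2 / (Real.pi * m))).mono' ?_ ?_
    · refine AEStronglyMeasurable.mul (Measurable.aestronglyMeasurable ?_) del_aesm
      fun_prop
    · filter_upwards [ae_restrict_mem measurableSet_Ioi] with u hu
      have hu : 0 < u := hu
      have hmu : 0 < m * u := by positivity
      rw [norm_mul, Real.norm_eq_abs, Real.norm_eq_abs]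
      have h1 := le_of_tendsto (tendsto_pfGap hmu).abs (Eventually.of_forall fun J => abs_pfGap_le hmu J)
      calc _ ≤ 2 / Real.pi * (1 / (m * u)) * |del u| := by gcongr
        _ = _ := by rw [norm_div, Real.norm_eq_abs, Real.norm_of_nonneg hu.le]; field_simp
  have h0 : ∫ u in Ioi (0 : ℝ), 1 / (Real.pi * m) * (del u / u) = 0 := by
    rw [integral_const_mul, integral_del_div, mul_zero]
  have hadd := integral_add hI (integrable_del_div.const_mul (1 / (Real.pi * m)))
  rw [h0, add_zero] at hadd
  rw [← hadd, lamb]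
  refine setIntegral_congr_fun measurableSet_Ioi fun u hu => ?_
  have hu : 0 < u := hu
  rw [sub_mul]
  have : 1 / (Real.pi * (m * u)) * del u = 1 / (Real.pi * m) * (del u / u) := by field_simp
  rw [this, sub_add_cancel]

/-- `(2/π) ∑_m ∫ δ(u)/(e^{πmu}-1) du = (γ - log 8π + ζ(1/2)²)/(2π)`. -/
lemma tendsto_sum_lamb {z : ℝ}
    (hz : Tendsto (fun N : ℕ => sumInvSqrt N - 2 * √(N : ℝ)) atTop (𝓝 z)) :
    Tendsto (fun n : ℕ => ∑ i ∈ Finset.range n, 2 / Real.pi * lamb ((i : ℝ) + 1)) atTop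
      (𝓝 (1 / (2 * Real.pi) * (Real.eulerMascheroniConstant - Real.log (8 * Real.pi) + z ^ 2))) := by
  have hpi := Real.pi_pos
  have h := tendsto_sum_const (C := fun i => 1 / √((i : ℝ) + 1) * z - 2 * lamb ((i : ℝ) + 1)) hz (fun i => by
    have hi : (0 : ℝ) < (i : ℝ) + 1 := by positivity
    have h1 := (hz.const_mul (1 / √((i : ℝ) + 1))).sub ((tendsto_pfGap_integral hi).const_mul 2)
    refine h1.congr fun J => ?_
    rw [integral_pfGap_del hi]; ring)
  have h2 := h.const_mul (-(1 / Real.pi))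
  have e : -(1 / Real.pi) * (-(1 / 2) * (Real.eulerMascheroniConstant - Real.log (8 * Real.pi) + z ^ 2))
      = 1 / (2 * Real.pi) * (Real.eulerMascheroniConstant - Real.log (8 * Real.pi) + z ^ 2) := by
    field_simp
  rw [e] at h2
  refine h2.congr fun n => ?_
  rw [Finset.sum_sub_distrib, ← Finset.sum_mul, ← Finset.mul_sum, ← Finset.mul_sum, sumInvSqrt]
  ring

end

/-! ### The divisor sum and the zeta values -/

section

open Filter Topology MeasureTheory Set
open Complex (I)

/-- The coefficient `(-1)^n Y₀(πn) + 1/(π√n)` in the form of a Laplace integral of `del`. -/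
noncomputable def aCoef (x : ℝ) : ℝ :=
  2 / Real.pi * ∫ u in Ioi (0 : ℝ), Real.exp (-(Real.pi * x * u)) * del u

lemma aCoef_eq {n : ℕ} (hn : 0 < n) :
    (-1) ^ n * (2 / Real.pi * Yser (Real.pi * n)) + 1 / (Real.pi * √n) = aCoef n := by
  have hx : 0 < Real.pi * n := by positivity
  have hn' : (0 : ℝ) < n := by exact_mod_cast hn
  have i0 : IntegrableOn (fun u : ℝ => Real.exp (-(Real.pi * n * u)) * kapZero u) (Ioi 0) := by
    refine ((integrableOn_exp_inv_sqrt hx).const_mul (1 / 2)).congr (Eventually.of_forall fun u => ?_)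
    simp only [kapZero]; ring
  have i1 : IntegrableOn (fun u : ℝ => Real.exp (-(Real.pi * n * u)) * kap u) (Ioi 0) := by
    refine (integrableOn_exp_inv_sqrt hx).mono' ?_ ?_
    · refine ContinuousOn.aestronglyMeasurable ?_ measurableSet_Ioi
      exact ContinuousOn.mul (by fun_prop) kap_continuousOn
    · filter_upwards [ae_restrict_mem measurableSet_Ioi] with u hu
      rw [norm_mul, Real.norm_of_nonneg (Real.exp_pos _).le]
      gcongr
      exact abs_kap_le hu
  have e0 : ∫ u in Ioi (0 : ℝ), Real.exp (-(Real.pi * n * u)) * kapZero u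
      = 1 / 2 * (1 / √n) := by
    have : ∀ u : ℝ, Real.exp (-(Real.pi * n * u)) * kapZero u
        = 1 / 2 * (Real.exp (-(Real.pi * n * u)) * (1 / √u)) := fun u => by
      simp only [kapZero]; ring
    simp only [this]
    rw [integral_const_mul, integral_exp_inv_sqrt hx, Real.sqrt_mul Real.pi_pos.le]
    have := Real.sqrt_pos.2 Real.pi_pos
    field_simp
  have e : ∫ u in Ioi (0 : ℝ), Real.exp (-(Real.pi * n * u)) * del u
      = 1 / 2 * (1 / √n) + (-1) ^ n * Yser (Real.pi * n) := by
    rw [Yser_pi_nat hn, ← e0, ← sub_eq_add_neg, ← integral_sub i0 i1]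
    simp only [del, mul_sub]
  rw [aCoef, e]
  have := Real.sqrt_pos.2 hn'
  have := Real.pi_pos
  field_simp
  ring

lemma integral_exp_sqrt {x : ℝ} (hx : 0 < x) :
    IntegrableOn (fun u : ℝ => Real.exp (-(Real.pi * x * u)) * √u) (Ioi 0) ∧
    ∫ u in Ioi (0 : ℝ), Real.exp (-(Real.pi * x * u)) * √u
      = (1 / Real.pi) ^ (3 / 2 : ℝ) * Real.Gamma (3 / 2) * (1 / x ^ (3 / 2 : ℝ)) := by
  have hx' : 0 < Real.pi * x := by positivity
  constructor
  · have h := integrableOn_rpow_mul_exp_neg_mul_rpow (p := 1) (s := 1 / 2) (b := Real.pi * x)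
      (by norm_num) one_pos hx'
    refine h.congr_fun (fun u hu => ?_) measurableSet_Ioi
    simp only [Real.rpow_one, Real.sqrt_eq_rpow, neg_mul]
    ring
  · have h := Real.integral_rpow_mul_exp_neg_mul_Ioi (a := 3 / 2) (r := Real.pi * x)
      (by norm_num) hx'
    have e : (1 / (Real.pi * x)) ^ (3 / 2 : ℝ) = (1 / Real.pi) ^ (3 / 2 : ℝ) * (1 / x ^ (3 / 2 : ℝ)) := by
      rw [← one_div_mul_one_div, Real.mul_rpow (by positivity) (by positivity),
        Real.div_rpow zero_le_one hx.le, Real.one_rpow]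
    rw [mul_right_comm, ← e, ← h]
    refine setIntegral_congr_fun measurableSet_Ioi fun u hu => ?_
    simp only [Real.sqrt_eq_rpow]
    norm_num [mul_comm]

/-- The constant in the bound `∫ e^{-πxu} |δ(u)| du ≤ aConst · x^{-3/2}`. -/
noncomputable def aConst : ℝ := (1 / Real.pi) ^ (3 / 2 : ℝ) * Real.Gamma (3 / 2)

lemma integrable_exp_del {x : ℝ} (hx : 0 < x) :
    IntegrableOn (fun u : ℝ => Real.exp (-(Real.pi * x * u)) * del u) (Ioi 0) := by
  refine (integral_exp_sqrt hx).1.mono' ?_ ?_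
  · refine ContinuousOn.aestronglyMeasurable ?_ measurableSet_Ioi
    exact ContinuousOn.mul (by fun_prop) del_continuousOn
  · filter_upwards [ae_restrict_mem measurableSet_Ioi] with u hu
    rw [norm_mul, Real.norm_of_nonneg (Real.exp_pos _).le]
    gcongr
    exact abs_del_le_sqrt hu

lemma integral_norm_exp_del_le {x : ℝ} (hx : 0 < x) :
    ∫ u in Ioi (0 : ℝ), ‖Real.exp (-(Real.pi * x * u)) * del u‖ ≤ aConst * (1 / x ^ (3 / 2 : ℝ)) := by
  rw [aConst, ← (integral_exp_sqrt hx).2]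
  refine setIntegral_mono_on (integrable_exp_del hx).norm (integral_exp_sqrt hx).1
    measurableSet_Ioi fun u hu => ?_
  rw [norm_mul, Real.norm_of_nonneg (Real.exp_pos _).le]
  gcongr
  exact abs_del_le_sqrt hu

lemma norm_aCoef_le {x : ℝ} (hx : 0 < x) :
    ‖aCoef x‖ ≤ 2 / Real.pi * aConst * (1 / x ^ (3 / 2 : ℝ)) := by
  rw [aCoef, norm_mul, Real.norm_of_nonneg (by positivity), mul_assoc]
  gcongr
  exact (norm_integral_le_integral_norm _).trans (integral_norm_exp_del_le hx)

lemma summable_threeHalves : Summable (fun n : ℕ+ => 1 / ((n : ℕ) : ℝ) ^ (3 / 2 : ℝ)) :=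
  (Real.summable_one_div_nat_rpow.2 (by norm_num : (1 : ℝ) < 3 / 2)).comp_injective
    PNat.coe_injective

/-- Summing the geometric series under the integral sign. -/
lemma hasSum_aCoef (m : ℕ+) :
    HasSum (fun k : ℕ+ => aCoef (((m : ℕ) : ℝ) * ((k : ℕ) : ℝ))) (2 / Real.pi * lamb ((m : ℕ) : ℝ)) := by
  have hm : (0 : ℝ) < (m : ℕ) := by exact_mod_cast m.pos
  have hk : ∀ k : ℕ+, (0 : ℝ) < (k : ℕ) := fun k => by exact_mod_cast k.pos
  have key := hasSum_integral_of_summable_integral_norm (μ := volume.restrict (Ioi (0 : ℝ)))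
    (F := fun (k : ℕ+) u => Real.exp (-(Real.pi * ((m : ℕ) * (k : ℕ)) * u)) * del u)
    (fun k => integrable_exp_del (mul_pos hm (hk k))) (by
      refine Summable.of_nonneg_of_le (fun k => integral_nonneg fun u => norm_nonneg _)
        (fun k => integral_norm_exp_del_le (mul_pos hm (hk k))) ?_
      refine ((summable_threeHalves.mul_left (1 / ((m : ℕ) : ℝ) ^ (3 / 2 : ℝ))).mul_left aConst).congr
        fun k => ?_
      rw [Real.mul_rpow hm.le (hk k).le]
      field_simp)
  have e : ∫ u in Ioi (0 : ℝ), ∑' k : ℕ+, Real.exp (-(Real.pi * ((m : ℕ) * (k : ℕ)) * u)) * del u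
      = lamb ((m : ℕ) : ℝ) := by
    rw [lamb]
    refine setIntegral_congr_fun measurableSet_Ioi fun u hu => ?_
    have hu : 0 < u := hu
    have hq : Real.exp (-(Real.pi * ((m : ℕ) * u))) < 1 := by
      rw [Real.exp_lt_one_iff, neg_lt_zero]; have := Real.pi_pos; positivity
    have hg : HasSum (fun k : ℕ+ => Real.exp (-(Real.pi * ((m : ℕ) * (k : ℕ)) * u)))
        (1 / (Real.exp (Real.pi * ((m : ℕ) * u)) - 1)) := by
      have h1 := (hasSum_geometric_of_lt_one (Real.exp_pos _).le hq).mul_left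
        (Real.exp (-(Real.pi * ((m : ℕ) * u))))
      rw [← Equiv.pnatEquivNat.symm.hasSum_iff]
      have h4 : Real.exp (-(Real.pi * ((m : ℕ) * u))) * (1 - Real.exp (-(Real.pi * ((m : ℕ) * u))))⁻¹
          = 1 / (Real.exp (Real.pi * ((m : ℕ) * u)) - 1) := by
        rw [Real.exp_neg] at hq ⊢
        have hE := Real.exp_pos (Real.pi * ((m : ℕ) * u))
        generalize Real.exp (Real.pi * ((m : ℕ) * u)) = E at *
        have : 1 < E := by
          rw [inv_lt_one₀ hE] at hq; exact hq
        have h2 : E - 1 ≠ 0 := by linarith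
        have h3 : 1 - E⁻¹ = (E - 1) / E := by field_simp
        rw [h3]; field_simp
      rw [h4] at h1
      refine h1.congr_fun fun k => ?_
      simp only [Function.comp, Equiv.pnatEquivNat_symm_apply, Nat.succPNat_coe]
      rw [← pow_succ', ← Real.exp_nat_mul]
      congr 1; push_cast; ring
    exact (hg.mul_right (del u)).tsum_eq
  rw [e] at key
  exact key.mul_left (2 / Real.pi)

lemma summable_prod_threeHalves :
    Summable (fun p : ℕ+ × ℕ+ => 1 / (((p.1 : ℕ) : ℝ) * ((p.2 : ℕ) : ℝ)) ^ (3 / 2 : ℝ)) := by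
  have h := Summable.mul_of_nonneg summable_threeHalves summable_threeHalves
    (fun n => by positivity) (fun n => by positivity)
  refine h.congr fun p => ?_
  rw [Real.mul_rpow (by positivity) (by positivity)]
  field_simp

lemma summable_prod_aCoef :
    Summable (fun p : ℕ+ × ℕ+ => aCoef (((p.1 : ℕ) : ℝ) * ((p.2 : ℕ) : ℝ))) := by
  refine Summable.of_norm_bounded (summable_prod_threeHalves.mul_left (2 / Real.pi * aConst))
    fun p => norm_aCoef_le ?_
  have h1 : (0 : ℝ) < (p.1 : ℕ) := by exact_mod_cast p.1.pos
  have h2 : (0 : ℝ) < (p.2 : ℕ) := by exact_mod_cast p.2.pos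
  positivity

/-- Grouping the pairs `(m, k)` according to their product. -/
lemma hasSum_divisors {f : ℝ → ℝ} {s : ℝ}
    (hf : HasSum (fun p : ℕ+ × ℕ+ => f (((p.1 : ℕ) : ℝ) * ((p.2 : ℕ) : ℝ))) s) :
    HasSum (fun n : ℕ+ => ((n : ℕ).divisors.card : ℝ) * f (n : ℕ)) s := by
  have h := sigmaAntidiagonalEquivProd.hasSum_iff.2 hf
  refine h.sigma fun n => ?_
  have h2 : ∀ c : (n : ℕ).divisorsAntidiagonal,
      ((fun p : ℕ+ × ℕ+ => f (((p.1 : ℕ) : ℝ) * ((p.2 : ℕ) : ℝ))) ∘ sigmaAntidiagonalEquivProd) ⟨n, c⟩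
        = f (n : ℕ) := fun c => by
    have := divisorsAntidiagonalFactors_eq c
    simp only [Function.comp]
    congr 1
    rw [← Nat.cast_mul]
    exact congrArg (Nat.cast : ℕ → ℝ) this
  simp only [h2]
  have h3 := hasSum_fintype (fun _ : (n : ℕ).divisorsAntidiagonal => f (n : ℕ))
  convert h3 using 1
  rw [Finset.sum_const, nsmul_eq_mul, Finset.card_univ, Fintype.card_coe,
    ← Nat.map_div_right_divisors, Finset.card_map]

lemma hasSum_divisors_aCoef :
    HasSum (fun n : ℕ+ => ((n : ℕ).divisors.card : ℝ) * aCoef (n : ℕ))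
      (1 / (2 * Real.pi) * (Real.eulerMascheroniConstant - Real.log (8 * Real.pi)
        + (riemannZeta (1 / 2)).re ^ 2)) := by
  have h := summable_prod_aCoef.hasSum
  have h1 := h.prod_fiberwise hasSum_aCoef
  rw [← Equiv.pnatEquivNat.symm.hasSum_iff] at h1
  have h2 := tendsto_nhds_unique (tendsto_sum_lamb tendsto_sumInvSqrt.1)
    (h1.tendsto_sum_nat.congr fun n => Finset.sum_congr rfl fun i _ => by simp)
  rw [h2]
  exact hasSum_divisors h

lemma hasSum_divisors_threeHalves :
    HasSum (fun n : ℕ+ => ((n : ℕ).divisors.card : ℝ) * (1 / ((n : ℕ) : ℝ) ^ (3 / 2 : ℝ)))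
      ((∑' n : ℕ+, 1 / ((n : ℕ) : ℝ) ^ (3 / 2 : ℝ)) ^ 2) := by
  refine hasSum_divisors (f := fun x => 1 / x ^ (3 / 2 : ℝ)) ?_
  have hs := Summable.mul_of_nonneg summable_threeHalves summable_threeHalves
    (fun n => by positivity) (fun n => by positivity)
  have h := HasSum.mul summable_threeHalves.hasSum summable_threeHalves.hasSum hs
  rw [sq]
  refine h.congr_fun fun p => ?_
  rw [Real.mul_rpow (by positivity) (by positivity)]
  field_simp

lemma zeta_threeHalves :
    riemannZeta (3 / 2) = ((∑' n : ℕ+, 1 / ((n : ℕ) : ℝ) ^ (3 / 2 : ℝ) : ℝ) : ℂ) := by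
  rw [zeta_eq_tsum_one_div_nat_add_one_cpow (by norm_num), ← Equiv.pnatEquivNat.symm.tsum_eq,
    Complex.ofReal_tsum]
  refine tsum_congr fun n => ?_
  rw [Complex.ofReal_div, Complex.ofReal_cpow (by positivity)]
  simp

/-- The functional equation at `s = 3/2`. -/
lemma zeta_neg_half : riemannZeta (-1 / 2) = -riemannZeta (3 / 2) / (4 * Real.pi) := by
  have h := riemannZeta_one_sub (s := 3 / 2)
    (fun n => by
      intro h
      have := congrArg Complex.re h
      norm_num at this
      have hn : (0 : ℝ) ≤ n := n.cast_nonneg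
      linarith) (by norm_num)
  rw [show (1 : ℂ) - 3 / 2 = -1 / 2 by norm_num] at h
  have hG : Complex.Gamma (3 / 2) = ((1 / 2 * √Real.pi : ℝ) : ℂ) := by
    have := Real.Gamma_add_one (s := 1 / 2) (by norm_num)
    rw [Real.Gamma_one_half_eq] at this
    rw [← this, ← Complex.Gamma_ofReal]
    norm_num
  have hp : ((2 : ℂ) * Real.pi) ^ (-(3 / 2) : ℂ)
      = ((1 / (2 * Real.pi) * (1 / (√2 * √Real.pi)) : ℝ) : ℂ) := by
    have h2 : (0 : ℝ) ≤ 2 * Real.pi := by positivity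
    rw [← Real.sqrt_mul (by norm_num), Real.sqrt_eq_rpow, one_div, one_div, ← Real.rpow_neg h2,
      ← Real.rpow_neg_one (2 * Real.pi), ← Real.rpow_add (by positivity), Complex.ofReal_cpow h2]
    push_cast
    norm_num
  have hc : Complex.cos (Real.pi * (3 / 2) / 2) = ((-(√2 / 2) : ℝ) : ℂ) := by
    rw [← Real.cos_pi_div_four, ← Real.cos_pi_sub, Complex.ofReal_cos]
    congr 1; push_cast; ring
  have hk : 2 * (1 / (2 * Real.pi) * (1 / (√2 * √Real.pi))) * (1 / 2 * √Real.pi) * (-(√2 / 2))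
      = -1 / (4 * Real.pi) := by
    have := Real.sqrt_pos.2 Real.pi_pos
    have := Real.pi_pos
    field_simp
    norm_num
  have hk' := congrArg (Complex.ofReal) hk
  rw [h, hG, hp, hc]
  push_cast at hk' ⊢
  rw [hk']
  ring

end

end DivisorBessel

theorem divisor_besselY_zero_series :
    ∃ Y0 : ℕ+ → ℂ,
      (∀ n : ℕ+, Filter.Tendsto (fun ν : ℂ =>
          (besselJ ν (Real.pi * (n : ℕ)) * Complex.cos ((Real.pi : ℂ) * ν)
            - besselJ (-ν) (Real.pi * (n : ℕ))) / Complex.sin ((Real.pi : ℂ) * ν))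
        (nhdsWithin 0 {ν : ℂ | ∀ m : ℤ, ν ≠ (m : ℂ)}) (nhds (Y0 n))) ∧
      Summable (fun n : ℕ+ => (((n : ℕ).divisors.card : ℂ)) *
        ((-1 : ℂ) ^ (n : ℕ) * Y0 n
          + ((1 / (Real.pi * Real.sqrt n) : ℝ) : ℂ)
          + ((1 / (8 * Real.pi ^ 2 * ((n : ℕ) : ℝ) ^ ((3 : ℝ) / 2)) : ℝ) : ℂ))) ∧
      ∑' n : ℕ+, (((n : ℕ).divisors.card : ℂ)) *
          ((-1 : ℂ) ^ (n : ℕ) * Y0 n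
            + ((1 / (Real.pi * Real.sqrt n) : ℝ) : ℂ)
            + ((1 / (8 * Real.pi ^ 2 * ((n : ℕ) : ℝ) ^ ((3 : ℝ) / 2)) : ℝ) : ℂ))
        = 1 / (2 * (Real.pi : ℂ)) *
            ((Real.eulerMascheroniConstant : ℂ) - ((Real.log (8 * Real.pi) : ℝ) : ℂ)
              + riemannZeta (1 / 2) ^ 2 - riemannZeta (-1 / 2) * riemannZeta (3 / 2)) := by
  have hpi := Real.pi_pos
  refine ⟨fun n => ((2 / Real.pi * DivisorBessel.Yser (Real.pi * (n : ℕ)) : ℝ) : ℂ),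
    fun n => ?_, ?_⟩
  · have hn : (0 : ℝ) < (n : ℕ) := by exact_mod_cast n.pos
    exact DivisorBessel.tendsto_besselY (by positivity)
  have h := (DivisorBessel.hasSum_divisors_aCoef.add
    (DivisorBessel.hasSum_divisors_threeHalves.mul_left (1 / (8 * Real.pi ^ 2))))
  have h' := Complex.hasSum_ofReal.2 h
  have key : HasSum (fun n : ℕ+ => (((n : ℕ).divisors.card : ℂ)) *
        ((-1 : ℂ) ^ (n : ℕ) * ((2 / Real.pi * DivisorBessel.Yser (Real.pi * (n : ℕ)) : ℝ) : ℂ)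
          + ((1 / (Real.pi * Real.sqrt n) : ℝ) : ℂ)
          + ((1 / (8 * Real.pi ^ 2 * ((n : ℕ) : ℝ) ^ ((3 : ℝ) / 2)) : ℝ) : ℂ)))
      (1 / (2 * (Real.pi : ℂ)) *
            ((Real.eulerMascheroniConstant : ℂ) - ((Real.log (8 * Real.pi) : ℝ) : ℂ)
              + riemannZeta (1 / 2) ^ 2 - riemannZeta (-1 / 2) * riemannZeta (3 / 2))) := by
    have hpi' : (Real.pi : ℂ) ≠ 0 := by exact_mod_cast hpi.ne'
    have e1 : (((1 / (2 * Real.pi) * (Real.eulerMascheroniConstant - Real.log (8 * Real.pi)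
        + (riemannZeta (1 / 2)).re ^ 2)
        + 1 / (8 * Real.pi ^ 2) * (∑' n : ℕ+, 1 / ((n : ℕ) : ℝ) ^ (3 / 2 : ℝ)) ^ 2 : ℝ)) : ℂ)
        = 1 / (2 * (Real.pi : ℂ)) *
            ((Real.eulerMascheroniConstant : ℂ) - ((Real.log (8 * Real.pi) : ℝ) : ℂ)
              + riemannZeta (1 / 2) ^ 2 - riemannZeta (-1 / 2) * riemannZeta (3 / 2)) := by
      rw [DivisorBessel.zeta_neg_half, DivisorBessel.zeta_threeHalves,
        DivisorBessel.tendsto_sumInvSqrt.2, Complex.ofReal_re]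
      generalize (∑' n : ℕ+, 1 / ((n : ℕ) : ℝ) ^ (3 / 2 : ℝ)) = S
      push_cast
      field_simp
      ring
    rw [← e1]
    refine h'.congr_fun fun n => ?_
    rw [← DivisorBessel.aCoef_eq n.pos]
    push_cast
    field_simp
  exact ⟨key.summable, key.tsum_eq⟩
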